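/- arXiv:2207.07009 — 2 statements merged into one kernel-verified Lean document; each statement's English description precedes it below -/
import Mathlib

section
/- Under the Frenet frame setup, assume NR is noncylindrical ((κ_ν(u),κ_t(u)) ≠ (0,0) for all u) and nondevelopable (κ_t does not vanish identically), and let q = (u₀,w₀) be a singular point of NR, i.e. κ_t(u₀) = 0 and w₀·κ_ν(u₀) = 1. Then: (1) NR has a cross cap at q iff κ_t'(u₀) ≠ 0; (2) NR has an S₁⁻ singularity at q iff κ_t'(u₀) = 0 and κ_t''(u₀)·(2κ_s(u₀)κ_ν'(u₀) + κ_t''(u₀)) < 0; (3) NR has an S₁⁺ singularity at q iff κ_t'(u₀) = 0, κ_ν'(u₀) ≠ 0 and κ_t''(u₀)·(2κ_s(u₀)κ_ν'(u₀) + κ_t''(u₀)) > 0. -/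
open Filter

noncomputable section

/-- Vectors in ℝ³, modeled as `Fin 3 → ℝ`. -/
abbrev R3 : Type := Fin 3 → ℝ

/-- The Euclidean inner product on ℝ³. -/
def dot3 (a b : R3) : ℝ := a 0 * b 0 + a 1 * b 1 + a 2 * b 2

/-- The determinant det(a,b,c) of three vectors of ℝ³. -/
def det3 (a b c : R3) : ℝ := Matrix.det (Matrix.of ![a, b, c])

/-- Partial derivative in the `u`-direction. -/
def pu {E : Type*} [NormedAddCommGroup E] [NormedSpace ℝ E] (F : ℝ × ℝ → E) (p : ℝ × ℝ) : E :=
  fderiv ℝ F p (1, 0)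

/-- Partial derivative in the `w`-direction. -/
def pw {E : Type*} [NormedAddCommGroup E] [NormedSpace ℝ E] (F : ℝ × ℝ → E) (p : ℝ × ℝ) : E :=
  fderiv ℝ F p (0, 1)

/-- The Frenet-type frame setup along the singular locus γ̂: `{γ̂', ĥ, ν̂}` is an
orthonormal frame satisfying the Frenet-type equations with singular curvature κ_s,
limiting normal curvature κ_ν and cuspidal torsion κ_t. -/
structure FrenetSetup (γ h ν : ℝ → R3) (κs κν κt : ℝ → ℝ) : Prop where
  smooth_γ : ContDiff ℝ (⊤ : ℕ∞) γ
  smooth_h : ContDiff ℝ (⊤ : ℕ∞) h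
  smooth_ν : ContDiff ℝ (⊤ : ℕ∞) ν
  smooth_κs : ContDiff ℝ (⊤ : ℕ∞) κs
  smooth_κν : ContDiff ℝ (⊤ : ℕ∞) κν
  smooth_κt : ContDiff ℝ (⊤ : ℕ∞) κt
  unit_t : ∀ u, dot3 (deriv γ u) (deriv γ u) = 1
  unit_h : ∀ u, dot3 (h u) (h u) = 1
  unit_ν : ∀ u, dot3 (ν u) (ν u) = 1
  orth_th : ∀ u, dot3 (deriv γ u) (h u) = 0
  orth_tν : ∀ u, dot3 (deriv γ u) (ν u) = 0
  orth_hν : ∀ u, dot3 (h u) (ν u) = 0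
  frenet_t : ∀ u, deriv (deriv γ) u = κs u • h u + κν u • ν u
  frenet_h : ∀ u, deriv h u = (-κs u) • deriv γ u + κt u • ν u
  frenet_ν : ∀ u, deriv ν u = (-κν u) • deriv γ u - κt u • h u

/-- The normal ruled surface NR(u,w) = γ̂(u) + w·ν̂(u). -/
def NR (γ ν : ℝ → R3) (p : ℝ × ℝ) : R3 := γ p.1 + p.2 • ν p.1

/-- A map `φ` is a local diffeomorphism at `p` if it is C^∞ at `p` and admits a
local C^∞ inverse near `p`. -/
def IsLocalDiffeoAt {E F : Type*} [NormedAddCommGroup E] [NormedSpace ℝ E]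
    [NormedAddCommGroup F] [NormedSpace ℝ F] (φ : E → F) (p : E) : Prop :=
  ContDiffAt ℝ (⊤ : ℕ∞) φ p ∧ ∃ ψ : F → E, ContDiffAt ℝ (⊤ : ℕ∞) ψ (φ p) ∧
    (∀ᶠ x in nhds p, ψ (φ x) = x) ∧ (∀ᶠ y in nhds (φ p), φ (ψ y) = y)

/-- 𝒜-equivalence of map germs: the germ of `f` at `p` is 𝒜-equivalent to the germ of
`g` at `q` if `f` is carried to `g` by composing with diffeomorphism germs of the
source and the target. -/
def AEquivAt (f : ℝ × ℝ → R3) (p : ℝ × ℝ) (g : ℝ × ℝ → R3) (q : ℝ × ℝ) : Prop :=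
  ∃ (φ : ℝ × ℝ → ℝ × ℝ) (Φ : R3 → R3),
    IsLocalDiffeoAt φ q ∧ φ q = p ∧ IsLocalDiffeoAt Φ (f p) ∧
    ∀ᶠ x in nhds q, Φ (f (φ x)) = g x

section PI
open MeasureTheory Topology ContDiff Function

lemma PI_int {Ω : Type} [MeasurableSpace Ω] (μ : Measure Ω) (a l : Ω → ℝ)
    (h : ∀ m : ℕ, Integrable (fun o => a o * l o ^ m) μ) (R : ℝ) (K : ℕ) :
    ∀ j : ℕ, Integrable (fun o => a o * l o ^ j * (1 + l o * R) ^ K) μ := by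
  induction K with
  | zero => intro j; simpa using h j
  | succ K ih =>
    intro j
    have h1 := (ih j).add ((ih (j+1)).mul_const R)
    refine h1.congr (Eventually.of_forall fun o => ?_)
    simp only [Pi.add_apply]; ring

lemma tg_fderiv {E G : Type} [NormedAddCommGroup E] [NormedSpace ℝ E]
    [NormedAddCommGroup G] [NormedSpace ℝ G] {k : E → G} (hk : HasTemperateGrowth k) :
    HasTemperateGrowth (fderiv ℝ k) := by
  refine ⟨hk.1.fderiv_right (by simp), fun n => ?_⟩
  obtain ⟨K, C, h⟩ := hk.2 (n+1)
  exact ⟨K, C, fun x => by rw [norm_iteratedFDeriv_fderiv]; exact h x⟩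

lemma PI_bound {E G : Type} [NormedAddCommGroup E] [NormedSpace ℝ E]
    [NormedAddCommGroup G] [NormedSpace ℝ G] {k : E → G} (hk : HasTemperateGrowth k) :
    ∃ (K : ℕ) (C : ℝ), 0 ≤ C ∧ ∀ x, ‖k x‖ ≤ C * (1 + ‖x‖) ^ K := by
  obtain ⟨K, C, h⟩ := hk.2 0
  simp only [norm_iteratedFDeriv_zero] at h
  refine ⟨K, |C|, abs_nonneg _, fun x => (h x).trans ?_⟩
  gcongr; exact le_abs_self C

/-- conjugation operator -/
def PIop {E E' G G' : Type} [NormedAddCommGroup E] [NormedSpace ℝ E] [NormedAddCommGroup E']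
    [NormedSpace ℝ E'] [NormedAddCommGroup G] [NormedSpace ℝ G] [NormedAddCommGroup G']
    [NormedSpace ℝ G'] (A : G →L[ℝ] G') (L : E →L[ℝ] E') : (E' →L[ℝ] G) →L[ℝ] (E →L[ℝ] G') :=
  (ContinuousLinearMap.compL ℝ E G G' A).comp ((ContinuousLinearMap.compL ℝ E E' G).flip L)

theorem PI_aux {Ω : Type} [TopologicalSpace Ω] [SecondCountableTopology Ω] [MeasurableSpace Ω]
    [BorelSpace Ω] (μ : Measure Ω) {E E' : Type} [NormedAddCommGroup E] [NormedSpace ℝ E]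
    [NormedAddCommGroup E'] [NormedSpace ℝ E']
    (L : Ω → E →L[ℝ] E') (hL : Continuous L) (n : ℕ) :
    ∀ {G G' : Type} [NormedAddCommGroup G] [NormedSpace ℝ G] [NormedAddCommGroup G']
    [NormedSpace ℝ G'] [CompleteSpace G'] (k : E' → G) (_ : HasTemperateGrowth k)
    (A : Ω → G →L[ℝ] G') (_ : Continuous A)
    (_ : ∀ m : ℕ, Integrable (fun o => ‖A o‖ * ‖L o‖ ^ m) μ),
    ContDiff ℝ n (fun x => ∫ o, A o (k (L o x)) ∂μ) := by
  have key : ∀ {G G' : Type} [NormedAddCommGroup G] [NormedSpace ℝ G] [NormedAddCommGroup G']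
    [NormedSpace ℝ G'] [CompleteSpace G'] (k : E' → G) (_ : HasTemperateGrowth k)
    (A : Ω → G →L[ℝ] G') (_ : Continuous A)
    (_ : ∀ m : ℕ, Integrable (fun o => ‖A o‖ * ‖L o‖ ^ m) μ) (x₀ : E),
    HasFDerivAt (fun x => ∫ o, A o (k (L o x)) ∂μ)
      (∫ o, PIop (A o) (L o) (fderiv ℝ k (L o x₀)) ∂μ) x₀ := by
    intro G G' _ _ _ _ _ k hk A hA hint x₀
    obtain ⟨K, C, hC, hb⟩ := PI_bound hk
    obtain ⟨K', C', hC', hb'⟩ := PI_bound (tg_fderiv hk)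
    have hkc : Continuous k := hk.1.continuous
    have hkc' : Continuous (fderiv ℝ k) := (tg_fderiv hk).1.continuous
    have hd : Differentiable ℝ k := hk.1.differentiable (by simp)
    refine hasFDerivAt_integral_of_dominated_of_fderiv_le
      (F := fun x o => A o (k (L o x)))
      (F' := fun x o => PIop (A o) (L o) (fderiv ℝ k (L o x)))
      (s := Metric.ball x₀ 1)
      (bound := fun o => C' * (‖A o‖ * ‖L o‖ ^ 1 * (1 + ‖L o‖ * (‖x₀‖ + 1)) ^ K'))
      (Metric.ball_mem_nhds _ one_pos) ?_ ?_ ?_ ?_ ?_ ?_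
    · refine Eventually.of_forall fun x => Continuous.aestronglyMeasurable ?_
      fun_prop
    · refine Integrable.mono' (g := fun o => C * (‖A o‖ * ‖L o‖ ^ 0 * (1 + ‖L o‖ * ‖x₀‖) ^ K)) 
        ((PI_int μ _ _ hint _ _ _).const_mul _) (Continuous.aestronglyMeasurable (by fun_prop)) ?_
      refine Eventually.of_forall fun o => ?_
      calc _ ≤ ‖A o‖ * ‖k (L o x₀)‖ := (A o).le_opNorm _
        _ ≤ ‖A o‖ * (C * (1 + ‖L o x₀‖) ^ K) := by gcongr; exact hb _
        _ ≤ ‖A o‖ * (C * (1 + ‖L o‖ * ‖x₀‖) ^ K) := by gcongr; exact (L o).le_opNorm _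
        _ = _ := by ring
    · haveI : SecondCountableTopologyEither Ω (E →L[ℝ] G') :=
        secondCountableTopologyEither_of_left _ _
      refine Continuous.aestronglyMeasurable ?_
      unfold PIop
      fun_prop
    · refine Eventually.of_forall fun o x hx => ?_
      have hxn : ‖x‖ ≤ ‖x₀‖ + 1 := by
        have := norm_sub_norm_le x x₀
        rw [Metric.mem_ball, dist_eq_norm] at hx
        linarith
      have e : PIop (A o) (L o) (fderiv ℝ k (L o x)) = (A o).comp ((fderiv ℝ k (L o x)).comp (L o)) := rfl
      simp only [e]
      calc _ ≤ ‖A o‖ * (‖fderiv ℝ k (L o x)‖ * ‖L o‖) := by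
            refine (ContinuousLinearMap.opNorm_comp_le _ _).trans ?_
            gcongr; exact ContinuousLinearMap.opNorm_comp_le _ _
        _ ≤ ‖A o‖ * (C' * (1 + ‖L o x‖) ^ K' * ‖L o‖) := by gcongr; exact hb' _
        _ ≤ ‖A o‖ * (C' * (1 + ‖L o‖ * (‖x₀‖ + 1)) ^ K' * ‖L o‖) := by
            gcongr
            exact ((L o).le_opNorm _).trans (by gcongr)
        _ = _ := by ring
    · exact (PI_int μ _ _ hint _ _ _).const_mul _
    · refine Eventually.of_forall fun o x hx => ?_
      have h1 : HasFDerivAt k (fderiv ℝ k (L o x)) (L o x) := (hd _).hasFDerivAt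
      exact (A o).hasFDerivAt.comp x (h1.comp x (L o).hasFDerivAt)
  induction n with
  | zero =>
    intro G G' _ _ _ _ _ k hk A hA hint
    refine contDiff_zero.2 ?_
    exact continuous_iff_continuousAt.2 fun x => (key k hk A hA hint x).continuousAt
  | succ n ih =>
    intro G G' _ _ _ _ _ k hk A hA hint
    have := fun x => key k hk A hA hint x
    push_cast
    refine contDiff_succ_iff_hasFDerivAt.2 ⟨_, ?_, this⟩
    refine ih (fderiv ℝ k) (tg_fderiv hk) (fun o => PIop (A o) (L o)) ?_ ?_
    · unfold PIop; fun_prop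
    · intro m
      refine Integrable.mono' (hint (m+1)) (Continuous.aestronglyMeasurable (by unfold PIop; fun_prop)) ?_
      refine Eventually.of_forall fun o => ?_
      rw [Real.norm_of_nonneg (by positivity)]
      have : ‖PIop (G := G) (A o) (L o)‖ ≤ ‖A o‖ * ‖L o‖ := by
        refine ContinuousLinearMap.opNorm_le_bound _ (by positivity) fun T => ?_
        change ‖(A o).comp (T.comp (L o))‖ ≤ _
        calc _ ≤ ‖A o‖ * (‖T‖ * ‖L o‖) := by
              refine (ContinuousLinearMap.opNorm_comp_le _ _).trans ?_
              gcongr; exact ContinuousLinearMap.opNorm_comp_le _ _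
          _ = _ := by ring
      calc _ ≤ ‖A o‖ * ‖L o‖ * ‖L o‖ ^ m := by gcongr
        _ = _ := by ring

theorem PI_main {Ω : Type} [TopologicalSpace Ω] [SecondCountableTopology Ω] [MeasurableSpace Ω]
    [BorelSpace Ω] (μ : Measure Ω) {E E' : Type} [NormedAddCommGroup E] [NormedSpace ℝ E]
    [NormedAddCommGroup E'] [NormedSpace ℝ E']
    (L : Ω → E →L[ℝ] E') (hL : Continuous L)
    {G G' : Type} [NormedAddCommGroup G] [NormedSpace ℝ G] [NormedAddCommGroup G']
    [NormedSpace ℝ G'] [CompleteSpace G'] (k : E' → G) (hk : HasTemperateGrowth k)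
    (A : Ω → G →L[ℝ] G') (hA : Continuous A)
    (hint : ∀ m : ℕ, Integrable (fun o => ‖A o‖ * ‖L o‖ ^ m) μ) :
    ContDiff ℝ (⊤ : ℕ∞) (fun x => ∫ o, A o (k (L o x)) ∂μ) :=
  contDiff_infty.2 fun n => PI_aux μ L hL n k hk A hA hint
end PI

section WC
open MeasureTheory Topology Function

def cosS (t : ℝ) : ℝ :=
  FormalMultilinearSeries.ofScalarsSum (𝕜 := ℝ) (fun n : ℕ => (-1 : ℝ) ^ n / ((2 * n).factorial : ℝ)) t

lemma cosS_sq (v : ℝ) : cosS (v ^ 2) = Real.cos v := by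
  unfold cosS
  rw [FormalMultilinearSeries.ofScalarsSum_eq_tsum, ← (Real.hasSum_cos v).tsum_eq]
  refine tsum_congr fun n => ?_
  rw [smul_eq_mul, ← pow_mul]; ring

lemma cosS_contDiff : ContDiff ℝ (⊤ : ℕ∞) cosS := by
  have hr : (FormalMultilinearSeries.ofScalars ℝ
      (fun n : ℕ => (-1 : ℝ) ^ n / ((2 * n).factorial : ℝ))).radius = ⊤ := by
    refine FormalMultilinearSeries.ofScalars_radius_eq_top_of_tendsto ℝ _ ?_ ?_
    · refine Eventually.of_forall fun n => ?_
      positivity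
    · have : Tendsto (fun n : ℕ => 1 / ((n : ℝ) + 1)) atTop (𝓝 0) :=
        tendsto_one_div_add_atTop_nhds_zero_nat
      refine squeeze_zero (fun n => by positivity) (fun n => ?_) this
      simp only [norm_div, norm_pow, norm_neg, norm_one, one_pow, RCLike.norm_natCast]
      have e : (2 * n.succ).factorial = (2 * n + 2) * ((2 * n + 1) * (2 * n).factorial) := by
        rw [show 2 * n.succ = 2 * n + 1 + 1 by omega, Nat.factorial_succ, Nat.factorial_succ]
      rw [e]; push_cast
      have h0 : (0 : ℝ) < (2 * n).factorial := by positivity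
      rw [div_div_eq_mul_div, div_one, div_mul_eq_mul_div, one_mul,
        div_le_div_iff₀ (by positivity) (by positivity)]
      have hn : (0 : ℝ) ≤ n := by positivity
      have : (n : ℝ) + 1 ≤ (2 * n + 2) * (2 * n + 1) := by nlinarith
      nlinarith
  have h := FormalMultilinearSeries.hasFPowerSeriesOnBall (FormalMultilinearSeries.ofScalars ℝ
      (fun n : ℕ => (-1 : ℝ) ^ n / ((2 * n).factorial : ℝ))) (by rw [hr]; simp)
  have h2 := h.analyticOnNhd
  rw [hr, Metric.eball_top_eq_univ] at h2
  exact h2.contDiff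

lemma cosS_iter (n : ℕ) : ∃ P Q : Polynomial ℝ, ∀ t : ℝ, 0 < t →
    iteratedDeriv n cosS t = P.eval ((√t)⁻¹) * Real.cos √t + Q.eval ((√t)⁻¹) * Real.sin √t := by
  induction n with
  | zero =>
    refine ⟨1, 0, fun t ht => ?_⟩
    have := cosS_sq (√t)
    rw [Real.sq_sqrt ht.le] at this
    simp [this]
  | succ n ih =>
    obtain ⟨P, Q, h⟩ := ih
    refine ⟨Polynomial.derivative P * (- Polynomial.C (1/2) * Polynomial.X ^ 3)
        + Q * (Polynomial.C (1/2) * Polynomial.X),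
      Polynomial.derivative Q * (- Polynomial.C (1/2) * Polynomial.X ^ 3)
        - P * (Polynomial.C (1/2) * Polynomial.X), fun t ht => ?_⟩
    rw [iteratedDeriv_succ]
    have he : iteratedDeriv n cosS =ᶠ[𝓝 t] fun t => P.eval ((√t)⁻¹) * Real.cos √t
        + Q.eval ((√t)⁻¹) * Real.sin √t := by
      filter_upwards [lt_mem_nhds ht] with s hs using h s hs
    rw [he.deriv_eq]
    have hs : HasDerivAt (fun t => √t) (1 / (2 * √t)) t := Real.hasDerivAt_sqrt ht.ne'
    have hpos : 0 < √t := Real.sqrt_pos.2 ht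
    have hi := hs.inv hpos.ne'
    have hP := (P.hasDerivAt ((√t)⁻¹)).comp t hi
    have hQ := (Q.hasDerivAt ((√t)⁻¹)).comp t hi
    have hc := (Real.hasDerivAt_cos (√t)).comp t hs
    have hsn := (Real.hasDerivAt_sin (√t)).comp t hs
    have := ((hP.mul hc).add (hQ.mul hsn)).deriv
    refine Eq.trans ?_ (this.trans ?_)
    · rfl
    · simp only [Polynomial.eval_add, Polynomial.eval_mul, Polynomial.eval_neg, Polynomial.eval_C,
        Polynomial.eval_pow, Polynomial.eval_X, Polynomial.eval_sub, comp_apply, Pi.inv_apply]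
      field_simp
      ring

def cosC (t : ℝ) : ℝ := Real.smoothTransition (t + 1) * cosS t

lemma cosC_sq (v : ℝ) : cosC (v ^ 2) = Real.cos v := by
  rw [cosC, cosS_sq, Real.smoothTransition.one_of_one_le (by nlinarith [sq_nonneg v]), one_mul]

lemma cosC_contDiff : ContDiff ℝ (⊤ : ℕ∞) cosC :=
  (Real.smoothTransition.contDiff.comp (contDiff_id.add contDiff_const)).mul cosS_contDiff

lemma bdd_tg {f : ℝ → ℝ} (hf : ContDiff ℝ (⊤ : ℕ∞) f)
    (h : ∀ n : ℕ, ∃ C, ∀ x, |iteratedDeriv n f x| ≤ C) : HasTemperateGrowth f := by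
  refine ⟨hf, fun n => ?_⟩
  obtain ⟨C, hC⟩ := h n
  refine ⟨0, C, fun x => ?_⟩
  rw [norm_iteratedFDeriv_eq_norm_iteratedDeriv]
  simpa using hC x

lemma cosC_tg : HasTemperateGrowth cosC := by
  refine bdd_tg cosC_contDiff fun n => ?_
  obtain ⟨P, Q, h⟩ := cosS_iter n
  have hcont : Continuous (iteratedDeriv n cosC) :=
    cosC_contDiff.continuous_iteratedDeriv n (by exact_mod_cast le_top)
  obtain ⟨C1, hC1⟩ := isCompact_Icc.exists_bound_of_continuousOn (s := Set.Icc (-1 : ℝ) 1)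
    hcont.continuousOn
  obtain ⟨C2, hC2⟩ := isCompact_Icc.exists_bound_of_continuousOn (s := Set.Icc (0 : ℝ) 1)
    P.continuous.continuousOn
  obtain ⟨C3, hC3⟩ := isCompact_Icc.exists_bound_of_continuousOn (s := Set.Icc (0 : ℝ) 1)
    Q.continuous.continuousOn
  refine ⟨max (max C1 0) (C2 + C3), fun x => ?_⟩
  by_cases h1 : x < -1
  · have : cosC =ᶠ[𝓝 x] fun _ => 0 := by
      filter_upwards [gt_mem_nhds h1] with y hy
      rw [cosC, Real.smoothTransition.zero_of_nonpos (by linarith), zero_mul]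
    rw [this.iteratedDeriv_eq]
    have : iteratedDeriv n (fun _ : ℝ => (0 : ℝ)) x = 0 := by
      rw [iteratedDeriv_const]; simp
    rw [this, abs_zero]
    exact le_max_of_le_left (le_max_right _ _)
  · by_cases h2 : x ≤ 1
    · exact le_max_of_le_left (le_max_of_le_left (hC1 x ⟨not_lt.1 h1, h2⟩))
    · push Not at h2
      have : cosC =ᶠ[𝓝 x] cosS := by
        filter_upwards [lt_mem_nhds h2] with y hy
        rw [cosC, Real.smoothTransition.one_of_one_le (by linarith), one_mul]
      rw [this.iteratedDeriv_eq, h x (by linarith)]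
      refine le_max_of_le_right ?_
      have hs : 1 ≤ √x := Real.one_le_sqrt.2 h2.le
      have hr : (√x)⁻¹ ∈ Set.Icc (0 : ℝ) 1 := ⟨by positivity, inv_le_one_of_one_le₀ hs⟩
      have e2 := hC2 _ hr
      have e3 := hC3 _ hr
      rw [Real.norm_eq_abs] at e2 e3
      refine (abs_add_le _ _).trans (add_le_add ?_ ?_)
      · rw [abs_mul]
        exact (mul_le_of_le_one_right (abs_nonneg _) (Real.abs_cos_le_one _)).trans e2
      · rw [abs_mul]
        exact (mul_le_of_le_one_right (abs_nonneg _) (Real.abs_sin_le_one _)).trans e3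

lemma cos_tg : HasTemperateGrowth Real.cos :=
  bdd_tg Real.contDiff_cos fun n => ⟨1, fun x => Real.abs_iteratedDeriv_cos_le_one n x⟩
lemma sin_tg : HasTemperateGrowth Real.sin :=
  bdd_tg Real.contDiff_sin fun n => ⟨1, fun x => Real.abs_iteratedDeriv_sin_le_one n x⟩

/-- the kernel -/
def kerW (x : ℝ × ℝ) : ℂ :=
  ((Real.cos x.1 : ℂ) + (Real.sin x.1 : ℂ) * Complex.I) * (cosC x.2 : ℂ)

lemma kerW_tg : HasTemperateGrowth kerW := by
  have h1 : HasTemperateGrowth (fun x : ℝ × ℝ => x.1) :=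
    (ContinuousLinearMap.fst ℝ ℝ ℝ).hasTemperateGrowth
  have h2 : HasTemperateGrowth (fun x : ℝ × ℝ => x.2) :=
    (ContinuousLinearMap.snd ℝ ℝ ℝ).hasTemperateGrowth
  have hc := Complex.hasTemperateGrowth_ofReal
  have a1 := hc.comp (cos_tg.comp h1)
  have a2 := hc.comp (sin_tg.comp h1)
  have a3 := hc.comp (cosC_tg.comp h2)
  exact (a1.add (a2.mul (HasTemperateGrowth.const Complex.I))).mul a3

end WC

section HW
open MeasureTheory Topology Function

lemma glob {E F : Type} [NormedAddCommGroup E] [NormedSpace ℝ E] [FiniteDimensional ℝ E]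
    [NormedAddCommGroup F] [NormedSpace ℝ F] (f : E → F) (p : E)
    (h : ∀ᶠ x in 𝓝 p, ContDiffAt ℝ (⊤ : ℕ∞) f x) :
    ∃ g : E → F, ContDiff ℝ (⊤ : ℕ∞) g ∧ HasCompactSupport g ∧ g =ᶠ[𝓝 p] f := by
  obtain ⟨ε, hε, hb⟩ := Metric.eventually_nhds_iff_ball.1 h
  let χ : ContDiffBump p := ⟨ε / 4, ε / 2, by positivity, by linarith⟩
  refine ⟨fun x => χ x • f x, ?_, ?_, ?_⟩
  · rw [contDiff_iff_contDiffAt]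
    intro x
    by_cases hx : x ∈ Metric.ball p ε
    · exact (χ.contDiff.contDiffAt).smul (hb x hx)
    · have : (fun x => χ x • f x) =ᶠ[𝓝 x] fun _ => 0 := by
        have h1 : x ∉ tsupport χ := by
          rw [χ.tsupport_eq]
          intro h2
          refine hx (Metric.closedBall_subset_ball ?_ h2)
          change ε / 2 < ε; linarith
        have h2 := notMem_tsupport_iff_eventuallyEq.1 h1
        filter_upwards [h2] with y hy
        rw [hy]; simp
      exact contDiffAt_const.congr_of_eventuallyEq this
  · exact χ.hasCompactSupport.smul_right
  · filter_upwards [χ.eventuallyEq_one] with y hy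
    rw [hy]; simp

lemma hadamard {f : ℝ × ℝ → ℝ} (hf : ContDiff ℝ (⊤ : ℕ∞) f) (hs : HasCompactSupport f) :
    ∃ M : ℝ × ℝ → ℝ, ContDiff ℝ (⊤ : ℕ∞) M ∧ ∀ z v, f (z, v) = f (z, 0) + v * M (z, v) := by
  have htg := tg_fderiv (hs.hasTemperateGrowth hf)
  let L : ℝ → (ℝ × ℝ) →L[ℝ] (ℝ × ℝ) := fun t =>
    (ContinuousLinearMap.inl ℝ ℝ ℝ).comp (ContinuousLinearMap.fst ℝ ℝ ℝ)
     + t • (ContinuousLinearMap.inr ℝ ℝ ℝ).comp (ContinuousLinearMap.snd ℝ ℝ ℝ)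
  have hLc : Continuous L := by fun_prop
  have hL : ∀ t z v, L t (z, v) = (z, t * v) := by
    intro t z v; simp [L]
  let A : ℝ → ((ℝ × ℝ) →L[ℝ] ℝ) →L[ℝ] ℝ := fun _ =>
    ContinuousLinearMap.apply ℝ ℝ ((0, 1) : ℝ × ℝ)
  have hA : Continuous A := continuous_const
  have hM := PI_main (volume.restrict (Set.Ioc (0:ℝ) 1)) L hLc (fderiv ℝ f) htg A hA (by
    intro m
    have : Continuous (fun o => ‖A o‖ * ‖L o‖ ^ m) := by
      have h2 := hLc.norm
      simp only [A]
      fun_prop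
    exact (this.continuousOn.integrableOn_Icc (a := 0) (b := 1)).mono_set Set.Ioc_subset_Icc_self)
  refine ⟨_, hM, fun z v => ?_⟩
  have hd : ∀ t ∈ Set.uIcc (0:ℝ) 1, HasDerivAt (fun t => f (z, t * v))
      (v * A t (fderiv ℝ f (L t (z, v)))) t := by
    intro t _
    have h1 : HasFDerivAt f (fderiv ℝ f (z, t * v)) (z, t * v) :=
      (hf.differentiable (by simp) _).hasFDerivAt
    have h2 : HasDerivAt (fun t : ℝ => (z, t * v)) ((0:ℝ), v) t :=
      (hasDerivAt_const t z).prodMk (by simpa using (hasDerivAt_id t).mul_const v)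
    have h3 := h1.comp_hasDerivAt t h2
    have e : v * A t (fderiv ℝ f (L t (z, v))) = fderiv ℝ f (z, t * v) (0, v) := by
      rw [hL]
      have : ((0 : ℝ), v) = v • ((0 : ℝ), (1 : ℝ)) := by simp
      rw [this, map_smul]; rfl
    rw [e]; exact h3
  have hc : Continuous (fun t => v * A t (fderiv ℝ f (L t (z, v)))) := by
    have := htg.1.continuous
    fun_prop
  have h4 := intervalIntegral.integral_eq_sub_of_hasDerivAt hd (hc.intervalIntegrable _ _)
  rw [intervalIntegral.integral_of_le zero_le_one, integral_const_mul] at h4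
  simp only [one_mul, zero_mul] at h4
  linarith

abbrev VV : Type := EuclideanSpace ℝ (Fin 2)

/-- Whitney even theorem. -/
lemma whitney {f : ℝ × ℝ → ℝ} (hf : ContDiff ℝ (⊤ : ℕ∞) f) (hs : HasCompactSupport f)
    (hev : ∀ z v, f (z, -v) = f (z, v)) :
    ∃ a : ℝ × ℝ → ℝ, ContDiff ℝ (⊤ : ℕ∞) a ∧ ∀ z v, f (z, v) = a (z, v ^ 2) := by
  let pr : VV ≃L[ℝ] ℝ × ℝ :=
    (EuclideanSpace.equiv (Fin 2) ℝ).trans (ContinuousLinearEquiv.finTwoArrow ℝ ℝ)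
  have hpr : ∀ x : VV, pr x = (x 0, x 1) := fun x => rfl
  let g : VV → ℂ := fun x => (f (pr x) : ℂ)
  have hg : ContDiff ℝ (⊤ : ℕ∞) g := Complex.ofRealCLM.contDiff.comp (hf.comp pr.contDiff)
  have hgs : HasCompactSupport g := by
    have h1 : HasCompactSupport (fun x : VV => f (pr x)) := hs.comp_homeomorph pr.toHomeomorph
    exact h1.comp_left (g := fun r : ℝ => (r : ℂ)) (by simp)
  let S : SchwartzMap VV ℂ := hgs.toSchwartzMap hg
  let Fh : SchwartzMap VV ℂ := FourierTransform.fourier S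
  have hinv : ∀ x : VV, g x = ∫ o : VV, Complex.exp (↑(2 * Real.pi * inner ℝ o x) * Complex.I) • Fh o := by
    intro x
    have h1 : FourierTransformInv.fourierInv Fh = S := FourierTransform.fourierInv_fourier_eq S
    have h2 : (FourierTransformInv.fourierInv Fh : SchwartzMap VV ℂ) x
        = FourierTransformInv.fourierInv (⇑Fh) x := by
      rw [SchwartzMap.fourierInv_coe]
    rw [h1, Real.fourierInv_eq'] at h2
    exact h2
  let L : VV → (ℝ × ℝ) →L[ℝ] (ℝ × ℝ) := fun o =>
    (2 * Real.pi * o 0) • (ContinuousLinearMap.inl ℝ ℝ ℝ).comp (ContinuousLinearMap.fst ℝ ℝ ℝ)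
     + ((2 * Real.pi * o 1) ^ 2) • (ContinuousLinearMap.inr ℝ ℝ ℝ).comp (ContinuousLinearMap.snd ℝ ℝ ℝ)
  have c0 : Continuous (fun o : VV => o 0) := (EuclideanSpace.proj (𝕜 := ℝ) (0 : Fin 2)).continuous
  have c1 : Continuous (fun o : VV => o 1) := (EuclideanSpace.proj (𝕜 := ℝ) (1 : Fin 2)).continuous
  have hLc : Continuous L := ((continuous_const.mul c0).smul continuous_const).add
    (((continuous_const.mul c1).pow 2).smul continuous_const)
  have hin : ∀ (o : VV) (z v : ℝ), inner ℝ o (!₂[z, v]) = z * o 0 + v * o 1 := by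
    intro o z v; simp [PiLp.inner_apply, Fin.sum_univ_two]
  have hL : ∀ o z v, L o (z, v) = (2 * Real.pi * o 0 * z, (2 * Real.pi * o 1) ^ 2 * v) := by
    intro t z v; simp [L]
  let A : VV → ℂ →L[ℝ] ℂ := fun o => ContinuousLinearMap.mul ℝ ℂ (Fh o)
  have hA : Continuous A := (ContinuousLinearMap.mul ℝ ℂ).continuous.comp Fh.continuous
  have hM := PI_main (volume : Measure VV) L hLc kerW kerW_tg A hA (by
    intro m
    have hb := PI_int (volume : Measure VV) (fun o => ‖Fh o‖) (fun o => ‖o‖) (fun m => by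
      refine (Fh.integrable_pow_mul volume m).congr (Eventually.of_forall fun o => ?_)
      exact mul_comm _ _) 1 (2 * m) 0
    refine Integrable.mono' (hb.const_mul (((2 * Real.pi) + (2 * Real.pi) ^ 2) ^ m))
      (hA.norm.mul (hLc.norm.pow m)).aestronglyMeasurable (Eventually.of_forall fun o => ?_)
    rw [Real.norm_of_nonneg (by positivity)]
    have hA1 : ‖A o‖ ≤ ‖Fh o‖ := ContinuousLinearMap.opNorm_mul_apply_le ℝ ℂ _
    have hn0 : |o 0| ≤ ‖o‖ := by simpa using EuclideanSpace.norm_eq o ▸ PiLp.norm_apply_le o 0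
    have hn1 : |o 1| ≤ ‖o‖ := by simpa using EuclideanSpace.norm_eq o ▸ PiLp.norm_apply_le o 1
    have hL1 : ‖L o‖ ≤ ((2 * Real.pi) + (2 * Real.pi) ^ 2) * (1 + ‖o‖ * 1) ^ 2 := by
      refine ContinuousLinearMap.opNorm_le_bound _ (by positivity) fun x => ?_
      obtain ⟨z, v⟩ := x
      rw [hL, Prod.norm_mk]
      have hz : |z| ≤ ‖(z, v)‖ := le_max_left _ _
      have hv : |v| ≤ ‖(z, v)‖ := le_max_right _ _
      have hpi := Real.pi_pos
      refine max_le ?_ ?_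
      · rw [Real.norm_eq_abs, abs_mul, abs_mul, abs_of_pos (by positivity : (0:ℝ) < 2 * Real.pi)]
        gcongr
        have : 2 * Real.pi ≤ 2 * Real.pi + (2 * Real.pi) ^ 2 := by nlinarith
        gcongr
        nlinarith [norm_nonneg o]
      · rw [Real.norm_eq_abs, abs_mul, mul_pow, abs_mul, abs_of_nonneg (by positivity : (0:ℝ) ≤ (2 * Real.pi)^2), abs_pow]
        gcongr
        · nlinarith
        · nlinarith [norm_nonneg o, abs_nonneg (o 1)]
    calc ‖A o‖ * ‖L o‖ ^ m ≤ ‖Fh o‖ * (((2 * Real.pi) + (2 * Real.pi) ^ 2) * (1 + ‖o‖ * 1) ^ 2) ^ m := by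
          gcongr
      _ = _ := by rw [mul_pow, ← pow_mul]; ring)
  refine ⟨_, Complex.reCLM.contDiff.comp hM, fun z v => ?_⟩
  have key : ((f (z, v) : ℝ) : ℂ) = ∫ o, A o (kerW (L o (z, v ^ 2))) := by
    have e1 := hinv (!₂[z, v])
    have e2 := hinv (!₂[z, -v])
    have i1 : ∀ v : ℝ, Integrable (fun o : VV => Complex.exp (↑(2 * Real.pi * inner ℝ o (!₂[z, v])) * Complex.I) • Fh o) := by
      intro v
      refine Fh.integrable.norm.mono' (Continuous.aestronglyMeasurable ?_) (Eventually.of_forall fun o => ?_)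
      · have := Fh.continuous
        fun_prop
      · rw [norm_smul, Complex.norm_exp_ofReal_mul_I, one_mul]
    have e3 : ((f (z, v) : ℝ) : ℂ) = (1 / 2 : ℂ) * (g (!₂[z, v]) + g (!₂[z, -v])) := by
      have a1 : g (!₂[z, v]) = f (z, v) := by simp [g, hpr]
      have a2 : g (!₂[z, -v]) = f (z, v) := by simp [g, hpr, hev]
      rw [a1, a2]; ring
    rw [e3, e1, e2, ← integral_add (i1 v) (i1 (-v)), ← integral_const_mul]
    refine integral_congr_ae (Eventually.of_forall fun o => ?_)
    simp only [A, ContinuousLinearMap.mul_apply', hL, kerW, smul_eq_mul]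
    rw [show (2 * Real.pi * o 1) ^ 2 * v ^ 2 = (2 * Real.pi * o 1 * v) ^ 2 by ring, cosC_sq]
    simp only [hin, Complex.ofReal_cos, Complex.ofReal_sin]
    rw [← Complex.exp_mul_I, Complex.cos]
    have s1 : ((2 * Real.pi * (z * o 0 + v * o 1) : ℝ) : ℂ) * Complex.I
       = ((2 * Real.pi * o 0 * z : ℝ) : ℂ) * Complex.I + ((2 * Real.pi * o 1 * v : ℝ) : ℂ) * Complex.I := by
      push_cast; ring
    have s2 : ((2 * Real.pi * (z * o 0 + (-v) * o 1) : ℝ) : ℂ) * Complex.I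
       = ((2 * Real.pi * o 0 * z : ℝ) : ℂ) * Complex.I + (-((2 * Real.pi * o 1 * v : ℝ) : ℂ)) * Complex.I := by
      push_cast; ring
    rw [s1, s2, Complex.exp_add, Complex.exp_add]
    ring
  have := congrArg Complex.re key
  simpa using this

end HW

section DF
open Topology Function

lemma ift {E : Type} [NormedAddCommGroup E] [NormedSpace ℝ E] [FiniteDimensional ℝ E]
    {f : E → E} (hf : ContDiff ℝ (⊤ : ℕ∞) f) {p : E} {f' : E →L[ℝ] E} (hf' : HasFDerivAt f f' p)
    (hinj : ∀ v, f' v = 0 → v = 0) :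
    ∃ g : E → E, ContDiff ℝ (⊤ : ℕ∞) g ∧ g (f p) = p ∧ (∀ᶠ x in 𝓝 p, g (f x) = x) ∧
      (∀ᶠ y in 𝓝 (f p), f (g y) = y) := by
  have hi : Injective f'.toLinearMap := (injective_iff_map_eq_zero _).2 hinj
  let e' : E ≃L[ℝ] E := (LinearEquiv.ofInjectiveEndo f'.toLinearMap hi).toContinuousLinearEquiv
  have he' : (e' : E →L[ℝ] E) = f' := by ext x; rfl
  have hfd : HasFDerivAt f (e' : E →L[ℝ] E) p := by rw [he']; exact hf'
  have hcd : ContDiffAt ℝ (⊤ : ℕ∞) f p := hf.contDiffAt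
  let e := hcd.toOpenPartialHomeomorph f hfd (by simp)
  have hps : p ∈ e.source := hcd.mem_toOpenPartialHomeomorph_source hfd (by simp)
  have hco : ⇑e = f := hcd.toOpenPartialHomeomorph_coe hfd (by simp)
  have hpt : f p ∈ e.target := by rw [← hco]; exact e.map_source hps
  have hsymm : e.symm (f p) = p := by rw [← hco]; exact e.left_inv hps
  have hl : ∀ᶠ x in 𝓝 p, e.symm (f x) = x := by
    filter_upwards [e.open_source.mem_nhds hps] with x hx
    rw [← hco]; exact e.left_inv hx
  have hr : ∀ᶠ y in 𝓝 (f p), f (e.symm y) = y := by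
    filter_upwards [e.open_target.mem_nhds hpt] with x hx
    rw [← hco]; exact e.right_inv hx
  have hcs : ContinuousAt e.symm (f p) := e.symm.continuousAt (by simpa using hpt)
  have hsm : ∀ᶠ y in 𝓝 (f p), ContDiffAt ℝ (⊤ : ℕ∞) e.symm y := by
    have h1 : ∀ᶠ x in 𝓝 p, fderiv ℝ f x ∈ Set.range ((↑) : (E ≃L[ℝ] E) → (E →L[ℝ] E)) := by
      have hc : ContinuousAt (fderiv ℝ f) p := (hf.continuous_fderiv (by simp)).continuousAt
      refine hc.eventually ?_
      rw [hfd.fderiv]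
      exact ContinuousLinearEquiv.nhds e'
    have h2 : ∀ᶠ y in 𝓝 (f p), fderiv ℝ f (e.symm y) ∈ Set.range ((↑) : (E ≃L[ℝ] E) → (E →L[ℝ] E)) := by
      rw [ContinuousAt, hsymm] at hcs
      exact hcs.eventually h1
    filter_upwards [h2, e.open_target.mem_nhds hpt] with y hy hyt
    obtain ⟨e'', he''⟩ := hy
    refine e.contDiffAt_symm (f₀' := e'') hyt ?_ ?_
    · rw [hco, he'']; exact (hf.differentiable (by simp) _).hasFDerivAt
    · rw [hco]; exact hf.contDiffAt
  obtain ⟨g, hg, -, hge⟩ := glob _ _ hsm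
  refine ⟨g, hg, ?_, ?_, ?_⟩
  · rw [hge.eq_of_nhds, hsymm]
  · have hc : Tendsto f (𝓝 p) (𝓝 (f p)) := hf.continuous.continuousAt
    filter_upwards [hl, hc.eventually hge] with x hx h2
    rw [h2, hx]
  · filter_upwards [hr, hge] with y hy h2
    rw [h2, hy]

lemma ld_mk {E : Type} [NormedAddCommGroup E] [NormedSpace ℝ E] [FiniteDimensional ℝ E]
    {f : E → E} (hf : ContDiff ℝ (⊤ : ℕ∞) f) {p : E} {f' : E →L[ℝ] E} (hf' : HasFDerivAt f f' p)
    (hinj : ∀ v, f' v = 0 → v = 0) : IsLocalDiffeoAt f p := by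
  obtain ⟨g, hg, -, h1, h2⟩ := ift hf hf' hinj
  exact ⟨hf.contDiffAt, g, hg.contDiffAt, h1, h2⟩

lemma ld_of_inv {E F : Type} [NormedAddCommGroup E] [NormedSpace ℝ E]
    [NormedAddCommGroup F] [NormedSpace ℝ F] {f : E → F} {g : F → E} (hf : ContDiff ℝ (⊤ : ℕ∞) f)
    (hg : ContDiff ℝ (⊤ : ℕ∞) g) (h1 : ∀ x, g (f x) = x) (h2 : ∀ x, f (g x) = x) (p : E) :
    IsLocalDiffeoAt f p :=
  ⟨hf.contDiffAt, g, hg.contDiffAt, Eventually.of_forall h1, Eventually.of_forall h2⟩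

lemma ld_id {E : Type} [NormedAddCommGroup E] [NormedSpace ℝ E] (p : E) :
    IsLocalDiffeoAt (fun x : E => x) p :=
  ld_of_inv (g := fun x => x) contDiff_id contDiff_id (fun _ => rfl) (fun _ => rfl) p

lemma ld_comp {E F G : Type} [NormedAddCommGroup E] [NormedSpace ℝ E]
    [NormedAddCommGroup F] [NormedSpace ℝ F] [NormedAddCommGroup G] [NormedSpace ℝ G]
    {f : E → F} {g : F → G} {p : E} (hf : IsLocalDiffeoAt f p) (hg : IsLocalDiffeoAt g (f p)) :
    IsLocalDiffeoAt (fun x => g (f x)) p := by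
  obtain ⟨hf1, f', hf2, hf3, hf4⟩ := hf
  obtain ⟨hg1, g', hg2, hg3, hg4⟩ := hg
  have e : g' (g (f p)) = f p := hg3.self_of_nhds
  have ht : Tendsto g' (𝓝 (g (f p))) (𝓝 (f p)) := by
    have := hg2.continuousAt; rw [ContinuousAt, e] at this; exact this
  refine ⟨hg1.comp p hf1, fun y => f' (g' y), ?_, ?_, ?_⟩
  · refine ContDiffAt.comp _ ?_ hg2
    rw [e]; exact hf2
  · filter_upwards [hf3, hf1.continuousAt.eventually hg3] with x h1 h2
    rw [h2, h1]
  · filter_upwards [hg4, ht.eventually hf4] with y h1 h2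
    rw [h2, h1]

lemma ld_symm {E F : Type} [NormedAddCommGroup E] [NormedSpace ℝ E]
    [NormedAddCommGroup F] [NormedSpace ℝ F]
    {f : E → F} {p : E} (hf : IsLocalDiffeoAt f p) :
    ∃ g : F → E, IsLocalDiffeoAt g (f p) ∧ g (f p) = p ∧ (∀ᶠ x in 𝓝 p, g (f x) = x) ∧
      (∀ᶠ y in 𝓝 (f p), f (g y) = y) := by
  obtain ⟨hf1, f', hf2, hf3, hf4⟩ := hf
  have e : f' (f p) = p := hf3.self_of_nhds
  refine ⟨f', ⟨hf2, f, by rw [e]; exact hf1, hf4, by rw [e]; exact hf3⟩, e, hf3, hf4⟩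

lemma ld_congr {E F : Type} [NormedAddCommGroup E] [NormedSpace ℝ E]
    [NormedAddCommGroup F] [NormedSpace ℝ F]
    {f g : E → F} {p : E} (hf : IsLocalDiffeoAt f p) (h : f =ᶠ[𝓝 p] g) : IsLocalDiffeoAt g p := by
  obtain ⟨hf1, f', hf2, hf3, hf4⟩ := hf
  have e : f' (f p) = p := hf3.self_of_nhds
  have ep := h.eq_of_nhds
  have ht : Tendsto f' (𝓝 (f p)) (𝓝 p) := by
    have := hf2.continuousAt; rw [ContinuousAt, e] at this; exact this
  refine ⟨hf1.congr_of_eventuallyEq h.symm, f', by rwa [← ep], ?_, ?_⟩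
  · filter_upwards [hf3, h] with x h1 h2
    rw [← h2, h1]
  · rw [← ep]
    filter_upwards [hf4, ht.eventually h] with y h1 h2
    rw [← h2, h1]

lemma ld_tendsto {E F : Type} [NormedAddCommGroup E] [NormedSpace ℝ E]
    [NormedAddCommGroup F] [NormedSpace ℝ F]
    {f : E → F} {p : E} (hf : IsLocalDiffeoAt f p) : Tendsto f (𝓝 p) (𝓝 (f p)) := hf.1.continuousAt

lemma aeq_symm {f g : ℝ × ℝ → R3} {p q : ℝ × ℝ} (hfc : ContinuousAt f p)
    (h : AEquivAt f p g q) : AEquivAt g q f p := by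
  obtain ⟨φ, Φ, h1, h2, h3, h4⟩ := h
  obtain ⟨φ', a1, a2, a3, a4⟩ := ld_symm h1
  obtain ⟨Φ', b1, b2, b3, b4⟩ := ld_symm h3
  have eq := h4.self_of_nhds
  rw [h2] at a1 a2 a4 eq
  refine ⟨φ', Φ', a1, a2, by rwa [← eq], ?_⟩
  have ht := ld_tendsto a1
  rw [a2] at ht
  filter_upwards [ht.eventually h4, a4, hfc.eventually b3] with x c1 c2 c3
  rw [← c1, c2, c3]

lemma aeq_trans {f g k : ℝ × ℝ → R3} {p q r : ℝ × ℝ}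
    (h : AEquivAt f p g q) (h' : AEquivAt g q k r) : AEquivAt f p k r := by
  obtain ⟨φ, Φ, h1, h2, h3, h4⟩ := h
  obtain ⟨φ', Φ', h1', h2', h3', h4'⟩ := h'
  have eq := h4.self_of_nhds
  rw [h2] at eq
  refine ⟨fun x => φ (φ' x), fun y => Φ' (Φ y), ld_comp h1' (by rwa [h2']), ?_, ld_comp h3 (by rwa [eq]), ?_⟩
  · show φ (φ' r) = p
    rw [h2', h2]
  · have ht := ld_tendsto h1'
    rw [h2'] at ht
    filter_upwards [ht.eventually h4, h4'] with x c1 c2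
    rw [c1, c2]

/-- constructing equivalence from a coordinate change `ψ` in the source. -/
lemma aeq_of {f g : ℝ × ℝ → R3} {p : ℝ × ℝ} {ψ : ℝ × ℝ → ℝ × ℝ} {Φ : R3 → R3}
    (hψ : IsLocalDiffeoAt ψ p) (hΦ : IsLocalDiffeoAt Φ (f p))
    (h : ∀ᶠ x in 𝓝 p, Φ (f x) = g (ψ x)) {q : ℝ × ℝ} (hq : ψ p = q) : AEquivAt f p g q := by
  subst hq
  obtain ⟨φ', a1, a2, a3, a4⟩ := ld_symm hψ
  refine ⟨φ', Φ, a1, a2, hΦ, ?_⟩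
  have ht := ld_tendsto a1
  rw [a2] at ht
  filter_upwards [ht.eventually h, a4] with x c1 c2
  rw [c1, c2]

end DF

section E1
set_option linter.unusedSectionVars false
open Topology Function Asymptotics

/-- order of vanishing at the origin. -/
def OO {V : Type} [NormedAddCommGroup V] (k : ℕ) (f : ℝ × ℝ → V) : Prop :=
  f =O[𝓝 (0 : ℝ × ℝ)] fun x => ‖x‖ ^ k

variable {V W : Type} [NormedAddCommGroup V] [NormedSpace ℝ V] [NormedAddCommGroup W] [NormedSpace ℝ W]

lemma OO.add {k : ℕ} {f g : ℝ × ℝ → V} (hf : OO k f) (hg : OO k g) : OO k fun x => f x + g x :=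
  IsBigO.add hf hg

lemma OO.sub {k : ℕ} {f g : ℝ × ℝ → V} (hf : OO k f) (hg : OO k g) : OO k fun x => f x - g x :=
  IsBigO.sub hf hg

lemma OO.neg {k : ℕ} {f : ℝ × ℝ → V} (hf : OO k f) : OO k fun x => - f x :=
  IsBigO.neg_left hf

lemma OO.mul {j k : ℕ} {f g : ℝ × ℝ → ℝ} (hf : OO j f) (hg : OO k g) :
    OO (j + k) fun x => f x * g x := by
  have := IsBigO.mul hf hg
  unfold OO
  simpa only [pow_add] using this

lemma OO.mul' {j k l : ℕ} {f g : ℝ × ℝ → ℝ} (hf : OO j f) (hg : OO k g) (h : j + k = l := by rfl) :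
    OO l fun x => f x * g x := by
  subst h; exact hf.mul hg

lemma OO.mono {j k : ℕ} {f : ℝ × ℝ → V} (hf : OO k f) (h : j ≤ k) : OO j f := by
  refine IsBigO.trans hf ?_
  refine IsBigO.of_bound 1 ?_
  have : ∀ᶠ x : ℝ × ℝ in 𝓝 0, ‖x‖ < 1 := by
    have : Tendsto (fun x : ℝ × ℝ => ‖x‖) (𝓝 0) (𝓝 0) := by
      simpa using (continuous_norm (E := ℝ × ℝ)).tendsto 0
    exact this.eventually (gt_mem_nhds one_pos)
  filter_upwards [this] with x hx
  simp only [norm_pow, norm_norm, one_mul]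
  exact pow_le_pow_of_le_one (norm_nonneg _) hx.le h

lemma OO.congr {k : ℕ} {f g : ℝ × ℝ → V} (hf : OO k f) (h : f =ᶠ[𝓝 0] g) : OO k g :=
  IsBigO.congr' hf h EventuallyEq.rfl

lemma OO.eqv {k : ℕ} {f g : ℝ × ℝ → V} (hf : OO k f) (h : ∀ x, f x = g x) : OO k g := by
  have : f = g := funext h
  rwa [← this]

lemma OO.of_cont {f : ℝ × ℝ → V} (hf : Continuous f) : OO 0 f := by
  unfold OO
  simp only [pow_zero]
  exact (hf.continuousAt (x := 0)).tendsto.isBigO_one ℝ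

lemma OO.const (c : V) : OO 0 fun _ : ℝ × ℝ => c := OO.of_cont continuous_const

lemma OO.fst : OO 1 fun x : ℝ × ℝ => x.1 := by
  refine IsBigO.of_bound 1 (Eventually.of_forall fun x => ?_)
  simpa using norm_fst_le x
lemma OO.snd : OO 1 fun x : ℝ × ℝ => x.2 := by
  refine IsBigO.of_bound 1 (Eventually.of_forall fun x => ?_)
  simpa using norm_snd_le x

lemma OO.comp {k : ℕ} {f : ℝ × ℝ → V} (hf : OO k f) {φ : ℝ × ℝ → ℝ × ℝ} (h0 : φ 0 = 0)
    (hφ : DifferentiableAt ℝ φ 0) : OO k fun x => f (φ x) := by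
  have h1 : Tendsto φ (𝓝 0) (𝓝 0) := by
    have := hφ.continuousAt; rw [ContinuousAt, h0] at this; exact this
  have h2 := hφ.hasFDerivAt.isBigO_sub
  simp only [h0, sub_zero] at h2
  have h3 := IsBigO.comp_tendsto hf h1
  exact h3.trans ((h2.norm_norm).pow k)

lemma OO.succ {k : ℕ} {f : ℝ × ℝ → V} (hd : Differentiable ℝ f) (h0 : f 0 = 0)
    (h : OO k (fderiv ℝ f)) : OO (k + 1) f := by
  obtain ⟨C, hC, hb⟩ := IsBigO.exists_pos h
  rw [IsBigOWith] at hb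
  obtain ⟨ε, hε, hball⟩ := Metric.eventually_nhds_iff_ball.1 hb
  refine IsBigO.of_bound C ?_
  filter_upwards [Metric.ball_mem_nhds (0 : ℝ × ℝ) hε] with x hx
  have key := (convex_closedBall (0 : ℝ × ℝ) ‖x‖).norm_image_sub_le_of_norm_fderiv_le (𝕜 := ℝ) (f := f)
    (C := C * ‖x‖ ^ k) (x := 0) (y := x) (fun y _ => hd y) (fun y hy => ?_) (by simp) (by simp)
  · rw [h0, sub_zero, sub_zero] at key
    simp only [norm_pow, norm_norm]
    calc ‖f x‖ ≤ C * ‖x‖ ^ k * ‖x‖ := key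
      _ = _ := by ring
  · have hy' : ‖y‖ ≤ ‖x‖ := by simpa using hy
    have hx' : ‖x‖ < ε := by simpa using hx
    have := hball y (by simpa using lt_of_le_of_lt hy' hx')
    simp only [norm_pow, norm_norm] at this
    refine this.trans ?_
    gcongr

lemma OO.one {f : ℝ × ℝ → V} (hf : ContDiff ℝ 1 f) (h0 : f 0 = 0) : OO 1 f :=
  OO.succ (hf.differentiable (by simp)) h0 (OO.of_cont (hf.continuous_fderiv (by simp)))

lemma OO.two {f : ℝ × ℝ → V} (hf : ContDiff ℝ 2 f) (h0 : f 0 = 0) (h1 : pu f 0 = 0) (h2 : pw f 0 = 0) :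
    OO 2 f := by
  refine OO.succ (hf.differentiable (by simp)) h0 (OO.one (hf.fderiv_right (m := 1) (by norm_num)) ?_)
  ext
  · simpa [pu] using h1
  · simpa [pw] using h2

lemma OO.pi {k : ℕ} {f : ℝ × ℝ → R3} (h : ∀ i, OO k fun x => f x i) : OO k f :=
  isBigO_pi.2 h
lemma OO.apply {k : ℕ} {f : ℝ × ℝ → R3} (h : OO k f) (i : Fin 3) : OO k fun x => f x i :=
  isBigO_pi.1 h i

lemma det3_eq (a b c : R3) : det3 a b c = a 0 * b 1 * c 2 - a 0 * b 2 * c 1 - a 1 * b 0 * c 2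
    + a 1 * b 2 * c 0 + a 2 * b 0 * c 1 - a 2 * b 1 * c 0 := by
  simp [det3, Matrix.det_fin_three]

lemma OO.det3 {i j k : ℕ} {f g h : ℝ × ℝ → R3} (hf : OO i f) (hg : OO j g) (hh : OO k h) :
    OO (i + j + k) fun x => det3 (f x) (g x) (h x) := by
  simp only [det3_eq]
  have H : ∀ a b c : Fin 3, OO (i + j + k) fun x => f x a * g x b * h x c := fun a b c =>
    ((hf.apply a).mul (hg.apply b)).mul (hh.apply c)
  exact (((((H 0 1 2).sub (H 0 2 1)).sub (H 1 0 2)).add (H 1 2 0)).add (H 2 0 1)).sub (H 2 1 0)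

lemma det3_map (T : R3 →L[ℝ] R3) (a b c : R3) :
    det3 (T a) (T b) (T c) = det3 (T (Pi.single 0 1)) (T (Pi.single 1 1)) (T (Pi.single 2 1)) * det3 a b c := by
  have h : ∀ v : R3, T v = v 0 • T (Pi.single 0 1) + v 1 • T (Pi.single 1 1) + v 2 • T (Pi.single 2 1) := by
    intro v
    conv_lhs => rw [pi_eq_sum_univ' v]
    simp only [Fin.sum_univ_three]
    rw [map_add, map_add, map_smul, map_smul, map_smul]
  rw [h a, h b, h c]
  simp only [det3_eq, Pi.add_apply, Pi.smul_apply, smul_eq_mul]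
  ring

lemma det3_inj (T : R3 →L[ℝ] R3) (S : R3 →L[ℝ] R3) (h : ∀ v, S (T v) = v) :
    det3 (T (Pi.single 0 1)) (T (Pi.single 1 1)) (T (Pi.single 2 1)) ≠ 0 := by
  intro h0
  have := det3_map S (T (Pi.single 0 1)) (T (Pi.single 1 1)) (T (Pi.single 2 1))
  rw [h0, mul_zero, h, h, h] at this
  simp [det3_eq] at this

/-! calculus of partial derivatives -/
lemma pu_add {f g : ℝ × ℝ → V} (hf : Differentiable ℝ f) (hg : Differentiable ℝ g) (x) :
    pu (fun x => f x + g x) x = pu f x + pu g x := by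
  unfold pu; rw [fderiv_fun_add (hf x) (hg x)]; rfl
lemma pw_add {f g : ℝ × ℝ → V} (hf : Differentiable ℝ f) (hg : Differentiable ℝ g) (x) :
    pw (fun x => f x + g x) x = pw f x + pw g x := by
  unfold pw; rw [fderiv_fun_add (hf x) (hg x)]; rfl
lemma pu_smul {f : ℝ × ℝ → ℝ} {g : ℝ × ℝ → V} (hf : Differentiable ℝ f) (hg : Differentiable ℝ g) (x) :
    pu (fun x => f x • g x) x = pu f x • g x + f x • pu g x := by
  unfold pu; rw [fderiv_fun_smul (hf x) (hg x)]; simp [add_comm]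
lemma pw_smul {f : ℝ × ℝ → ℝ} {g : ℝ × ℝ → V} (hf : Differentiable ℝ f) (hg : Differentiable ℝ g) (x) :
    pw (fun x => f x • g x) x = pw f x • g x + f x • pw g x := by
  unfold pw; rw [fderiv_fun_smul (hf x) (hg x)]; simp [add_comm]

lemma fd_pair (f : ℝ × ℝ → V) (x : ℝ × ℝ) (v : ℝ × ℝ) :
    fderiv ℝ f x v = v.1 • pu f x + v.2 • pw f x := by
  unfold pu pw
  rw [← map_smul, ← map_smul, ← map_add]
  simp

lemma pu_comp {f : ℝ × ℝ → V} {φ : ℝ × ℝ → ℝ × ℝ} (hf : Differentiable ℝ f) (hφ : Differentiable ℝ φ) (x) :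
    pu (fun x => f (φ x)) x = (pu φ x).1 • pu f (φ x) + (pu φ x).2 • pw f (φ x) := by
  have : fderiv ℝ (fun x => f (φ x)) x = (fderiv ℝ f (φ x)).comp (fderiv ℝ φ x) :=
    fderiv_comp x (hf _) (hφ _)
  rw [pu, this, ContinuousLinearMap.comp_apply, fd_pair]; rfl
lemma pw_comp {f : ℝ × ℝ → V} {φ : ℝ × ℝ → ℝ × ℝ} (hf : Differentiable ℝ f) (hφ : Differentiable ℝ φ) (x) :
    pw (fun x => f (φ x)) x = (pw φ x).1 • pu f (φ x) + (pw φ x).2 • pw f (φ x) := by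
  have : fderiv ℝ (fun x => f (φ x)) x = (fderiv ℝ f (φ x)).comp (fderiv ℝ φ x) :=
    fderiv_comp x (hf _) (hφ _)
  rw [pw, this, ContinuousLinearMap.comp_apply, fd_pair]; rfl

lemma pu_cd {n m : WithTop ℕ∞} {f : ℝ × ℝ → V} (hf : ContDiff ℝ n f) (h : m + 1 ≤ n) : ContDiff ℝ m (pu f) :=
  (hf.fderiv_right h).clm_apply contDiff_const
lemma pw_cd {n m : WithTop ℕ∞} {f : ℝ × ℝ → V} (hf : ContDiff ℝ n f) (h : m + 1 ≤ n) : ContDiff ℝ m (pw f) :=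
  (hf.fderiv_right h).clm_apply contDiff_const

lemma pu_pw {f : ℝ × ℝ → V} (hf : ContDiff ℝ 2 f) (x) : pu (pw f) x = pw (pu f) x := by
  have hs : IsSymmSndFDerivAt ℝ f x := hf.contDiffAt.isSymmSndFDerivAt (by simp)
  have hd : DifferentiableAt ℝ (fderiv ℝ f) x := (hf.fderiv_right (m := 1) (by norm_num)).differentiable (by simp) x
  have e : ∀ v w, fderiv ℝ (fun y => fderiv ℝ f y v) x w = fderiv ℝ (fderiv ℝ f) x w v := by
    intro v w
    rw [fderiv_clm_apply hd (differentiableAt_const _)]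
    simp
  unfold pu pw
  rw [e, e]
  exact hs.eq _ _

end E1

section E2
open Topology Function Asymptotics

def lam (F : ℝ × ℝ → R3) (x : ℝ × ℝ) : ℝ := det3 (pu F x) (pw F x) (pw (pw F) x)

def Quad (F : ℝ × ℝ → R3) (A B C : ℝ) : Prop :=
  OO 3 fun x => lam F x - (A * x.1 ^ 2 + B * (x.1 * x.2) + C * x.2 ^ 2)

def Crit (F : ℝ × ℝ → R3) : Prop := det3 (pu F 0) (pw (pu F) 0) (pw (pw F) 0) = 0

def Flat (F : ℝ × ℝ → R3) : Prop := ∃ r : ℝ, pw (pw F) 0 = r • pu F 0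

structure Good (F : ℝ × ℝ → R3) : Prop where
  cd : ContDiff ℝ 4 F
  pw0 : pw F 0 = 0
  pu0 : pu F 0 ≠ 0

structure GInv (F G : ℝ × ℝ → R3) : Prop where
  flat : Flat F → Flat G
  crit : Crit F → Crit G
  quad : Crit F → ∀ A B C, Quad F A B C → ∃ A' B' C' ρ : ℝ, 0 < ρ ∧ Quad G A' B' C' ∧
    B' ^ 2 - 4 * A' * C' = ρ * (B ^ 2 - 4 * A * C)

lemma GInv.trans {F G K : ℝ × ℝ → R3} (h : GInv F G) (h' : GInv G K) : GInv F K := by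
  refine ⟨fun x => h'.flat (h.flat x), fun x => h'.crit (h.crit x), fun hc A B C hq => ?_⟩
  obtain ⟨A1, B1, C1, r1, hr1, hq1, e1⟩ := h.quad hc A B C hq
  obtain ⟨A2, B2, C2, r2, hr2, hq2, e2⟩ := h'.quad (h.crit hc) _ _ _ hq1
  exact ⟨A2, B2, C2, r2 * r1, by positivity, hq2, by rw [e2, e1]; ring⟩

lemma src {F : ℝ × ℝ → R3} (hF : Good F) {φ : ℝ × ℝ → ℝ × ℝ} (hφ : ContDiff ℝ 4 φ) (h0 : φ 0 = 0)
    (hJ : (pu φ 0).1 * (pw φ 0).2 - (pu φ 0).2 * (pw φ 0).1 ≠ 0)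
    (hk : pw (fun x => F (φ x)) 0 = 0) : Good (fun x => F (φ x)) ∧ GInv F (fun x => F (φ x)) := by
  obtain ⟨hF4, hF2, hF1⟩ := hF
  have dF : Differentiable ℝ F := hF4.differentiable (by norm_num)
  have dφ : Differentiable ℝ φ := hφ.differentiable (by norm_num)
  have cF1 : ContDiff ℝ 3 (pu F) := pu_cd hF4 (by norm_num)
  have cF2 : ContDiff ℝ 3 (pw F) := pw_cd hF4 (by norm_num)
  have cφ1 : ContDiff ℝ 3 (pu φ) := pu_cd hφ (by norm_num)
  have cφ2 : ContDiff ℝ 3 (pw φ) := pw_cd hφ (by norm_num)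
  have cF12 : ContDiff ℝ 2 (pw (pu F)) := pw_cd cF1 (by norm_num)
  have cF22 : ContDiff ℝ 2 (pw (pw F)) := pw_cd cF2 (by norm_num)
  have cF11 : ContDiff ℝ 2 (pu (pu F)) := pu_cd cF1 (by norm_num)
  have ca : ContDiff ℝ 3 (fun x => (pu φ x).1) := contDiff_fst.comp cφ1
  have cb : ContDiff ℝ 3 (fun x => (pu φ x).2) := contDiff_snd.comp cφ1
  have cc : ContDiff ℝ 3 (fun x => (pw φ x).1) := contDiff_fst.comp cφ2
  have cd : ContDiff ℝ 3 (fun x => (pw φ x).2) := contDiff_snd.comp cφ2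
  generalize ha : (fun x => (pu φ x).1) = a at ca
  generalize hb : (fun x => (pu φ x).2) = b at cb
  generalize hc : (fun x => (pw φ x).1) = c at cc
  generalize hd : (fun x => (pw φ x).2) = d at cd
  have ha' : ∀ x, (pu φ x).1 = a x := fun x => congrFun ha x
  have hb' : ∀ x, (pu φ x).2 = b x := fun x => congrFun hb x
  have hc' : ∀ x, (pw φ x).1 = c x := fun x => congrFun hc x
  have hd' : ∀ x, (pw φ x).2 = d x := fun x => congrFun hd x
  have G1 : pu (fun x => F (φ x)) = fun x => a x • pu F (φ x) + b x • pw F (φ x) := by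
    funext x; rw [pu_comp dF dφ, ha', hb']
  have G2 : pw (fun x => F (φ x)) = fun x => c x • pu F (φ x) + d x • pw F (φ x) := by
    funext x; rw [pw_comp dF dφ, hc', hd']
  rw [ha', hb', hc', hd'] at hJ
  have d3 : ∀ {V : Type} [NormedAddCommGroup V] [NormedSpace ℝ V] {f : ℝ × ℝ → V}, ContDiff ℝ 3 f → Differentiable ℝ f :=
    fun h => h.differentiable (by norm_num)
  have dF1φ : Differentiable ℝ (fun x => pu F (φ x)) := (d3 cF1).comp dφ
  have dF2φ : Differentiable ℝ (fun x => pw F (φ x)) := (d3 cF2).comp dφ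
  have G12 : ∀ x, pw (pu (fun x => F (φ x))) x = (pw a x • pu F (φ x) + a x • (c x • pu (pu F) (φ x) + d x • pw (pu F) (φ x)))
      + (pw b x • pw F (φ x) + b x • (c x • pw (pu F) (φ x) + d x • pw (pw F) (φ x))) := by
    intro x
    rw [G1, pw_add (f := fun x => a x • pu F (φ x)) (g := fun x => b x • pw F (φ x)) ((d3 ca).smul dF1φ) ((d3 cb).smul dF2φ), pw_smul (d3 ca) dF1φ, pw_smul (d3 cb) dF2φ,
      pw_comp (d3 cF1) dφ, pw_comp (d3 cF2) dφ, hc', hd', pu_pw (hF4.of_le (by norm_num))]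
  have G22 : ∀ x, pw (pw (fun x => F (φ x))) x = (pw c x • pu F (φ x) + c x • (c x • pu (pu F) (φ x) + d x • pw (pu F) (φ x)))
      + (pw d x • pw F (φ x) + d x • (c x • pw (pu F) (φ x) + d x • pw (pw F) (φ x))) := by
    intro x
    rw [G2, pw_add (f := fun x => c x • pu F (φ x)) (g := fun x => d x • pw F (φ x)) ((d3 cc).smul dF1φ) ((d3 cd).smul dF2φ), pw_smul (d3 cc) dF1φ, pw_smul (d3 cd) dF2φ,
      pw_comp (d3 cF1) dφ, pw_comp (d3 cF2) dφ, hc', hd', pu_pw (hF4.of_le (by norm_num))]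
  have c0 : c 0 = 0 := by
    have := congrFun G2 0
    rw [hk, h0, hF2, smul_zero, add_zero] at this
    exact (smul_eq_zero.1 this.symm).resolve_right hF1
  rw [c0, mul_zero, sub_zero] at hJ
  have a0 : a 0 ≠ 0 := left_ne_zero_of_mul hJ
  have d0 : d 0 ≠ 0 := right_ne_zero_of_mul hJ
  have G1z : pu (fun x => F (φ x)) 0 = a 0 • pu F 0 := by rw [G1]; simp [h0, hF2]
  refine ⟨⟨hF4.comp hφ, hk, ?_⟩, ⟨?_, ?_, ?_⟩⟩
  · rw [G1z]; exact smul_ne_zero a0 hF1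
  · rintro ⟨r, hr⟩
    refine ⟨(a 0)⁻¹ * (pw c 0 + d 0 ^ 2 * r), ?_⟩
    rw [G22, G1z, h0, hr, c0, hF2]
    funext i
    simp only [Pi.add_apply, Pi.smul_apply, smul_eq_mul, Pi.zero_apply]
    field_simp
    ring
  · intro hcr
    unfold Crit at hcr ⊢
    rw [G22, G1z, G12, h0, c0, hF2]
    simp only [det3_eq, Pi.add_apply, Pi.smul_apply, smul_eq_mul, Pi.zero_apply] at hcr ⊢
    linear_combination (a 0 * (a 0 * d 0) * d 0 ^ 2) * hcr
  · intro hcr A B C hq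
    refine ⟨(a 0 * d 0) * d 0 ^ 2 * (A * a 0 ^ 2 + B * (a 0 * b 0) + C * b 0 ^ 2),
      (a 0 * d 0) * d 0 ^ 2 * (B * a 0 * d 0 + 2 * C * b 0 * d 0),
      (a 0 * d 0) * d 0 ^ 2 * (C * d 0 ^ 2), ((a 0 * d 0) * d 0 ^ 2) ^ 2 * (a 0 * d 0) ^ 2, by positivity, ?_, by ring⟩
    -- orders of vanishing
    have oc : OO 1 c := OO.one (cc.of_le (by norm_num)) c0
    have oF2 : OO 1 (pw F) := OO.one (cF2.of_le (by norm_num)) hF2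
    have dφ0 := dφ 0
    have oN : OO 1 fun x => det3 (pu F x) (pw F x) (pu (pu F) x) :=
      OO.det3 (OO.of_cont cF1.continuous) oF2 (OO.of_cont cF11.continuous)
    -- F2 - linear part
    have oM : OO 2 fun x => det3 (pu F x) (pw F x) (pw (pu F) x) := by
      have e2 : OO 2 fun x => pw F x - (x.1 • pw (pu F) 0 + x.2 • pw (pw F) 0) := by
        have k1 : Differentiable ℝ fun x : ℝ × ℝ => x.1 • pw (pu F) 0 := by fun_prop
        have k2 : Differentiable ℝ fun x : ℝ × ℝ => x.2 • pw (pw F) 0 := by fun_prop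
        have fd : ∀ v, fderiv ℝ (fun x => pw F x - (x.1 • pw (pu F) 0 + x.2 • pw (pw F) 0)) 0 v =
            fderiv ℝ (pw F) 0 v - (v.1 • pw (pu F) 0 + v.2 • pw (pw F) 0) := by
          intro v
          have l : HasFDerivAt (fun x : ℝ × ℝ => x.1 • pw (pu F) 0 + x.2 • pw (pw F) 0)
            ((ContinuousLinearMap.fst ℝ ℝ ℝ).smulRight (pw (pu F) 0) +
              (ContinuousLinearMap.snd ℝ ℝ ℝ).smulRight (pw (pw F) 0)) 0 :=
            ContinuousLinearMap.hasFDerivAt ((ContinuousLinearMap.fst ℝ ℝ ℝ).smulRight (pw (pu F) 0) + (ContinuousLinearMap.snd ℝ ℝ ℝ).smulRight (pw (pw F) 0))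
          rw [(((d3 cF2) 0).hasFDerivAt.fun_sub l).fderiv]
          rfl
        refine OO.two ?_ (by simp [hF2]) ?_ ?_
        · exact (cF2.of_le (by norm_num)).sub (by fun_prop)
        · rw [pu, fd]; simp [← pu_pw (hF4.of_le (by norm_num)), pu]
        · rw [pw, fd]; simp [pw]
      have t1 : OO 2 fun x => det3 (pu F x) (pw F x - (x.1 • pw (pu F) 0 + x.2 • pw (pw F) 0)) (pw (pu F) x) :=
        OO.det3 (OO.of_cont cF1.continuous) e2 (OO.of_cont cF12.continuous)
      have o1 : OO 1 fun x => pu F x - pu F 0 := OO.one ((cF1.of_le (by norm_num)).sub contDiff_const) (by simp)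
      have o12 : OO 1 fun x => pw (pu F) x - pw (pu F) 0 := OO.one ((cF12.of_le (by norm_num)).sub contDiff_const) (by simp)
      have oL : OO 1 fun x : ℝ × ℝ => (x.1 • pw (pu F) 0 + x.2 • pw (pw F) 0) :=
        OO.one (by fun_prop) (by simp)
      have t2 : OO 2 fun x => det3 (pu F x - pu F 0) (x.1 • pw (pu F) 0 + x.2 • pw (pw F) 0) (pw (pu F) x) :=
        OO.det3 o1 oL (OO.of_cont cF12.continuous)
      have t3 : OO 2 fun x => det3 (pu F 0) (x.1 • pw (pu F) 0 + x.2 • pw (pw F) 0) (pw (pu F) x - pw (pu F) 0) :=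
        OO.det3 (OO.const _) oL o12
      refine ((t1.add t2).add t3).eqv fun x => ?_
      unfold Crit at hcr
      simp only [det3_eq, Pi.add_apply, Pi.smul_apply, smul_eq_mul, Pi.sub_apply] at hcr ⊢
      linear_combination (x.2) * hcr
    have hG : ∀ x, lam (fun x => F (φ x)) x = (a x * d x - b x * c x) * (c x * c x * det3 (pu F (φ x)) (pw F (φ x)) (pu (pu F) (φ x))
        + c x * (2 * d x) * det3 (pu F (φ x)) (pw F (φ x)) (pw (pu F) (φ x)) + d x ^ 2 * lam F (φ x)) := by
      intro x
      unfold lam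
      rw [G22, G1, G2]
      simp only [det3_eq, Pi.add_apply, Pi.smul_apply, smul_eq_mul]
      ring
    have cJ : Continuous fun x => a x * d x - b x * c x :=
      (ca.continuous.mul cd.continuous).sub (cb.continuous.mul cc.continuous)
    have r1 := (OO.of_cont cJ).mul ((oc.mul oc).mul (oN.comp h0 dφ0))
    have r2 := (OO.of_cont cJ).mul ((oc.mul (OO.of_cont (continuous_const.mul cd.continuous))).mul (oM.comp h0 dφ0) (f := fun x => c x * (2 * d x)))
    have r3 := hq.comp h0 dφ0
    have cK : ContDiff ℝ 1 fun x => (a x * d x - b x * c x) * d x ^ 2 - (a 0 * d 0) * d 0 ^ 2 :=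
      ((((ca.mul cd).sub (cb.mul cc)).mul (cd.pow 2)).sub contDiff_const).of_le (by norm_num)
    have oK := OO.one cK (by simp [c0])
    have cP : ContDiff ℝ 2 fun x => (φ x).1 - a 0 * x.1 :=
      ((contDiff_fst.comp hφ).sub (contDiff_const.mul contDiff_fst)).of_le (by norm_num)
    have cQ : ContDiff ℝ 2 fun x => (φ x).2 - (b 0 * x.1 + d 0 * x.2) :=
      ((contDiff_snd.comp hφ).sub ((contDiff_const.mul contDiff_fst).add (contDiff_const.mul contDiff_snd))).of_le (by norm_num)
    have hφ' := (dφ 0).hasFDerivAt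
    have lP : HasFDerivAt (fun x : ℝ × ℝ => a 0 * x.1) (a 0 • ContinuousLinearMap.fst ℝ ℝ ℝ) 0 :=
      ContinuousLinearMap.hasFDerivAt (a 0 • ContinuousLinearMap.fst ℝ ℝ ℝ)
    have lQ : HasFDerivAt (fun x : ℝ × ℝ => b 0 * x.1 + d 0 * x.2) (b 0 • ContinuousLinearMap.fst ℝ ℝ ℝ + d 0 • ContinuousLinearMap.snd ℝ ℝ ℝ) 0 :=
      ContinuousLinearMap.hasFDerivAt (b 0 • ContinuousLinearMap.fst ℝ ℝ ℝ + d 0 • ContinuousLinearMap.snd ℝ ℝ ℝ)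
    have oP : OO 2 fun x => (φ x).1 - a 0 * x.1 := by
      have e := (hφ'.fst.fun_sub lP).fderiv
      refine OO.two cP (by simp [h0]) ?_ ?_
      · rw [pu, e]; simpa [sub_eq_zero, pu, pw] using ha' 0
      · rw [pw, e]; simpa [c0, pu, pw] using hc' 0
    have oQ : OO 2 fun x => (φ x).2 - (b 0 * x.1 + d 0 * x.2) := by
      have e := (hφ'.snd.fun_sub lQ).fderiv
      refine OO.two cQ (by simp [h0]) ?_ ?_
      · rw [pu, e]; simpa [sub_eq_zero, pu, pw] using hb' 0
      · rw [pw, e]; simpa [sub_eq_zero, pu, pw] using hd' 0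
    have o1 : OO 1 fun x => (φ x).1 := OO.one (contDiff_fst.comp (hφ.of_le (by norm_num))) (by simp [h0])
    have o2 : OO 1 fun x => (φ x).2 := OO.one (contDiff_snd.comp (hφ.of_le (by norm_num))) (by simp [h0])
    have l1 : OO 1 fun x : ℝ × ℝ => a 0 * x.1 := OO.one (by fun_prop) (by simp)
    have l2 : OO 1 fun x : ℝ × ℝ => b 0 * x.1 + d 0 * x.2 := OO.one (by fun_prop) (by simp)
    have s1 := (OO.const A).mul ((oP.mul (o1.add l1)))
    have s2 := (OO.const B).mul ((oP.mul o2).add (((l1.mul oQ : OO 3 _))))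
    have s3 := (OO.const C).mul ((oQ.mul (o2.add l2)))
    have s4 := oK.mul ((OO.const A).mul ((o1.mul o1)))
    have s5 := oK.mul ((OO.const B).mul ((o1.mul o2)))
    have s6 := oK.mul ((OO.const C).mul ((o2.mul o2)))
    have s7 : OO 3 _ := (OO.const (a 0 * d 0 * d 0 ^ 2)).mul ((s1.add s2).add s3)
    have cK' : Continuous fun x => (a x * d x - b x * c x) * d x ^ 2 := cJ.mul (cd.continuous.pow 2)
    have r3' : OO 3 _ := (OO.of_cont cK').mul r3
    refine OO.eqv (((((((r1.mono (j := 3) (by norm_num)).add (r2.mono (j := 3) (by norm_num))).add r3').add s4).add s5).add s6).add s7) fun x => ?_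
    rw [hG]
    ring

end E2

section E3
open Topology Function Asymptotics

lemma tgt {F : ℝ × ℝ → R3} (hF : Good F) {Φ : R3 → R3} (hΦ : ContDiff ℝ 4 Φ)
    (hd : det3 (fderiv ℝ Φ (F 0) (Pi.single 0 1)) (fderiv ℝ Φ (F 0) (Pi.single 1 1)) (fderiv ℝ Φ (F 0) (Pi.single 2 1)) ≠ 0) :
    Good (fun x => Φ (F x)) ∧ GInv F (fun x => Φ (F x)) := by
  obtain ⟨hF4, hF2, hF1⟩ := hF
  have dF : Differentiable ℝ F := hF4.differentiable (by norm_num)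
  have dΦ : Differentiable ℝ Φ := hΦ.differentiable (by norm_num)
  have cF1 : ContDiff ℝ 3 (pu F) := pu_cd hF4 (by norm_num)
  have cF2 : ContDiff ℝ 3 (pw F) := pw_cd hF4 (by norm_num)
  have cF22 : ContDiff ℝ 2 (pw (pw F)) := pw_cd cF2 (by norm_num)
  have cD : ContDiff ℝ 3 (fderiv ℝ Φ) := hΦ.fderiv_right (by norm_num)
  have cDD : ContDiff ℝ 2 (fderiv ℝ (fderiv ℝ Φ)) := cD.fderiv_right (by norm_num)
  have cT : ContDiff ℝ 3 (fun x => fderiv ℝ Φ (F x)) := cD.comp (hF4.of_le (by norm_num))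
  have fdc : ∀ x, fderiv ℝ (fun x => Φ (F x)) x = (fderiv ℝ Φ (F x)).comp (fderiv ℝ F x) :=
    fun x => fderiv_comp x (dΦ _) (dF _)
  have fdT : ∀ x, fderiv ℝ (fun x => fderiv ℝ Φ (F x)) x = (fderiv ℝ (fderiv ℝ Φ) (F x)).comp (fderiv ℝ F x) :=
    fun x => fderiv_comp (g := fderiv ℝ Φ) x (cD.differentiable (by norm_num) _) (dF _)
  have G1 : pu (fun x => Φ (F x)) = fun x => fderiv ℝ Φ (F x) (pu F x) := by
    funext x; rw [pu, fdc]; rfl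
  have G2 : pw (fun x => Φ (F x)) = fun x => fderiv ℝ Φ (F x) (pw F x) := by
    funext x; rw [pw, fdc]; rfl
  have G22 : ∀ x, pw (pw (fun x => Φ (F x))) x = fderiv ℝ Φ (F x) (pw (pw F) x) +
      fderiv ℝ (fderiv ℝ Φ) (F x) (pw F x) (pw F x) := by
    intro x
    rw [G2, pw, fderiv_clm_apply (cT.differentiable (by norm_num) _) (cF2.differentiable (by norm_num) _), fdT]
    rfl
  have G12 : ∀ x, pw (pu (fun x => Φ (F x))) x = fderiv ℝ Φ (F x) (pw (pu F) x) +
      fderiv ℝ (fderiv ℝ Φ) (F x) (pw F x) (pu F x) := by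
    intro x
    rw [G1, pw, fderiv_clm_apply (cT.differentiable (by norm_num) _) (cF1.differentiable (by norm_num) _), fdT]
    rfl
  refine ⟨⟨hΦ.comp hF4, ?_, ?_⟩, ⟨?_, ?_, ?_⟩⟩
  · rw [G2]; simp [hF2]
  · rw [G1]
    intro h
    have h : fderiv ℝ Φ (F 0) (pu F 0) = 0 := h
    refine hF1 ?_
    have e := fun b c => det3_map (fderiv ℝ Φ (F 0)) (pu F 0) b c
    rw [h] at e
    have e' : ∀ b c, det3 (pu F 0) b c = 0 := by
      intro b c
      have := e b c
      rw [show det3 0 (fderiv ℝ Φ (F 0) b) (fderiv ℝ Φ (F 0) c) = 0 by simp [det3_eq]] at this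
      exact (mul_eq_zero.1 this.symm).resolve_left hd
    funext i
    have e0 := e' (Pi.single 1 1) (Pi.single 2 1)
    have e1 := e' (Pi.single 2 1) (Pi.single 0 1)
    have e2 := e' (Pi.single 0 1) (Pi.single 1 1)
    simp [det3_eq] at e0 e1 e2
    fin_cases i <;> simpa
  · rintro ⟨r, hr⟩
    refine ⟨r, ?_⟩
    rw [G22, G1, hr, hF2]; simp
  · intro hc
    unfold Crit at hc ⊢
    rw [G22, G12, G1, hF2]
    simp only [map_zero, zero_apply, add_zero]
    rw [det3_map, hc, mul_zero]
  · intro hc A B C hq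
    set K : ℝ × ℝ → ℝ := fun x => det3 (fderiv ℝ Φ (F x) (Pi.single 0 1)) (fderiv ℝ Φ (F x) (Pi.single 1 1)) (fderiv ℝ Φ (F x) (Pi.single 2 1)) with hK
    have hK0 : K 0 ≠ 0 := hd
    refine ⟨K 0 * A, K 0 * B, K 0 * C, K 0 ^ 2, by positivity, ?_, by ring⟩
    have cTi : ∀ i j : Fin 3, ContDiff ℝ 3 (fun x => fderiv ℝ Φ (F x) (Pi.single i 1) j) := fun i j =>
      contDiff_pi.1 (cT.clm_apply contDiff_const) j
    have cK : ContDiff ℝ 3 K := by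
      rw [hK]; simp only [det3_eq]
      have H : ∀ a b c : Fin 3, ContDiff ℝ 3 fun x => fderiv ℝ Φ (F x) (Pi.single 0 1) a * fderiv ℝ Φ (F x) (Pi.single 1 1) b * fderiv ℝ Φ (F x) (Pi.single 2 1) c :=
        fun a b c => ((cTi 0 a).mul (cTi 1 b)).mul (cTi 2 c)
      exact (((((H 0 1 2).sub (H 0 2 1)).sub (H 1 0 2)).add (H 1 2 0)).add (H 2 0 1)).sub (H 2 1 0)
    have oK : OO 1 fun x => K x - K 0 := OO.one ((cK.sub contDiff_const).of_le (by norm_num)) (by simp)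
    have oF2 : OO 1 (pw F) := OO.one (cF2.of_le (by norm_num)) hF2
    have cG1 : Continuous fun x => fderiv ℝ Φ (F x) (pu F x) := cT.continuous.clm_apply cF1.continuous
    have cG2 : ContDiff ℝ 1 fun x => fderiv ℝ Φ (F x) (pw F x) := (cT.clm_apply cF2).of_le (by norm_num)
    have oG2 : OO 1 fun x => fderiv ℝ Φ (F x) (pw F x) := OO.one cG2 (by simp [hF2])
    have cDF : Continuous fun x => fderiv ℝ (fderiv ℝ Φ) (F x) := cDD.continuous.comp hF4.continuous
    have oE : OO 2 fun x => fderiv ℝ (fderiv ℝ Φ) (F x) (pw F x) (pw F x) := by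
      have o1 : OO 0 (fun x => ‖fderiv ℝ (fderiv ℝ Φ) (F x)‖) := by
        have := OO.of_cont (V := R3 →L[ℝ] R3 →L[ℝ] R3) (f := fun x => fderiv ℝ (fderiv ℝ Φ) (F x)) cDF
        exact IsBigO.norm_left this
      have o2 : OO 1 (fun x => ‖pw F x‖) := oF2.norm_left
      have o3 : OO 2 _ := (o1.mul o2).mul o2
      refine IsBigO.trans (IsBigO.of_bound 1 (Eventually.of_forall fun x => ?_)) o3
      simp only [one_mul, norm_mul, norm_norm]
      rw [Real.norm_of_nonneg (norm_nonneg (fderiv ℝ (fderiv ℝ Φ) (F x)))]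
      exact ContinuousLinearMap.le_opNorm₂ (fderiv ℝ (fderiv ℝ Φ) (F x)) (pw F x) (pw F x)
    have r1 : OO 3 _ := OO.det3 (OO.of_cont cG1) oG2 oE
    have r2 : OO 3 _ := (OO.of_cont cK.continuous).mul hq
    have q1 : OO 3 _ := oK.mul ((OO.const A).mul (OO.fst.mul OO.fst))
    have q2 : OO 3 _ := oK.mul ((OO.const B).mul (OO.fst.mul OO.snd))
    have q3 : OO 3 _ := oK.mul ((OO.const C).mul (OO.snd.mul OO.snd))
    refine OO.eqv ((((r1.add r2).add q1).add q2).add q3) fun x => ?_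
    have e : lam (fun x => Φ (F x)) x = K x * lam F x + det3 (fderiv ℝ Φ (F x) (pu F x)) (fderiv ℝ Φ (F x) (pw F x))
        (fderiv ℝ (fderiv ℝ Φ) (F x) (pw F x) (pw F x)) := by
      unfold lam
      rw [G22, G1, G2, hK, ← det3_map]
      simp only [det3_eq, Pi.add_apply]
      ring
    rw [e]; ring

lemma quad_zero {A B C : ℝ} (h : OO 3 fun x : ℝ × ℝ => A * x.1 ^ 2 + B * (x.1 * x.2) + C * x.2 ^ 2) :
    A = 0 ∧ B = 0 ∧ C = 0 := by
  have key : ∀ p : ℝ × ℝ, A * p.1 ^ 2 + B * (p.1 * p.2) + C * p.2 ^ 2 = 0 := by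
    intro p
    have ht : Tendsto (fun t : ℝ => t • p) (𝓝 0) (𝓝 0) := by
      have : Continuous (fun t : ℝ => t • p) := by fun_prop
      simpa using this.tendsto 0
    have h1 := (IsBigO.comp_tendsto h ht)
    obtain ⟨M, hM⟩ := h1.bound
    by_contra hne
    set q := A * p.1 ^ 2 + B * (p.1 * p.2) + C * p.2 ^ 2 with hq
    have h2 : ∀ᶠ t : ℝ in 𝓝[>] 0, |q| ≤ M * ‖p‖ ^ 3 * t := by
      filter_upwards [nhdsWithin_le_nhds hM, self_mem_nhdsWithin] with t ht ht0
      have ht0 : 0 < t := ht0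
      have e : A * (t • p).1 ^ 2 + B * ((t • p).1 * (t • p).2) + C * (t • p).2 ^ 2 = t ^ 2 * q := by
        simp [hq]; ring
      simp only [Function.comp, e, norm_mul, norm_pow, norm_smul, Real.norm_eq_abs, abs_of_pos ht0, abs_norm] at ht
      have : t ^ 2 * |q| ≤ t ^ 2 * (M * ‖p‖ ^ 3 * t) := by nlinarith [ht]
      exact le_of_mul_le_mul_left this (by positivity)
    have h3 : Tendsto (fun t : ℝ => M * ‖p‖ ^ 3 * t) (𝓝[>] 0) (𝓝 0) := by
      have : Continuous (fun t : ℝ => M * ‖p‖ ^ 3 * t) := by fun_prop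
      have h4 := this.tendsto 0
      rw [mul_zero] at h4
      exact h4.mono_left nhdsWithin_le_nhds
    have := ge_of_tendsto h3 h2
    exact hne (abs_nonpos_iff.1 this)
  have h1 := key (1, 0)
  have h2 := key (0, 1)
  have h3 := key (1, 1)
  simp at h1 h2 h3
  exact ⟨h1, by linarith, h2⟩

lemma quad_unique {F : ℝ × ℝ → R3} {A B C A' B' C' : ℝ} (h : Quad F A B C) (h' : Quad F A' B' C') :
    A = A' ∧ B = B' ∧ C = C' := by
  have : OO 3 fun x : ℝ × ℝ => (A' - A) * x.1 ^ 2 + (B' - B) * (x.1 * x.2) + (C' - C) * x.2 ^ 2 :=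
    OO.eqv (h.sub h') fun x => by ring
  obtain ⟨h1, h2, h3⟩ := quad_zero this
  exact ⟨by linarith, by linarith, by linarith⟩

lemma pu_ev {V : Type} [NormedAddCommGroup V] [NormedSpace ℝ V] {f g : ℝ × ℝ → V} (h : f =ᶠ[𝓝 0] g) : pu f =ᶠ[𝓝 0] pu g := by
  filter_upwards [h.fderiv (𝕜 := ℝ)] with x hx
  rw [pu, pu, hx]
lemma pw_ev {V : Type} [NormedAddCommGroup V] [NormedSpace ℝ V] {f g : ℝ × ℝ → V} (h : f =ᶠ[𝓝 0] g) : pw f =ᶠ[𝓝 0] pw g := by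
  filter_upwards [h.fderiv (𝕜 := ℝ)] with x hx
  rw [pw, pw, hx]

lemma inv_ev {F G : ℝ × ℝ → R3} (h : F =ᶠ[𝓝 0] G) : GInv F G := by
  have h1 := pu_ev h
  have h2 := pw_ev h
  have h12 := pw_ev h1
  have h22 := pw_ev h2
  refine ⟨?_, ?_, ?_⟩
  · rintro ⟨r, hr⟩
    exact ⟨r, by rw [← h22.eq_of_nhds, ← h1.eq_of_nhds, hr]⟩
  · intro hc
    unfold Crit at hc ⊢
    rwa [← h22.eq_of_nhds, ← h1.eq_of_nhds, ← h12.eq_of_nhds]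
  · intro hc A B C hq
    refine ⟨A, B, C, 1, one_pos, OO.congr hq ?_, by ring⟩
    filter_upwards [h1, h2, h22] with x a b c
    unfold lam
    rw [a, b, c]

lemma globn {E F : Type} [NormedAddCommGroup E] [NormedSpace ℝ E] [FiniteDimensional ℝ E]
    [NormedAddCommGroup F] [NormedSpace ℝ F] (f : E → F) (p : E)
    (h : ContDiffAt ℝ (⊤ : ℕ∞) f p) :
    ∃ g : E → F, ContDiff ℝ 4 g ∧ g =ᶠ[𝓝 p] f := by
  have h : ∀ᶠ x in 𝓝 p, ContDiffAt ℝ 4 f x :=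
    (h.of_le (m := 4) (by exact WithTop.coe_le_coe.2 (le_top : (4 : ℕ∞) ≤ ⊤))).eventually (by norm_num)
  obtain ⟨ε, hε, hb⟩ := Metric.eventually_nhds_iff_ball.1 h
  let χ : ContDiffBump p := ⟨ε / 4, ε / 2, by positivity, by linarith⟩
  refine ⟨fun x => χ x • f x, ?_, ?_⟩
  · rw [contDiff_iff_contDiffAt]
    intro x
    by_cases hx : x ∈ Metric.ball p ε
    · exact (χ.contDiff.contDiffAt).smul (hb x hx)
    · have : (fun x => χ x • f x) =ᶠ[𝓝 x] fun _ => 0 := by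
        have h1 : x ∉ tsupport χ := by
          rw [χ.tsupport_eq]
          intro h2
          refine hx (Metric.closedBall_subset_ball ?_ h2)
          change ε / 2 < ε; linarith
        have h2 := notMem_tsupport_iff_eventuallyEq.1 h1
        filter_upwards [h2] with y hy
        rw [hy]; simp
      exact contDiffAt_const.congr_of_eventuallyEq this
  · filter_upwards [χ.eventuallyEq_one] with y hy
    rw [hy]; simp

lemma ld_fd {E F : Type} [NormedAddCommGroup E] [NormedSpace ℝ E] 
    [NormedAddCommGroup F] [NormedSpace ℝ F] {f : E → F} {p : E} (h : IsLocalDiffeoAt f p) :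
    ∃ S : F →L[ℝ] E, ∀ v, S (fderiv ℝ f p v) = v := by
  obtain ⟨h1, g, h2, h3, h4⟩ := h
  refine ⟨fderiv ℝ g (f p), fun v => ?_⟩
  have e := fderiv_comp p (h2.differentiableAt (by simp)) (h1.differentiableAt (by simp))
  have e' : fderiv ℝ (g ∘ f) p = fderiv ℝ (fun x => x) p := Filter.EventuallyEq.fderiv_eq h3
  rw [e', fderiv_fun_id] at e
  exact (congrArg (fun T => T v) e).symm

lemma inv_main {F G : ℝ × ℝ → R3} (hF : Good F) (hG : Good G) (h : AEquivAt F 0 G 0) : GInv F G := by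
  obtain ⟨φ, Φ, h1, h2, h3, h4⟩ := h
  obtain ⟨S, hS⟩ := ld_fd h1
  obtain ⟨T, hT⟩ := ld_fd h3
  obtain ⟨φ', c1, e1⟩ := globn _ _ h1.1
  obtain ⟨Φ', c2, e2⟩ := globn _ _ h3.1
  have p0 : φ' 0 = 0 := by rw [e1.eq_of_nhds, h2]
  obtain ⟨gH, iH⟩ := tgt hF c2 (by
    rw [e2.fderiv_eq]
    exact det3_inj _ T hT)
  have ht : Tendsto (fun x => F (φ x)) (𝓝 0) (𝓝 (F 0)) := by
    have a := ld_tendsto h1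
    rw [h2] at a
    exact (hF.cd.continuous.tendsto 0).comp a
  have he : (fun x => Φ' (F (φ' x))) =ᶠ[𝓝 0] G := by
    filter_upwards [e1, ht.eventually e2, h4] with x a b c
    rw [a, b, c]
  rw [← e1.fderiv_eq] at hS
  have hJ : (pu φ' 0).1 * (pw φ' 0).2 - (pu φ' 0).2 * (pw φ' 0).1 ≠ 0 := by
    intro hJ
    have k1 := hS ((pw φ' 0).2, -(pu φ' 0).2)
    have k2 := hS ((pw φ' 0).1, -(pu φ' 0).1)
    rw [fd_pair] at k1 k2
    have z1 : (pw φ' 0).2 • pu φ' 0 + (-(pu φ' 0).2) • pw φ' 0 = 0 := by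
      ext <;> simp <;> linarith
    have z2 : (pw φ' 0).1 • pu φ' 0 + (-(pu φ' 0).1) • pw φ' 0 = 0 := by
      ext <;> simp <;> linarith
    simp only [z1, z2, map_zero] at k1 k2
    have y := hS (1, 0)
    rw [fd_pair] at y
    have : pu φ' 0 = 0 := by
      simp only [Prod.ext_iff, Prod.fst_zero, Prod.snd_zero] at k1 k2 ⊢
      exact ⟨by linarith [k2.2], by linarith [k1.2]⟩
    simp [this, Prod.ext_iff] at y
  have hk : pw (fun x => Φ' (F (φ' x))) 0 = 0 := by
    rw [(pw_ev he).eq_of_nhds, hG.pw0]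
  obtain ⟨gK, iK⟩ := src gH c1 p0 hJ hk
  exact (iH.trans iK).trans (inv_ev he)

end E3

section F1
open Topology Function Asymptotics

lemma fd_vec {f g h : ℝ × ℝ → ℝ} (hf : Differentiable ℝ f) (hg : Differentiable ℝ g) (hh : Differentiable ℝ h)
    (x v : ℝ × ℝ) : fderiv ℝ (fun x => (![f x, g x, h x] : R3)) x v = ![fderiv ℝ f x v, fderiv ℝ g x v, fderiv ℝ h x v] := by
  have hd : ∀ i, DifferentiableAt ℝ (fun x => (![f x, g x, h x] : R3) i) x := by
    intro i; fin_cases i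
    · exact hf x
    · exact hg x
    · exact hh x
  funext i
  rw [fderiv_pi hd]
  fin_cases i <;> rfl

lemma pu_vec {f g h : ℝ × ℝ → ℝ} (hf : Differentiable ℝ f) (hg : Differentiable ℝ g) (hh : Differentiable ℝ h)
    : pu (fun x => (![f x, g x, h x] : R3)) = fun x => ![pu f x, pu g x, pu h x] := by
  funext x; exact fd_vec hf hg hh x _
lemma pw_vec {f g h : ℝ × ℝ → ℝ} (hf : Differentiable ℝ f) (hg : Differentiable ℝ g) (hh : Differentiable ℝ h)
    : pw (fun x => (![f x, g x, h x] : R3)) = fun x => ![pw f x, pw g x, pw h x] := by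
  funext x; exact fd_vec hf hg hh x _

lemma cd_vec {n : WithTop ℕ∞} {E : Type} [NormedAddCommGroup E] [NormedSpace ℝ E] {f g h : E → ℝ} (hf : ContDiff ℝ n f) (hg : ContDiff ℝ n g) (hh : ContDiff ℝ n h) :
    ContDiff ℝ n (fun x => (![f x, g x, h x] : R3)) := by
  rw [contDiff_pi]
  intro i; fin_cases i
  · exact hf
  · exact hg
  · exact hh

lemma pu_fst : pu (fun x : ℝ × ℝ => x.1) = fun _ => 1 := by
  funext x; rw [pu, fderiv_fst]; rfl
lemma pw_fst : pw (fun x : ℝ × ℝ => x.1) = fun _ => 0 := by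
  funext x; rw [pw, fderiv_fst]; rfl
lemma pu_snd : pu (fun x : ℝ × ℝ => x.2) = fun _ => 0 := by
  funext x; rw [pu, fderiv_snd]; rfl
lemma pw_snd : pw (fun x : ℝ × ℝ => x.2) = fun _ => 1 := by
  funext x; rw [pw, fderiv_snd]; rfl
lemma pu_const (c : ℝ) : pu (fun _ : ℝ × ℝ => c) = fun _ => 0 := by
  funext x; simp [pu]
lemma pw_const (c : ℝ) : pw (fun _ : ℝ × ℝ => c) = fun _ => 0 := by
  funext x; simp [pw]
lemma pu_mul {f g : ℝ × ℝ → ℝ} (hf : Differentiable ℝ f) (hg : Differentiable ℝ g) :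
    pu (fun x => f x * g x) = fun x => pu f x * g x + f x * pu g x := by
  funext x; exact pu_smul hf hg x
lemma pw_mul {f g : ℝ × ℝ → ℝ} (hf : Differentiable ℝ f) (hg : Differentiable ℝ g) :
    pw (fun x => f x * g x) = fun x => pw f x * g x + f x * pw g x := by
  funext x; exact pw_smul hf hg x

lemma pu_sq : pu (fun x : ℝ × ℝ => x.2 ^ 2) = fun _ => 0 := by
  have : (fun x : ℝ × ℝ => x.2 ^ 2) = fun x => x.2 * x.2 := by funext x; ring
  rw [this, pu_mul (by fun_prop) (by fun_prop), pu_snd]; simp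
lemma pw_sq : pw (fun x : ℝ × ℝ => x.2 ^ 2) = fun x => 2 * x.2 := by
  have : (fun x : ℝ × ℝ => x.2 ^ 2) = fun x => x.2 * x.2 := by funext x; ring
  rw [this, pw_mul (by fun_prop) (by fun_prop), pw_snd]; simp; funext x; ring

def NFY (Y : ℝ × ℝ → ℝ) (x : ℝ × ℝ) : R3 := ![x.1, x.2 ^ 2, Y x]

lemma nfy_pu {Y : ℝ × ℝ → ℝ} (hY : ContDiff ℝ 4 Y) : pu (NFY Y) = fun x => ![1, 0, pu Y x] := by
  have := pu_vec (f := fun x : ℝ × ℝ => x.1) (g := fun x : ℝ × ℝ => x.2 ^ 2) (h := Y) (by fun_prop) (by fun_prop) (hY.differentiable (by norm_num))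
  rw [pu_fst, pu_sq] at this
  exact this
lemma nfy_pw {Y : ℝ × ℝ → ℝ} (hY : ContDiff ℝ 4 Y) : pw (NFY Y) = fun x => ![0, 2 * x.2, pw Y x] := by
  have := pw_vec (f := fun x : ℝ × ℝ => x.1) (g := fun x : ℝ × ℝ => x.2 ^ 2) (h := Y) (by fun_prop) (by fun_prop) (hY.differentiable (by norm_num))
  rw [pw_fst, pw_sq] at this
  exact this
lemma nfy_pwpu {Y : ℝ × ℝ → ℝ} (hY : ContDiff ℝ 4 Y) : pw (pu (NFY Y)) = fun x => ![0, 0, pw (pu Y) x] := by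
  rw [nfy_pu hY, pw_vec (by fun_prop) (by fun_prop) ((pu_cd (m := 3) hY (by norm_num)).differentiable (by norm_num)), pw_const, pw_const]
lemma nfy_pwpw {Y : ℝ × ℝ → ℝ} (hY : ContDiff ℝ 4 Y) : pw (pw (NFY Y)) = fun x => ![0, 2, pw (pw Y) x] := by
  rw [nfy_pw hY, pw_vec (by fun_prop) (by fun_prop) ((pw_cd (m := 3) hY (by norm_num)).differentiable (by norm_num)), pw_const,
    pw_mul (by fun_prop) (by fun_prop), pw_snd, pw_const]
  simp

lemma nfy_good {Y : ℝ × ℝ → ℝ} (hY : ContDiff ℝ 4 Y) (h0 : pw Y 0 = 0) : Good (NFY Y) := by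
  refine ⟨cd_vec (by fun_prop) (by fun_prop) hY, ?_, ?_⟩
  · rw [nfy_pw hY]; simp [h0]
  · rw [nfy_pu hY]; intro h; simpa using congrFun h 0

lemma nfy_flat {Y : ℝ × ℝ → ℝ} (hY : ContDiff ℝ 4 Y) : ¬ Flat (NFY Y) := by
  rintro ⟨r, hr⟩
  rw [nfy_pu hY, nfy_pwpw hY] at hr
  simpa using congrFun hr 1

lemma nfy_crit {Y : ℝ × ℝ → ℝ} (hY : ContDiff ℝ 4 Y) : Crit (NFY Y) ↔ pw (pu Y) 0 = 0 := by
  unfold Crit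
  rw [nfy_pwpu hY, nfy_pwpw hY, nfy_pu hY]
  simp [det3_eq]

lemma nfy_lam {Y : ℝ × ℝ → ℝ} (hY : ContDiff ℝ 4 Y) (x) : lam (NFY Y) x = 2 * x.2 * pw (pw Y) x - 2 * pw Y x := by
  unfold lam
  rw [nfy_pu hY, nfy_pwpw hY, nfy_pw hY]
  simp [det3_eq]
  ring

def Y1 (e : ℝ) (x : ℝ × ℝ) : ℝ := x.2 * (x.1 * x.1 + e * (x.2 * x.2))

lemma Y1_pu (e : ℝ) : pu (Y1 e) = fun x => 2 * (x.1 * x.2) := by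
  unfold Y1
  rw [pu_mul (by fun_prop) (by fun_prop)]
  funext x
  rw [pu_add (by fun_prop) (by fun_prop), pu_mul (by fun_prop) (by fun_prop), pu_mul (by fun_prop) (by fun_prop),
    pu_mul (by fun_prop) (by fun_prop), pu_fst, pu_snd, pu_const]
  ring
lemma Y1_pw (e : ℝ) : pw (Y1 e) = fun x => x.1 * x.1 + 3 * e * (x.2 * x.2) := by
  unfold Y1
  rw [pw_mul (by fun_prop) (by fun_prop)]
  funext x
  rw [pw_add (by fun_prop) (by fun_prop), pw_mul (by fun_prop) (by fun_prop), pw_mul (by fun_prop) (by fun_prop),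
    pw_mul (by fun_prop) (by fun_prop), pw_fst, pw_snd, pw_const]
  ring
lemma Y1_pwpu (e : ℝ) : pw (pu (Y1 e)) = fun x => 2 * x.1 := by
  rw [Y1_pu, pw_mul (by fun_prop) (by fun_prop), pw_mul (by fun_prop) (by fun_prop), pw_fst, pw_snd, pw_const]
  funext x; ring
lemma Y1_pwpw (e : ℝ) : pw (pw (Y1 e)) = fun x => 6 * e * x.2 := by
  rw [Y1_pw]
  funext x
  rw [pw_add (by fun_prop) (by fun_prop), pw_mul (by fun_prop) (by fun_prop), pw_mul (by fun_prop) (by fun_prop),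
    pw_mul (by fun_prop) (by fun_prop), pw_mul (by fun_prop) (by fun_prop), pw_const 3, pw_fst, pw_snd, pw_const]
  ring
lemma Y1_cd (e : ℝ) : ContDiff ℝ 4 (Y1 e) := by unfold Y1; fun_prop

lemma S_good (e : ℝ) : Good (NFY (Y1 e)) := nfy_good (Y1_cd e) (by rw [Y1_pw]; simp)
lemma S_crit (e : ℝ) : Crit (NFY (Y1 e)) := by rw [nfy_crit (Y1_cd e), Y1_pwpu]; simp
lemma S_quad (e : ℝ) : Quad (NFY (Y1 e)) (-2) 0 (6 * e) := by
  unfold Quad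
  have : (fun x : ℝ × ℝ => lam (NFY (Y1 e)) x - (-2 * x.1 ^ 2 + 0 * (x.1 * x.2) + 6 * e * x.2 ^ 2)) = fun _ => 0 := by
    funext x
    rw [nfy_lam (Y1_cd e), Y1_pwpw, Y1_pw]; ring
  rw [this]
  exact isBigO_zero _ _

def CC (x : ℝ × ℝ) : R3 := ![x.1, x.1 * x.2, x.2 ^ 2]

lemma CC_pu : pu CC = fun x => ![1, x.2, 0] := by
  have := pu_vec (f := fun x : ℝ × ℝ => x.1) (g := fun x : ℝ × ℝ => x.1 * x.2) (h := fun x => x.2 ^ 2) (by fun_prop) (by fun_prop) (by fun_prop)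
  rw [pu_fst, pu_sq, pu_mul (by fun_prop) (by fun_prop), pu_fst, pu_snd] at this
  simp only [one_mul, mul_zero, add_zero] at this
  exact this
lemma CC_pw : pw CC = fun x => ![0, x.1, 2 * x.2] := by
  have := pw_vec (f := fun x : ℝ × ℝ => x.1) (g := fun x : ℝ × ℝ => x.1 * x.2) (h := fun x => x.2 ^ 2) (by fun_prop) (by fun_prop) (by fun_prop)
  rw [pw_fst, pw_sq, pw_mul (by fun_prop) (by fun_prop), pw_fst, pw_snd] at this
  simp only [mul_one, zero_mul, zero_add] at this
  exact this

lemma CC_good : Good CC := by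
  refine ⟨cd_vec (by fun_prop) (by fun_prop) (by fun_prop), ?_, ?_⟩
  · rw [CC_pw]; simp
  · rw [CC_pu]; intro h; simpa using congrFun h 0
lemma CC_crit : ¬ Crit CC := by
  unfold Crit
  rw [CC_pw, CC_pu, pw_vec (by fun_prop) (by fun_prop) (by fun_prop), pw_vec (by fun_prop) (by fun_prop) (by fun_prop), pw_const, pw_const,
    pw_mul (by fun_prop) (by fun_prop), pw_snd, pw_fst, pw_const]
  simp [det3_eq]

end F1

section F2
open Topology Function Asymptotics

lemma sh_hfd {V : Type} [NormedAddCommGroup V] [NormedSpace ℝ V] {g : ℝ → V} (hg : Differentiable ℝ g) (u : ℝ) (x : ℝ × ℝ) :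
    HasFDerivAt (fun x : ℝ × ℝ => g (u + x.2)) ((ContinuousLinearMap.snd ℝ ℝ ℝ).smulRight (deriv g (u + x.2))) x := by
  have h1 : HasFDerivAt (fun x : ℝ × ℝ => u + x.2) (ContinuousLinearMap.snd ℝ ℝ ℝ) x :=
    hasFDerivAt_snd.const_add u
  have h2 := (hg (u + x.2)).hasDerivAt.hasFDerivAt.comp x h1
  refine h2.congr_fderiv ?_
  ext <;> simp

lemma sh_pu {V : Type} [NormedAddCommGroup V] [NormedSpace ℝ V] {g : ℝ → V} (hg : Differentiable ℝ g) (u : ℝ) :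
    pu (fun x : ℝ × ℝ => g (u + x.2)) = fun _ => 0 := by
  funext x; rw [pu, (sh_hfd hg u x).fderiv]; simp
lemma sh_pw {V : Type} [NormedAddCommGroup V] [NormedSpace ℝ V] {g : ℝ → V} (hg : Differentiable ℝ g) (u : ℝ) :
    pw (fun x : ℝ × ℝ => g (u + x.2)) = fun x => deriv g (u + x.2) := by
  funext x; rw [pw, (sh_hfd hg u x).fderiv]; simp

lemma sh_O1 {g : ℝ → ℝ} (hg : ContDiff ℝ (⊤ : ℕ∞) g) (u : ℝ) : OO 1 fun x : ℝ × ℝ => g (u + x.2) - g u := by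
  have : ContDiff ℝ 1 g := hg.of_le (by exact WithTop.coe_le_coe.2 (le_top : (1 : ℕ∞) ≤ ⊤))
  exact OO.one (by fun_prop) (by simp)

lemma sh_O2 {g : ℝ → ℝ} (hg : ContDiff ℝ (⊤ : ℕ∞) g) (u : ℝ) :
    OO 2 fun x : ℝ × ℝ => g (u + x.2) - (g u + deriv g u * x.2) := by
  have h2 : ContDiff ℝ 2 g := hg.of_le (by exact WithTop.coe_le_coe.2 (le_top : (2 : ℕ∞) ≤ ⊤))
  have hd : Differentiable ℝ g := h2.differentiable (by norm_num)
  have l : HasFDerivAt (fun x : ℝ × ℝ => g u + deriv g u * x.2) (deriv g u • ContinuousLinearMap.snd ℝ ℝ ℝ) 0 :=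
    (ContinuousLinearMap.hasFDerivAt (deriv g u • ContinuousLinearMap.snd ℝ ℝ ℝ)).const_add _
  have e := ((sh_hfd hd u 0).fun_sub l).fderiv
  refine OO.two (by fun_prop) (by simp) ?_ ?_
  · rw [pu, e]; simp
  · rw [pw, e]; simp

lemma sh_O3 {g : ℝ → ℝ} (hg : ContDiff ℝ (⊤ : ℕ∞) g) (u : ℝ) (h0 : g u = 0) (h1 : deriv g u = 0) :
    OO 3 fun x : ℝ × ℝ => g (u + x.2) - deriv (deriv g) u / 2 * x.2 ^ 2 := by
  have h2 : ContDiff ℝ 2 g := hg.of_le (by exact WithTop.coe_le_coe.2 (le_top : (2 : ℕ∞) ≤ ⊤))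
  have hd : Differentiable ℝ g := h2.differentiable (by norm_num)
  have hg' : ContDiff ℝ (⊤ : ℕ∞) (deriv g) := by
    have := hg.iterate_deriv 1
    simpa using this
  have l : ∀ x, HasFDerivAt (fun x : ℝ × ℝ => deriv (deriv g) u / 2 * x.2 ^ 2) ((deriv (deriv g) u * x.2) • ContinuousLinearMap.snd ℝ ℝ ℝ) x := by
    intro x
    have := ((hasFDerivAt_snd (𝕜 := ℝ) (p := x) (E := ℝ) (F := ℝ)).pow 2).const_mul (deriv (deriv g) u / 2)
    refine this.congr_fderiv ?_
    ext
    · simp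
    · simp
      ring
  have e := fun x => ((sh_hfd hd u x).fun_sub (l x)).fderiv
  refine OO.succ (k := 2) (fun x => ((sh_hfd hd u x).fun_sub (l x)).differentiableAt) (by simp [h0]) ?_
  have o := sh_O2 hg' u
  rw [h1] at o
  have : OO 2 fun x : ℝ × ℝ => (deriv g (u + x.2) - (0 + deriv (deriv g) u * x.2)) • ContinuousLinearMap.snd ℝ ℝ ℝ := by
    have := IsBigO.smul o (OO.const (ContinuousLinearMap.snd ℝ ℝ ℝ))
    unfold OO
    simpa using this
  refine this.eqv fun x => ?_
  rw [e]
  ext <;> simp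

/-- The normal ruled surface in shifted coordinates `(w,u)`. -/
def NN (γ ν : ℝ → R3) (u₀ w₀ : ℝ) (x : ℝ × ℝ) : R3 := NR γ ν (u₀ + x.2, w₀ + x.1)

lemma cd4 {V : Type} [NormedAddCommGroup V] [NormedSpace ℝ V] {g : ℝ → V} (hg : ContDiff ℝ (⊤ : ℕ∞) g) : ContDiff ℝ 4 g :=
  hg.of_le (by exact WithTop.coe_le_coe.2 (le_top : (4 : ℕ∞) ≤ ⊤))
lemma cdd {V : Type} [NormedAddCommGroup V] [NormedSpace ℝ V] {g : ℝ → V} (hg : ContDiff ℝ (⊤ : ℕ∞) g) : Differentiable ℝ g :=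
  hg.differentiable (by simp)
lemma cd_deriv {V : Type} [NormedAddCommGroup V] [NormedSpace ℝ V] {g : ℝ → V} (hg : ContDiff ℝ (⊤ : ℕ∞) g) : ContDiff ℝ (⊤ : ℕ∞) (deriv g) := by
  have := hg.iterate_deriv 1
  simpa using this

lemma sh_cd {V : Type} [NormedAddCommGroup V] [NormedSpace ℝ V] {g : ℝ → V} (hg : ContDiff ℝ (⊤ : ℕ∞) g) (u : ℝ) :
    ContDiff ℝ (⊤ : ℕ∞) fun x : ℝ × ℝ => g (u + x.2) := hg.comp (contDiff_const.add contDiff_snd)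

lemma NN_cd {γ h ν : ℝ → R3} {κs κν κt : ℝ → ℝ} (H : FrenetSetup γ h ν κs κν κt) (u₀ w₀ : ℝ) : ContDiff ℝ (⊤ : ℕ∞) (NN γ ν u₀ w₀) :=
  (sh_cd H.smooth_γ u₀).add ((contDiff_const.add contDiff_fst).smul (sh_cd H.smooth_ν u₀))

end F2

section F3
open Topology Function Asymptotics

lemma lin_pu (w₀ : ℝ) : pu (fun x : ℝ × ℝ => w₀ + x.1) = fun _ => 1 := by
  funext x; rw [pu_add (by fun_prop) (by fun_prop), pu_const, pu_fst]; simp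
lemma lin_pw (w₀ : ℝ) : pw (fun x : ℝ × ℝ => w₀ + x.1) = fun _ => 0 := by
  funext x; rw [pw_add (by fun_prop) (by fun_prop), pw_const, pw_fst]; simp

variable {γ h ν : ℝ → R3} {κs κν κt : ℝ → ℝ}

lemma NN_pu (H : FrenetSetup γ h ν κs κν κt) (u₀ w₀ : ℝ) : pu (NN γ ν u₀ w₀) = fun x => ν (u₀ + x.2) := by
  funext x
  have d1 : Differentiable ℝ fun x : ℝ × ℝ => γ (u₀ + x.2) := (sh_cd H.smooth_γ u₀).differentiable (by simp)
  have d2 : Differentiable ℝ fun x : ℝ × ℝ => ν (u₀ + x.2) := (sh_cd H.smooth_ν u₀).differentiable (by simp)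
  have d3 : Differentiable ℝ fun x : ℝ × ℝ => w₀ + x.1 := by fun_prop
  have e := pu_add (g := fun x : ℝ × ℝ => (w₀ + x.1) • ν (u₀ + x.2)) d1 (d3.smul d2) x
  rw [pu_smul d3 d2, sh_pu (cdd H.smooth_γ), sh_pu (cdd H.smooth_ν), lin_pu] at e
  simp only [zero_add, smul_zero, add_zero, one_smul] at e
  exact e

/-- coefficient of the tangent vector -/
def cA (κν : ℝ → ℝ) (u₀ w₀ : ℝ) (x : ℝ × ℝ) : ℝ := 1 - (w₀ + x.1) * κν (u₀ + x.2)
def cB (κt : ℝ → ℝ) (u₀ w₀ : ℝ) (x : ℝ × ℝ) : ℝ := - ((w₀ + x.1) * κt (u₀ + x.2))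

lemma NN_pw (H : FrenetSetup γ h ν κs κν κt) (u₀ w₀ : ℝ) : pw (NN γ ν u₀ w₀) =
    fun x => cA κν u₀ w₀ x • deriv γ (u₀ + x.2) + cB κt u₀ w₀ x • h (u₀ + x.2) := by
  funext x
  have d1 : Differentiable ℝ fun x : ℝ × ℝ => γ (u₀ + x.2) := (sh_cd H.smooth_γ u₀).differentiable (by simp)
  have d2 : Differentiable ℝ fun x : ℝ × ℝ => ν (u₀ + x.2) := (sh_cd H.smooth_ν u₀).differentiable (by simp)
  have d3 : Differentiable ℝ fun x : ℝ × ℝ => w₀ + x.1 := by fun_prop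
  have e := pw_add (g := fun x : ℝ × ℝ => (w₀ + x.1) • ν (u₀ + x.2)) d1 (d3.smul d2) x
  rw [pw_smul d3 d2, sh_pw (cdd H.smooth_γ), sh_pw (cdd H.smooth_ν), lin_pw] at e
  refine Eq.trans e ?_
  simp only [H.frenet_ν, cA, cB]
  module

lemma cA_pw (H : FrenetSetup γ h ν κs κν κt) (u₀ w₀ : ℝ) (x) : pw (cA κν u₀ w₀) x = - ((w₀ + x.1) * deriv κν (u₀ + x.2)) := by
  have d2 : Differentiable ℝ fun x : ℝ × ℝ => κν (u₀ + x.2) := (sh_cd H.smooth_κν u₀).differentiable (by simp)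
  have d3 : Differentiable ℝ fun x : ℝ × ℝ => w₀ + x.1 := by fun_prop
  have e : cA κν u₀ w₀ = fun x => 1 + (-1) * ((w₀ + x.1) * κν (u₀ + x.2)) := by funext x; unfold cA; ring
  have d4 : Differentiable ℝ fun x : ℝ × ℝ => (w₀ + x.1) * κν (u₀ + x.2) := d3.mul d2
  rw [e, pw_add (by fun_prop) (by fun_prop), pw_mul (by fun_prop) d4, pw_mul d3 d2, sh_pw (cdd H.smooth_κν), lin_pw, pw_const, pw_const]
  ring
lemma cB_pw (H : FrenetSetup γ h ν κs κν κt) (u₀ w₀ : ℝ) (x) : pw (cB κt u₀ w₀) x = - ((w₀ + x.1) * deriv κt (u₀ + x.2)) := by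
  have d2 : Differentiable ℝ fun x : ℝ × ℝ => κt (u₀ + x.2) := (sh_cd H.smooth_κt u₀).differentiable (by simp)
  have d3 : Differentiable ℝ fun x : ℝ × ℝ => w₀ + x.1 := by fun_prop
  have e : cB κt u₀ w₀ = fun x => (-1) * ((w₀ + x.1) * κt (u₀ + x.2)) := by funext x; unfold cB; ring
  have d4 : Differentiable ℝ fun x : ℝ × ℝ => (w₀ + x.1) * κt (u₀ + x.2) := d3.mul d2
  rw [e, pw_mul (by fun_prop) d4, pw_mul d3 d2, sh_pw (cdd H.smooth_κt), lin_pw, pw_const]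
  ring

lemma NN_pwpw (H : FrenetSetup γ h ν κs κν κt) (u₀ w₀ : ℝ) (x) : pw (pw (NN γ ν u₀ w₀)) x =
    (pw (cA κν u₀ w₀) x - cB κt u₀ w₀ x * κs (u₀ + x.2)) • deriv γ (u₀ + x.2)
    + (pw (cB κt u₀ w₀) x + cA κν u₀ w₀ x * κs (u₀ + x.2)) • h (u₀ + x.2)
    + (cA κν u₀ w₀ x * κν (u₀ + x.2) + cB κt u₀ w₀ x * κt (u₀ + x.2)) • ν (u₀ + x.2) := by
  have d1 : Differentiable ℝ fun x : ℝ × ℝ => deriv γ (u₀ + x.2) := (sh_cd (cd_deriv H.smooth_γ) u₀).differentiable (by simp)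
  have d2 : Differentiable ℝ fun x : ℝ × ℝ => h (u₀ + x.2) := (sh_cd H.smooth_h u₀).differentiable (by simp)
  have d3 : Differentiable ℝ fun x : ℝ × ℝ => w₀ + x.1 := by fun_prop
  have k1 : Differentiable ℝ fun x : ℝ × ℝ => κν (u₀ + x.2) := (sh_cd H.smooth_κν u₀).differentiable (by simp)
  have k2 : Differentiable ℝ fun x : ℝ × ℝ => κt (u₀ + x.2) := (sh_cd H.smooth_κt u₀).differentiable (by simp)
  have dA : Differentiable ℝ (cA κν u₀ w₀) := (differentiable_const _).sub (d3.mul k1)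
  have dB : Differentiable ℝ (cB κt u₀ w₀) := (d3.mul k2).neg
  have e := pw_add (f := fun x => cA κν u₀ w₀ x • deriv γ (u₀ + x.2)) (g := fun x => cB κt u₀ w₀ x • h (u₀ + x.2))
    (dA.smul d1) (dB.smul d2) x
  rw [pw_smul dA d1, pw_smul dB d2, sh_pw (cdd (cd_deriv H.smooth_γ)), sh_pw (cdd H.smooth_h)] at e
  rw [NN_pw H]
  refine Eq.trans e ?_
  simp only [H.frenet_t, H.frenet_h]
  module

lemma NN_pwpu (H : FrenetSetup γ h ν κs κν κt) (u₀ w₀ : ℝ) (x) : pw (pu (NN γ ν u₀ w₀)) x =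
    (-κν (u₀ + x.2)) • deriv γ (u₀ + x.2) - κt (u₀ + x.2) • h (u₀ + x.2) := by
  rw [NN_pu H, sh_pw (cdd H.smooth_ν)]
  exact H.frenet_ν _

lemma frame_det (H : FrenetSetup γ h ν κs κν κt) (u : ℝ) : det3 (ν u) (deriv γ u) (h u) ^ 2 = 1 := by
  have e : det3 (ν u) (deriv γ u) (h u) ^ 2 =
      dot3 (ν u) (ν u) * (dot3 (deriv γ u) (deriv γ u) * dot3 (h u) (h u) - dot3 (deriv γ u) (h u) ^ 2)
      - dot3 (deriv γ u) (ν u) * (dot3 (deriv γ u) (ν u) * dot3 (h u) (h u) - dot3 (deriv γ u) (h u) * dot3 (h u) (ν u))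
      + dot3 (h u) (ν u) * (dot3 (deriv γ u) (ν u) * dot3 (deriv γ u) (h u) - dot3 (deriv γ u) (deriv γ u) * dot3 (h u) (ν u)) := by
    simp only [det3_eq, dot3]; ring
  rw [e, H.unit_ν, H.unit_t, H.unit_h, H.orth_th, H.orth_tν, H.orth_hν]
  norm_num

lemma NN_good (H : FrenetSetup γ h ν κs κν κt) {u₀ w₀ : ℝ} (h1 : κt u₀ = 0) (h2 : w₀ * κν u₀ = 1) : Good (NN γ ν u₀ w₀) := by
  refine ⟨(NN_cd H u₀ w₀).of_le (by exact WithTop.coe_le_coe.2 (le_top : (4 : ℕ∞) ≤ ⊤)), ?_, ?_⟩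
  · rw [NN_pw H]; simp [cA, cB, h1, h2]
  · rw [NN_pu H]
    intro h0
    have := H.unit_ν u₀
    have h0 : ν u₀ = 0 := by simpa using h0
    rw [h0] at this
    simp [dot3] at this

lemma NN_crit (H : FrenetSetup γ h ν κs κν κt) {u₀ w₀ : ℝ} (h1 : κt u₀ = 0) (h2 : w₀ * κν u₀ = 1) :
    Crit (NN γ ν u₀ w₀) ↔ deriv κt u₀ = 0 := by
  unfold Crit
  rw [NN_pwpu H, NN_pwpw H, cA_pw H, cB_pw H, NN_pu H]
  have hd := frame_det H u₀
  have e0 : u₀ + (0 : ℝ × ℝ).2 = u₀ := by simp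
  have eA : cA κν u₀ w₀ 0 = 0 := by simp [cA, h2]
  have eB : cB κt u₀ w₀ 0 = 0 := by simp [cB, h1]
  simp only [e0, eA, eB, h1]
  have hne : det3 (ν u₀) (deriv γ u₀) (h u₀) ≠ 0 := by intro h0; rw [h0] at hd; norm_num at hd
  have : det3 (ν u₀) ((-κν u₀) • deriv γ u₀ - (0 : ℝ) • h u₀) ((-((w₀ + (0 : ℝ × ℝ).1) * deriv κν u₀) - 0 * κs u₀) • deriv γ u₀ +
      (-((w₀ + (0 : ℝ × ℝ).1) * deriv κt u₀) + 0 * κs u₀) • h u₀ + (0 * κν u₀ + 0 * 0) • ν u₀) =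
      (w₀ * κν u₀) * deriv κt u₀ * det3 (ν u₀) (deriv γ u₀) (h u₀) := by
    simp only [det3_eq, Pi.add_apply, Pi.sub_apply, Pi.smul_apply, smul_eq_mul, Prod.fst_zero]
    ring
  rw [this, h2, one_mul, mul_eq_zero, or_iff_left hne]

lemma NN_flat (H : FrenetSetup γ h ν κs κν κt) {u₀ w₀ : ℝ} (h1 : κt u₀ = 0) (h2 : w₀ * κν u₀ = 1) :
    Flat (NN γ ν u₀ w₀) ↔ (deriv κν u₀ = 0 ∧ deriv κt u₀ = 0) := by
  unfold Flat
  rw [NN_pwpw H, cA_pw H, cB_pw H, NN_pu H]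
  have e0 : u₀ + (0 : ℝ × ℝ).2 = u₀ := by simp
  have eA : cA κν u₀ w₀ 0 = 0 := by simp [cA, h2]
  have eB : cB κt u₀ w₀ 0 = 0 := by simp [cB, h1]
  have w0 : w₀ ≠ 0 := left_ne_zero_of_mul (h2 ▸ one_ne_zero)
  simp only [e0, eA, eB, h1, Prod.fst_zero, add_zero, zero_mul, sub_zero, zero_smul]
  constructor
  · rintro ⟨r, hr⟩
    have i0 := congrFun hr 0
    have i1 := congrFun hr 1
    have i2 := congrFun hr 2
    have t1 := H.unit_t u₀
    have t2 := H.unit_h u₀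
    have t3 := H.orth_th u₀
    have t4 := H.orth_tν u₀
    have t5 := H.orth_hν u₀
    simp only [Pi.add_apply, Pi.smul_apply, smul_eq_mul] at i0 i1 i2
    simp only [dot3] at t1 t2 t3 t4 t5
    constructor
    · refine (mul_eq_zero.1 (?_ : w₀ * deriv κν u₀ = 0)).resolve_left w0
      linear_combination (-(deriv γ u₀ 0)) * i0 - (deriv γ u₀ 1) * i1 - (deriv γ u₀ 2) * i2 - r * t4
        - w₀ * deriv κν u₀ * t1 - w₀ * deriv κt u₀ * t3
    · refine (mul_eq_zero.1 (?_ : w₀ * deriv κt u₀ = 0)).resolve_left w0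
      linear_combination (-(h u₀ 0)) * i0 - (h u₀ 1) * i1 - (h u₀ 2) * i2 - r * t5
        - w₀ * deriv κν u₀ * t3 - w₀ * deriv κt u₀ * t2
  · rintro ⟨a, b⟩
    exact ⟨0, by simp [a, b]⟩

lemma NN_lam (H : FrenetSetup γ h ν κs κν κt) (u₀ w₀ : ℝ) (x) : lam (NN γ ν u₀ w₀) x =
    det3 (ν (u₀ + x.2)) (deriv γ (u₀ + x.2)) (h (u₀ + x.2)) *
    (cA κν u₀ w₀ x * pw (cB κt u₀ w₀) x - cB κt u₀ w₀ x * pw (cA κν u₀ w₀) x + κs (u₀ + x.2) * (cA κν u₀ w₀ x ^ 2 + cB κt u₀ w₀ x ^ 2)) := by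
  unfold lam
  rw [NN_pwpw H, NN_pu H, NN_pw H]
  simp only [det3_eq, Pi.add_apply, Pi.smul_apply, smul_eq_mul]
  ring

lemma NN_quad (H : FrenetSetup γ h ν κs κν κt) {u₀ w₀ : ℝ} (h1 : κt u₀ = 0) (h2 : w₀ * κν u₀ = 1)
    (h3 : deriv κt u₀ = 0) : ∃ A B C, Quad (NN γ ν u₀ w₀) A B C ∧
      B ^ 2 - 4 * A * C = deriv (deriv κt) u₀ * (2 * κs u₀ * deriv κν u₀ + deriv (deriv κt) u₀) := by
  set k := κν u₀ with hk
  set n := deriv κν u₀ with hn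
  set t2 := deriv (deriv κt) u₀ with ht2
  set s := κs u₀ with hs
  set E : ℝ × ℝ → ℝ := fun x => det3 (ν (u₀ + x.2)) (deriv γ (u₀ + x.2)) (h (u₀ + x.2)) with hE
  have hE0 : E 0 ^ 2 = 1 := by
    have := frame_det H u₀
    simpa [hE] using this
  set A0 := s * k ^ 2
  set B0 := t2 + 2 * s * n
  set C0 := w₀ ^ 2 * n * t2 / 2 + s * (w₀ * n) ^ 2
  refine ⟨E 0 * A0, E 0 * B0, E 0 * C0, ?_, ?_⟩
  swap
  · have : (E 0 * B0) ^ 2 - 4 * (E 0 * A0) * (E 0 * C0) = E 0 ^ 2 * (B0 ^ 2 - 4 * A0 * C0) := by ring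
    rw [this, hE0]
    simp only [A0, B0, C0]
    linear_combination (-(w₀ * k) - 1) * 2 * s * (n * t2 + 2 * s * n ^ 2) * h2
  have ct : ContDiff ℝ (⊤ : ℕ∞) (fun u => det3 (ν u) (deriv γ u) (h u)) := by
    simp only [det3_eq]
    have a : ∀ i, ContDiff ℝ (⊤ : ℕ∞) (fun u => ν u i) := contDiff_pi.1 H.smooth_ν
    have b : ∀ i, ContDiff ℝ (⊤ : ℕ∞) (fun u => deriv γ u i) := contDiff_pi.1 (cd_deriv H.smooth_γ)
    have c : ∀ i, ContDiff ℝ (⊤ : ℕ∞) (fun u => h u i) := contDiff_pi.1 H.smooth_h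
    have HH : ∀ i j l : Fin 3, ContDiff ℝ (⊤ : ℕ∞) fun u => ν u i * deriv γ u j * h u l :=
      fun i j l => ((a i).mul (b j)).mul (c l)
    exact (((((HH 0 1 2).sub (HH 0 2 1)).sub (HH 1 0 2)).add (HH 1 2 0)).add (HH 2 0 1)).sub (HH 2 1 0)
  have oE : OO 1 fun x => E x - E 0 := (sh_O1 ct u₀).eqv fun x => by simp [hE]
  -- one-variable expansions
  have ok1 : OO 1 fun x : ℝ × ℝ => κν (u₀ + x.2) - k := sh_O1 H.smooth_κν u₀
  have ok2 : OO 2 fun x : ℝ × ℝ => κν (u₀ + x.2) - (k + n * x.2) := sh_O2 H.smooth_κν u₀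
  have on1 : OO 1 fun x : ℝ × ℝ => deriv κν (u₀ + x.2) - n := sh_O1 (cd_deriv H.smooth_κν) u₀
  have os1 : OO 1 fun x : ℝ × ℝ => κs (u₀ + x.2) - s := sh_O1 H.smooth_κs u₀
  have ot3 : OO 3 fun x : ℝ × ℝ => κt (u₀ + x.2) - t2 / 2 * x.2 ^ 2 := sh_O3 H.smooth_κt u₀ h1 h3
  have ot2 : OO 2 fun x : ℝ × ℝ => deriv κt (u₀ + x.2) - t2 * x.2 := by
    have := sh_O2 (cd_deriv H.smooth_κt) u₀
    rw [h3] at this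
    exact this.eqv fun x => by ring
  have x1 := OO.fst
  have x2 := OO.snd
  have oW : OO 0 fun x : ℝ × ℝ => w₀ + x.1 := OO.of_cont (by fun_prop)
  -- A
  set a := cA κν u₀ w₀ with ha
  set b := cB κt u₀ w₀ with hb
  set l : ℝ × ℝ → ℝ := fun x => -(k * x.1 + w₀ * n * x.2) with hl
  have ol : OO 1 l := OO.one (by fun_prop) (by simp [hl])
  have oa2 : OO 2 fun x => a x - l x := by
    have p1 : OO 2 _ := (OO.const w₀).mul ok2
    have p2 : OO 2 _ := x1.mul ok1
    refine (p1.add p2).neg.eqv fun x => ?_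
    simp only [ha, hl, cA]
    linear_combination h2
  have oa1 : OO 1 a := ((oa2.mono (by norm_num)).add ol).eqv fun x => by ring
  have osq : OO 2 fun x : ℝ × ℝ => t2 / 2 * x.2 ^ 2 := by
    have : OO 2 _ := (OO.const (t2 / 2)).mul (x2.mul x2)
    exact this.eqv fun x => by ring
  have okt : OO 2 fun x : ℝ × ℝ => κt (u₀ + x.2) := ((ot3.mono (by norm_num)).add osq).eqv fun x => by ring
  have okt' : OO 1 fun x : ℝ × ℝ => deriv κt (u₀ + x.2) :=
    ((ot2.mono (by norm_num)).add ((OO.const t2).mul x2)).eqv fun x => by ring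
  have ob2 : OO 2 b := (oW.mul okt).neg
  have ob3 : OO 3 fun x => b x + w₀ * (t2 / 2 * x.2 ^ 2) := by
    have p1 : OO 3 _ := (OO.const w₀).mul ot3
    have p2 : OO 3 _ := x1.mul okt
    exact (p1.add p2).neg.eqv fun x => by simp only [hb, cB]; ring
  have obu1 : OO 1 fun x => (w₀ + x.1) * deriv κt (u₀ + x.2) := oW.mul' okt'
  have obu2 : OO 2 fun x => (w₀ + x.1) * deriv κt (u₀ + x.2) - w₀ * (t2 * x.2) := by
    have p1 : OO 2 _ := (OO.const w₀).mul ot2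
    have p2 : OO 2 _ := x1.mul okt'
    exact (p1.add p2).eqv fun x => by ring
  have oau1 : OO 1 fun x => (w₀ + x.1) * deriv κν (u₀ + x.2) - w₀ * n := by
    have p1 : OO 1 _ := (OO.const w₀).mul on1
    have p2 : OO 1 _ := x1.mul (OO.of_cont ((cd_deriv H.smooth_κν).continuous.comp (continuous_const.add continuous_snd)) : OO 0 fun x : ℝ × ℝ => deriv κν (u₀ + x.2))
    exact (p1.add p2).eqv fun x => by ring
  -- products
  have q1 : OO 3 _ := oa2.mul obu1
  have q2 : OO 3 _ := ol.mul obu2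
  have q3 : OO 3 _ := ob2.mul oau1
  have q4 : OO 3 _ := ob3.mul (OO.const (w₀ * n))
  have q5 : OO 3 _ := os1.mul (oa1.mul oa1)
  have q6 : OO 3 _ := (OO.const s).mul (oa2.mul (oa1.add ol))
  have oks : OO 0 fun x : ℝ × ℝ => κs (u₀ + x.2) := OO.of_cont (H.smooth_κs.continuous.comp (continuous_const.add continuous_snd))
  have q7 : OO 3 _ := (oks.mul (ob2.mul ob2)).mono (by norm_num)
  set Lm : ℝ × ℝ → ℝ := fun x => a x * pw b x - b x * pw a x + κs (u₀ + x.2) * (a x ^ 2 + b x ^ 2) with hLm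
  have oL : OO 3 fun x => Lm x - (A0 * x.1 ^ 2 + B0 * (x.1 * x.2) + C0 * x.2 ^ 2) := by
    refine (((((((q1.neg.sub q2).add q3).add q4).add q5).add q6).add q7)).eqv fun x => ?_
    simp only [hLm, hb, ha, cA_pw H, cB_pw H]
    rw [← ha, ← hb]
    simp only [hl, A0, B0, C0]
    linear_combination (- t2 - 2 * s * n) * x.1 * x.2 * h2
  have oq : OO 2 fun x : ℝ × ℝ => A0 * x.1 ^ 2 + B0 * (x.1 * x.2) + C0 * x.2 ^ 2 := by
    have p1 : OO 2 _ := (OO.const A0).mul (x1.mul x1)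
    have p2 : OO 2 _ := (OO.const B0).mul (x1.mul x2)
    have p3 : OO 2 _ := (OO.const C0).mul (x2.mul x2)
    exact ((p1.add p2).add p3).eqv fun x => by ring
  have r1 : OO 3 _ := oE.mul oq
  have cE : Continuous E := (sh_cd ct u₀).continuous
  have r2 : OO 3 _ := (OO.of_cont cE).mul oL
  refine (r1.add r2).eqv fun x => ?_
  rw [NN_lam H]
  simp only [← ha, ← hb, hLm, hE]
  ring

lemma NN_aeq (H : FrenetSetup γ h ν κs κν κt) (u₀ w₀ : ℝ) (G : ℝ × ℝ → R3) :
    AEquivAt (NR γ ν) (u₀, w₀) G 0 ↔ AEquivAt (NN γ ν u₀ w₀) 0 G 0 := by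
  have cN : ContDiff ℝ (⊤ : ℕ∞) (NR γ ν) :=
    (H.smooth_γ.comp contDiff_fst).add (contDiff_snd.smul (H.smooth_ν.comp contDiff_fst))
  have h1 : AEquivAt (NR γ ν) (u₀, w₀) (NN γ ν u₀ w₀) 0 := by
    refine aeq_of (ψ := fun x => (x.2 - w₀, x.1 - u₀)) (Φ := fun y => y)
      (ld_of_inv (g := fun x => (u₀ + x.2, w₀ + x.1)) (by fun_prop) (by fun_prop) ?_ ?_ _) (ld_id _) ?_ (by simp)
    · intro x; simp
    · intro x; simp
    · refine Eventually.of_forall fun x => ?_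
      simp [NN]
  exact ⟨fun h2 => aeq_trans (aeq_symm cN.continuous.continuousAt h1) h2, fun h2 => aeq_trans h1 h2⟩

end F3

section G1
open Topology Function

abbrev Sm {E F : Type} [NormedAddCommGroup E] [NormedSpace ℝ E] [NormedAddCommGroup F] [NormedSpace ℝ F]
    (f : E → F) : Prop := ContDiff ℝ (⊤ : ℕ∞) f

lemma ker_tr {F G : ℝ × ℝ → R3} (hF : Differentiable ℝ F) (h : AEquivAt F 0 G 0)
    (hk : ∃ v, v ≠ 0 ∧ fderiv ℝ F 0 v = 0) : ∃ v, v ≠ 0 ∧ fderiv ℝ G 0 v = 0 := by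
  obtain ⟨φ, Φ, h1, h2, h3, h4⟩ := h
  obtain ⟨v, hv, hkv⟩ := hk
  obtain ⟨S, hS⟩ := ld_fd h1
  have hinj : Injective (fderiv ℝ φ 0).toLinearMap := LeftInverse.injective (g := S) hS
  obtain ⟨w, hw⟩ := (LinearMap.injective_iff_surjective.1 hinj) v
  have hw' : fderiv ℝ φ 0 w = v := hw
  refine ⟨w, ?_, ?_⟩
  · rintro rfl; apply hv; rw [← hw', map_zero]
  · have e : fderiv ℝ G 0 = fderiv ℝ (Φ ∘ (F ∘ φ)) 0 := (Filter.EventuallyEq.fderiv_eq h4).symm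
    have dφ : DifferentiableAt ℝ φ 0 := h1.1.differentiableAt (by simp)
    have dΦ : DifferentiableAt ℝ Φ ((F ∘ φ) 0) := by
      simp only [comp, h2]; exact h3.1.differentiableAt (by simp)
    rw [e, fderiv_comp _ dΦ ((hF _).comp _ dφ), fderiv_comp _ (hF _) dφ]
    simp only [ContinuousLinearMap.comp_apply, hw', h2, hkv, map_zero]

lemma tend0 {f : ℝ × ℝ → ℝ × ℝ} (hf : Continuous f) (h0 : f 0 = 0) : Tendsto f (𝓝 0) (𝓝 0) := by
  have := hf.tendsto 0
  rwa [h0] at this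

lemma had2 {f : ℝ × ℝ → ℝ} (hf : Sm f) : ∃ M : ℝ × ℝ → ℝ, Sm M ∧ ∀ᶠ x in 𝓝 (0 : ℝ × ℝ), f x = f (x.1, 0) + x.2 * M x := by
  obtain ⟨g, h1, h2, h3⟩ := glob f 0 (Eventually.of_forall fun x => hf.contDiffAt)
  obtain ⟨M, m1, m2⟩ := hadamard h1 h2
  refine ⟨M, m1, ?_⟩
  have t : Tendsto (fun x : ℝ × ℝ => (x.1, (0 : ℝ))) (𝓝 0) (𝓝 0) := tend0 (by fun_prop) rfl
  filter_upwards [h3, t.eventually h3] with x a b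
  rw [← a, ← b]
  exact m2 x.1 x.2

lemma had1 {f : ℝ × ℝ → ℝ} (hf : Sm f) : ∃ M : ℝ × ℝ → ℝ, Sm M ∧ ∀ᶠ x in 𝓝 (0 : ℝ × ℝ), f x = f (0, x.2) + x.1 * M x := by
  have sw : Sm (fun x : ℝ × ℝ => (x.2, x.1)) := contDiff_snd.prodMk contDiff_fst
  obtain ⟨M, m1, m2⟩ := had2 (f := fun x => f (x.2, x.1)) (hf.comp sw)
  refine ⟨fun x => M (x.2, x.1), m1.comp sw, ?_⟩
  have t : Tendsto (fun x : ℝ × ℝ => (x.2, x.1)) (𝓝 0) (𝓝 0) := tend0 (by fun_prop) rfl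
  filter_upwards [t.eventually m2] with x a
  exact a

lemma whit {f : ℝ × ℝ → ℝ} (hf : Sm f) (hev : ∀ z v, f (z, -v) = f (z, v)) :
    ∃ a : ℝ × ℝ → ℝ, Sm a ∧ ∀ᶠ x in 𝓝 (0 : ℝ × ℝ), f x = a (x.1, x.2 ^ 2) := by
  obtain ⟨g, h1, h2, h3⟩ := glob f 0 (Eventually.of_forall fun x => hf.contDiffAt)
  have sw : Sm (fun x : ℝ × ℝ => (x.1, -x.2)) := contDiff_fst.prodMk contDiff_snd.neg
  have hc : HasCompactSupport (fun x : ℝ × ℝ => g (x.1, -x.2)) :=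
    h2.comp_homeomorph ((Homeomorph.refl ℝ).prodCongr (Homeomorph.neg ℝ))
  obtain ⟨a, a1, a2⟩ := whitney (f := fun x => (1 / 2 : ℝ) * (g x + g (x.1, -x.2)))
    (contDiff_const.mul (h1.add (h1.comp sw))) ((h2.add hc).mul_left) (by intro z v; simp [add_comm])
  refine ⟨a, a1, ?_⟩
  have t : Tendsto (fun x : ℝ × ℝ => (x.1, -x.2)) (𝓝 0) (𝓝 0) := tend0 (by fun_prop) (by simp)
  filter_upwards [h3, t.eventually h3] with x b c
  have := a2 x.1 x.2
  simp only [Prod.mk.eta, b, c] at this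
  rw [hev, Prod.mk.eta] at this
  rw [← this]; ring

lemma sm_sqrt {f : ℝ × ℝ → ℝ} (hf : Sm f) (h0 : f 0 ≠ 0) : ∃ (r : ℝ × ℝ → ℝ) (s : ℝ), Sm r ∧ s * s = 1 ∧ r 0 ≠ 0 ∧
    ∀ᶠ x in 𝓝 (0 : ℝ × ℝ), f x = s * (r x * r x) := by
  obtain ⟨s, hs, hp⟩ : ∃ s : ℝ, s * s = 1 ∧ 0 < s * f 0 := by
    rcases lt_or_gt_of_ne h0 with h | h
    · exact ⟨-1, by norm_num, by linarith⟩
    · exact ⟨1, by norm_num, by linarith⟩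
  have hsf : Sm (fun x => s * f x) := contDiff_const.mul hf
  have hev : ∀ᶠ x in 𝓝 (0 : ℝ × ℝ), 0 < s * f x := hsf.continuous.continuousAt.eventually (lt_mem_nhds hp)
  obtain ⟨r, h1, -, h3⟩ := glob (fun x => Real.sqrt (s * f x)) 0 (by
    filter_upwards [hev] with x hx
    exact hsf.contDiffAt.sqrt hx.ne')
  refine ⟨r, s, h1, hs, ?_, ?_⟩
  · rw [h3.eq_of_nhds]; exact (Real.sqrt_pos.2 hp).ne'
  · filter_upwards [hev, h3] with x a b
    rw [b, Real.mul_self_sqrt a.le, ← mul_assoc, hs, one_mul]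

lemma hfd_pair {a b : ℝ × ℝ → ℝ} (ha : Differentiable ℝ a) (hb : Differentiable ℝ b) (p) :
    HasFDerivAt (fun x => (a x, b x)) ((fderiv ℝ a p).prod (fderiv ℝ b p)) p :=
  (ha p).hasFDerivAt.prodMk (hb p).hasFDerivAt

lemma jinj {a b : ℝ × ℝ → ℝ} {p} (hJ : pu a p * pw b p - pw a p * pu b p ≠ 0) (v : ℝ × ℝ)
    (hv : ((fderiv ℝ a p).prod (fderiv ℝ b p)) v = 0) : v = 0 := by
  have e1 : fderiv ℝ a p v = 0 := congrArg Prod.fst hv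
  have e2 : fderiv ℝ b p v = 0 := congrArg Prod.snd hv
  rw [fd_pair] at e1 e2
  simp only [smul_eq_mul] at e1 e2
  ext
  · have : v.1 * (pu a p * pw b p - pw a p * pu b p) = 0 := by linear_combination pw b p * e1 - pw a p * e2
    exact (mul_eq_zero.1 this).resolve_right hJ
  · have : v.2 * (pu a p * pw b p - pw a p * pu b p) = 0 := by linear_combination pu a p * e2 - pu b p * e1
    exact (mul_eq_zero.1 this).resolve_right hJ

/-- local inverse in the plane -/
lemma inv2 {a b : ℝ × ℝ → ℝ} (ha : Sm a) (hb : Sm b) (a0 : a 0 = 0) (b0 : b 0 = 0)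
    (hJ : pu a 0 * pw b 0 - pw a 0 * pu b 0 ≠ 0) :
    IsLocalDiffeoAt (fun x => (a x, b x)) 0 ∧ ∃ g : ℝ × ℝ → ℝ × ℝ, Sm g ∧ g 0 = 0 ∧ (∀ᶠ x in 𝓝 (0 : ℝ × ℝ), g (a x, b x) = x) ∧
      (∀ᶠ y in 𝓝 (0 : ℝ × ℝ), (a (g y), b (g y)) = y) := by
  have da : Differentiable ℝ a := ha.differentiable (by simp)
  have db : Differentiable ℝ b := hb.differentiable (by simp)
  refine ⟨ld_mk (ha.prodMk hb) (hfd_pair da db 0) (jinj hJ), ?_⟩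
  obtain ⟨g, g1, g2, g3, g4⟩ := ift (ha.prodMk hb) (hfd_pair da db 0) (jinj hJ)
  have e : ((a 0, b 0) : ℝ × ℝ) = 0 := by rw [a0, b0]; rfl
  rw [e] at g2 g4
  exact ⟨g, g1, g2, g3, g4⟩

lemma ld3_diag {r : Fin 3 → R3 → ℝ} (hr : ∀ i, Sm (r i)) (h0 : ∀ i, r i 0 ≠ 0) :
    IsLocalDiffeoAt (fun y : R3 => (fun i => y i * r i y : R3)) 0 := by
  have hs : Sm (fun y : R3 => (fun i => y i * r i y : R3)) :=
    contDiff_pi.2 fun i => (contDiff_apply ℝ ℝ i).mul (hr i)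
  refine ld_mk hs (f' := ContinuousLinearMap.pi fun i => (r i 0) • ContinuousLinearMap.proj i) ?_ ?_
  · rw [hasFDerivAt_pi]
    intro i
    have h1 : HasFDerivAt (fun y : R3 => y i) (ContinuousLinearMap.proj (R := ℝ) (φ := fun _ : Fin 3 => ℝ) i) 0 := hasFDerivAt_apply i 0
    have h2 := ((hr i).differentiable (by simp) 0).hasFDerivAt
    have h3 : HasFDerivAt (fun y : R3 => y i * r i y) _ 0 := h1.mul h2
    refine h3.congr_fderiv ?_
    simp
  · intro v hv
    funext i
    have := congrFun hv i
    simp at this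
    exact this.resolve_left (h0 i)

lemma aeq_ev {f g : ℝ × ℝ → R3} (h : f =ᶠ[𝓝 0] g) : AEquivAt f 0 g 0 :=
  aeq_of (ψ := fun x => x) (Φ := fun x => x) (ld_id 0) (ld_id _) h rfl

end G1

section G2
open Topology Function

def VV3 (X Y : ℝ × ℝ → ℝ) (x : ℝ × ℝ) : R3 := ![x.1, X x, Y x]

lemma sm4 {E F : Type} [NormedAddCommGroup E] [NormedSpace ℝ E] [NormedAddCommGroup F] [NormedSpace ℝ F]
    {f : E → F} (h : Sm f) : ContDiff ℝ 4 f := h.of_le (by exact WithTop.coe_le_coe.2 (le_top : (4 : ℕ∞) ≤ ⊤))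

lemma smd {E F : Type} [NormedAddCommGroup E] [NormedSpace ℝ E] [NormedAddCommGroup F] [NormedSpace ℝ F]
    {f : E → F} (h : Sm f) : Differentiable ℝ f := h.differentiable (by simp)

lemma sm_pw {V : Type} [NormedAddCommGroup V] [NormedSpace ℝ V] {f : ℝ × ℝ → V} (h : Sm f) : Sm (pw f) := pw_cd h (by simp)
lemma sm_pu {V : Type} [NormedAddCommGroup V] [NormedSpace ℝ V] {f : ℝ × ℝ → V} (h : Sm f) : Sm (pu f) := pu_cd h (by simp)

lemma vv_pw {X Y : ℝ × ℝ → ℝ} (hX : Sm X) (hY : Sm Y) : pw (VV3 X Y) = fun x => ![0, pw X x, pw Y x] := by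
  have := pw_vec (f := fun x : ℝ × ℝ => x.1) (by fun_prop) (smd hX) (smd hY)
  rw [pw_fst] at this; exact this
lemma vv_pu {X Y : ℝ × ℝ → ℝ} (hX : Sm X) (hY : Sm Y) : pu (VV3 X Y) = fun x => ![1, pu X x, pu Y x] := by
  have := pu_vec (f := fun x : ℝ × ℝ => x.1) (by fun_prop) (smd hX) (smd hY)
  rw [pu_fst] at this; exact this
lemma vv_sm {X Y : ℝ × ℝ → ℝ} (hX : Sm X) (hY : Sm Y) : Sm (VV3 X Y) := cd_vec contDiff_fst hX hY

lemma vv_ker {X Y : ℝ × ℝ → ℝ} (hX : Sm X) (hY : Sm Y) (h : ∃ v, v ≠ 0 ∧ fderiv ℝ (VV3 X Y) 0 v = 0) :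
    pw X 0 = 0 ∧ pw Y 0 = 0 := by
  obtain ⟨v, hv, h⟩ := h
  rw [fd_pair, vv_pw hX hY, vv_pu hX hY] at h
  have a := congrFun h 0
  have b := congrFun h 1
  have c := congrFun h 2
  simp at a b c
  rw [a] at b c
  have : v.2 ≠ 0 := fun h2 => hv (Prod.ext a h2)
  simp [this] at b c
  exact ⟨b, c⟩

lemma vv_good {X Y : ℝ × ℝ → ℝ} (hX : Sm X) (hY : Sm Y) (h : ∃ v, v ≠ 0 ∧ fderiv ℝ (VV3 X Y) 0 v = 0) : Good (VV3 X Y) := by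
  obtain ⟨a, b⟩ := vv_ker hX hY h
  refine ⟨sm4 (vv_sm hX hY), ?_, ?_⟩
  · rw [vv_pw hX hY]; funext i; fin_cases i <;> simp [a, b]
  · rw [vv_pu hX hY]; intro h; simpa using congrFun h 0

lemma good_ker {F : ℝ × ℝ → R3} (h : Good F) : ∃ v, v ≠ 0 ∧ fderiv ℝ F 0 v = 0 := ⟨(0, 1), by simp, h.pw0⟩

lemma step1 {F : ℝ × ℝ → R3} (hF : Sm F) (hg : Good F) : ∃ X Y, Sm X ∧ Sm Y ∧ AEquivAt F 0 (VV3 X Y) 0 := by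
  obtain ⟨i, hi⟩ : ∃ i, pu F 0 i ≠ 0 := by
    by_contra hc; push Not at hc; exact hg.pu0 (funext hc)
  have hcomp : ∀ j, Sm fun x => F x j := fun j => contDiff_pi.1 hF j
  have hpu : ∀ x v, fderiv ℝ (fun x => F x i - F 0 i) x v = fderiv ℝ F x v i := by
    intro x v
    rw [fderiv_sub_const]
    have := fderiv_pi (𝕜 := ℝ) (φ := fun j x => F x j) (x := x) (fun j => smd (hcomp j) x)
    have e : (fun x => fun j => F x j) = F := rfl
    rw [e] at this
    rw [this]; rfl
  have s1 : Sm fun x => F x i - F 0 i := (hcomp i).sub contDiff_const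
  have e1 : pu (fun x => F x i - F 0 i) 0 = pu F 0 i := hpu _ _
  have e2 : pw (fun x => F x i - F 0 i) 0 = 0 := by
    have : pw (fun x => F x i - F 0 i) 0 = pw F 0 i := hpu _ _
    rw [this, hg.pw0]; rfl
  obtain ⟨hl, g, g1, g2, g3, g4⟩ := inv2 (a := fun x => F x i - F 0 i) (b := fun x => x.2) s1 contDiff_snd (by simp) rfl
    (by rw [e1, e2, pw_snd]; simpa using hi)
  let σ := Equiv.swap (0 : Fin 3) i
  let G : ℝ × ℝ → R3 := fun x j => F x (σ j) - F 0 (σ j)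
  have hG : ∀ j, Sm fun x => G x j := fun j => (hcomp _).sub contDiff_const
  refine ⟨fun y => G (g y) 1, fun y => G (g y) 2, (hG 1).comp g1, (hG 2).comp g1, ?_⟩
  refine aeq_of hl (Φ := fun y j => y (σ j) - F 0 (σ j)) ?_ ?_ ?_
  · refine ld_of_inv (g := fun y j => y (σ j) + F 0 j) ?_ ?_ ?_ ?_ _
    · exact contDiff_pi.2 fun j => (contDiff_apply ℝ ℝ _).sub contDiff_const
    · exact contDiff_pi.2 fun j => (contDiff_apply ℝ ℝ _).add contDiff_const
    · intro x; funext j; simp [σ]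
    · intro x; funext j; simp [σ]
  · filter_upwards [g3] with x hx
    funext j
    unfold VV3
    simp only [hx]
    fin_cases j
    · simp [σ]
    · rfl
    · rfl
  · simp

lemma step1' {F : ℝ × ℝ → R3} (hF : Sm F) (hg : Good F) (hfl : ¬ Flat F) :
    ∃ X Y, Sm X ∧ Sm Y ∧ pw X 0 = 0 ∧ pw (pw X) 0 ≠ 0 ∧ AEquivAt F 0 (VV3 X Y) 0 := by
  obtain ⟨X, Y, hX, hY, h⟩ := step1 hF hg
  have hk := ker_tr (smd hF) h (good_ker hg)
  obtain ⟨kx, ky⟩ := vv_ker hX hY hk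
  have hgg := vv_good hX hY hk
  have hnf : ¬ Flat (VV3 X Y) := fun hc => hfl ((inv_main hgg hg (aeq_symm hF.continuous.continuousAt h)).flat hc)
  by_cases hx : pw (pw X) 0 = 0
  · have hy : pw (pw Y) 0 ≠ 0 := by
      intro hy
      apply hnf
      refine ⟨0, ?_⟩
      rw [vv_pw hX hY, pw_vec (by fun_prop) (smd (sm_pw hX)) (smd (sm_pw hY)), pw_const]
      funext i; fin_cases i <;> simp [hx, hy]
    refine ⟨Y, X, hY, hX, ky, hy, aeq_trans h ?_⟩
    refine aeq_of (ψ := fun x => x) (Φ := fun y => ![y 0, y 2, y 1]) (ld_id 0) ?_ ?_ rfl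
    · refine ld_of_inv (g := fun y : R3 => ![y 0, y 2, y 1]) ?_ ?_ ?_ ?_ _
      · exact cd_vec (contDiff_apply ℝ ℝ _) (contDiff_apply ℝ ℝ _) (contDiff_apply ℝ ℝ _)
      · exact cd_vec (contDiff_apply ℝ ℝ _) (contDiff_apply ℝ ℝ _) (contDiff_apply ℝ ℝ _)
      · intro x; funext j; fin_cases j <;> rfl
      · intro x; funext j; fin_cases j <;> rfl
    · exact Eventually.of_forall fun x => by simp [VV3]
  · exact ⟨X, Y, hX, hY, kx, hx, h⟩

lemma pw_z {X : ℝ × ℝ → ℝ} (hX : Sm X) : pw (fun y : ℝ × ℝ => X (y.1, 0)) = fun _ => 0 := by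
  have sx : Sm (fun y : ℝ × ℝ => ((y.1, (0:ℝ)) : ℝ × ℝ)) := contDiff_fst.prodMk contDiff_const
  funext x
  have : pw (fun y : ℝ × ℝ => ((y.1, (0:ℝ)) : ℝ × ℝ)) x = 0 := by
    have e : fderiv ℝ (fun y : ℝ × ℝ => ((y.1, (0:ℝ)) : ℝ × ℝ)) x = _ := (hfd_pair (a := fun x : ℝ × ℝ => x.1) (b := fun x => 0) (by fun_prop) (by fun_prop) _).fderiv
    unfold pw; rw [e]
    ext
    · exact congrFun pw_fst _
    · simp
  rw [pw_comp (smd hX) (smd sx), this]; simp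

lemma smz {X : ℝ × ℝ → ℝ} (hX : Sm X) : Sm (fun y : ℝ × ℝ => X (y.1, 0)) :=
  hX.comp (contDiff_fst.prodMk contDiff_const)

lemma pw_vmul {M : ℝ × ℝ → ℝ} (hM : Sm M) : pw (fun y : ℝ × ℝ => y.2 * M y) = fun y => M y + y.2 * pw M y := by
  rw [pw_mul (by fun_prop) (smd hM), pw_snd]; simp

lemma smv {M : ℝ × ℝ → ℝ} (hM : Sm M) : Sm (fun y : ℝ × ℝ => y.2 * M y) := contDiff_snd.mul hM

lemma pw_dec {X M : ℝ × ℝ → ℝ} (hX : Sm X) (hM : Sm M) :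
    pw (fun y : ℝ × ℝ => X (y.1, 0) + y.2 * M y) = fun y => M y + y.2 * pw M y := by
  funext x
  rw [pw_add (smd (smz hX)) (smd (smv hM)), pw_z hX, pw_vmul hM]; simp

/-- Completing the square. -/
lemma step2 {X Y : ℝ × ℝ → ℝ} (hX : Sm X) (hY : Sm Y) (h1 : pw X 0 = 0) (h2 : pw (pw X) 0 ≠ 0) :
    ∃ Y', Sm Y' ∧ AEquivAt (VV3 X Y) 0 (NFY Y') 0 := by
  obtain ⟨-, g, g1, g2, -, g4⟩ := inv2 (a := fun x : ℝ × ℝ => x.1) (b := pw X) contDiff_fst (sm_pw hX) rfl h1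
    (by rw [pu_fst, pw_fst]; simpa using h2)
  let c : ℝ → ℝ := fun z => (g (z, 0)).2
  have hc : Sm c := contDiff_snd.comp (g1.comp (contDiff_id.prodMk contDiff_const))
  have c0 : c 0 = 0 := by
    show (g 0).2 = 0
    rw [g2]; rfl
  have tz : Tendsto (fun x : ℝ × ℝ => (x.1, (0 : ℝ))) (𝓝 0) (𝓝 0) := tend0 (by fun_prop) rfl
  have hcrit : ∀ᶠ x in 𝓝 (0 : ℝ × ℝ), pw X (x.1, c x.1) = 0 := by
    filter_upwards [tz.eventually g4] with x hx
    obtain ⟨e1, e2⟩ := Prod.mk.inj hx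
    rw [← e2]
    congr 1
    exact Prod.ext e1.symm rfl
  let τ : ℝ × ℝ → ℝ × ℝ := fun x => (x.1, x.2 + c x.1)
  have hτ : Sm τ := contDiff_fst.prodMk (contDiff_snd.add (hc.comp contDiff_fst))
  have pwτ : ∀ x, pw τ x = (0, 1) := by
    intro x
    have d : Differentiable ℝ fun x : ℝ × ℝ => c x.1 := smd (hc.comp contDiff_fst)
    have e : fderiv ℝ τ x = _ := (hfd_pair (a := fun x : ℝ × ℝ => x.1) (b := fun x => x.2 + c x.1) (by fun_prop) (differentiable_snd.add d) x).fderiv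
    have e1 : pw (fun x : ℝ × ℝ => x.1) x = 0 := by rw [pw_fst]
    have e2 : pw (fun x : ℝ × ℝ => x.2 + c x.1) x = 1 := by
      rw [pw_add (by fun_prop) d, pw_snd]
      have : pw (fun x : ℝ × ℝ => c x.1) x = 0 := by
        have : fderiv ℝ (c ∘ Prod.fst) x = _ := fderiv_comp x (smd hc _) (differentiableAt_fst)
        show fderiv ℝ (c ∘ Prod.fst) x (0, 1) = 0
        rw [this]; simp [fderiv_fst]
      rw [this]; simp
    unfold pw at e1 e2 ⊢
    rw [e]
    exact Prod.ext e1 e2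
  have pwsh : ∀ f : ℝ × ℝ → ℝ, Sm f → pw (fun x => f (τ x)) = fun x => pw f (τ x) := by
    intro f hf
    funext x
    rw [pw_comp (smd hf) (smd hτ), pwτ]; simp
  have τ0 : τ 0 = 0 := by show ((0 : ℝ), (0 : ℝ) + c 0) = 0; rw [c0]; simp
  have hXs : Sm fun x => X (τ x) := hX.comp hτ
  have hYs : Sm fun x => Y (τ x) := hY.comp hτ
  have p1 : ∀ᶠ x in 𝓝 (0 : ℝ × ℝ), pw (fun x => X (τ x)) (x.1, 0) = 0 := by
    filter_upwards [hcrit] with x hx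
    rw [pwsh X hX]; simpa [τ] using hx
  have p2 : pw (pw (fun x => X (τ x))) 0 ≠ 0 := by
    rw [pwsh X hX, pwsh _ (sm_pw hX)]; simpa only [τ0] using h2
  have st1 : AEquivAt (VV3 X Y) 0 (VV3 (fun x => X (τ x)) (fun x => Y (τ x))) 0 := by
    refine ⟨τ, fun y => y, ?_, τ0, ld_id _, Eventually.of_forall fun x => rfl⟩
    refine ld_of_inv (g := fun x => (x.1, x.2 - c x.1)) hτ (contDiff_fst.prodMk (contDiff_snd.sub (hc.comp contDiff_fst))) ?_ ?_ 0
    · intro x; simp [τ]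
    · intro x; simp [τ]
  generalize (fun x => X (τ x)) = X at *
  generalize (fun x => Y (τ x)) = Y at *
  obtain ⟨M, hM, hM'⟩ := had2 hXs
  obtain ⟨N, hN, hN'⟩ := had2 hM
  have hM0 : ∀ᶠ x in 𝓝 (0 : ℝ × ℝ), M (x.1, 0) = 0 := by
    filter_upwards [tz.eventually (eventually_eventually_nhds.2 hM'), p1] with x hx hx1
    have e : pw X (x.1, 0) = pw (fun y : ℝ × ℝ => X (y.1, 0) + y.2 * M y) (x.1, 0) := by
      unfold pw; rw [Filter.EventuallyEq.fderiv_eq hx]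
    rw [e, pw_dec hXs hM] at hx1
    simpa using hx1
  have hXN : ∀ᶠ x in 𝓝 (0 : ℝ × ℝ), X x = X (x.1, 0) + x.2 ^ 2 * N x := by
    filter_upwards [hM', hN', hM0] with x a b d
    rw [a, b, d]; ring
  have hN0 : N 0 ≠ 0 := by
    have hM00 : pw M 0 = N 0 := by
      have e : pw M 0 = pw (fun y : ℝ × ℝ => y.2 * N y) 0 := by
        refine (pw_ev (f := M) ?_).eq_of_nhds
        filter_upwards [hN', hM0] with x a b
        rw [a, b, zero_add]
      rw [e, pw_vmul hN]; simp
    have e2 : pw X =ᶠ[𝓝 0] fun y => M y + y.2 * pw M y := by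
      have := pw_ev hM'
      rwa [pw_dec hXs hM] at this
    rw [(pw_ev e2).eq_of_nhds, pw_add (smd hM) (smd (smv (sm_pw hM))), pw_vmul (sm_pw hM), hM00] at p2
    intro h; apply p2; simp [hM00, h]
  obtain ⟨r, s, hr, hs, r0, hrs⟩ := sm_sqrt hN hN0
  obtain ⟨hl, k, k1, k2, k3, k4⟩ := inv2 (a := fun x : ℝ × ℝ => x.1) (b := fun x => x.2 * r x) contDiff_fst (contDiff_snd.mul hr) rfl (by simp)
    (by rw [pu_fst, pw_fst, pw_mul (by fun_prop) (smd hr), pw_snd]; simpa using r0)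
  refine ⟨fun y => Y (k y), hYs.comp k1, aeq_trans st1 ?_⟩
  have hX0 : Sm fun y : R3 => X (y 0, 0) := hXs.comp ((contDiff_apply ℝ ℝ _).prodMk contDiff_const)
  refine aeq_of hl (Φ := fun y => ![y 0, s * (y 1 - X (y 0, 0)), y 2]) ?_ ?_ (by simp)
  · refine ld_of_inv (g := fun y => ![y 0, s * y 1 + X (y 0, 0), y 2]) ?_ ?_ ?_ ?_ _
    · exact cd_vec (contDiff_apply ℝ ℝ _) (contDiff_const.mul ((contDiff_apply ℝ ℝ _).sub hX0)) (contDiff_apply ℝ ℝ _)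
    · exact cd_vec (contDiff_apply ℝ ℝ _) ((contDiff_const.mul (contDiff_apply ℝ ℝ _)).add hX0) (contDiff_apply ℝ ℝ _)
    · intro x; funext j; fin_cases j
      · rfl
      · show s * (s * (x 1 - X (x 0, 0))) + X (x 0, 0) = x 1
        linear_combination (x 1 - X (x 0, 0)) * hs
      · rfl
    · intro x; funext j; fin_cases j
      · rfl
      · simp [← mul_assoc, hs]
      · rfl
  · filter_upwards [hXN, hrs, k3] with x a b d
    unfold VV3 NFY
    simp only [d]
    funext j; fin_cases j
    · rfl
    · simp
      rw [a, b]
      linear_combination x.2 ^ 2 * r x ^ 2 * hs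
    · rfl

end G2

section G3
open Topology Function

def Yb (b : ℝ × ℝ → ℝ) (x : ℝ × ℝ) : ℝ := x.2 * b (x.1, x.2 ^ 2)

lemma sm_q : Sm (fun x : ℝ × ℝ => ((x.1, x.2 ^ 2) : ℝ × ℝ)) := contDiff_fst.prodMk (contDiff_snd.pow 2)
lemma tq : Tendsto (fun x : ℝ × ℝ => ((x.1, x.2 ^ 2) : ℝ × ℝ)) (𝓝 0) (𝓝 0) := tend0 (by fun_prop) (by simp)
lemma sm_Yb {b : ℝ × ℝ → ℝ} (hb : Sm b) : Sm (Yb b) := contDiff_snd.mul (hb.comp sm_q)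

lemma step3 {Y : ℝ × ℝ → ℝ} (hY : Sm Y) : ∃ b, Sm b ∧ AEquivAt (NFY Y) 0 (NFY (Yb b)) 0 := by
  have sw : Sm (fun x : ℝ × ℝ => ((x.1, -x.2) : ℝ × ℝ)) := contDiff_fst.prodMk contDiff_snd.neg
  have tw : Tendsto (fun x : ℝ × ℝ => (x.1, -x.2)) (𝓝 0) (𝓝 0) := tend0 (by fun_prop) (by simp)
  have hYs : Sm fun x : ℝ × ℝ => Y (x.1, -x.2) := hY.comp sw
  obtain ⟨a, ha, ha'⟩ := whit (f := fun x => (1 / 2 : ℝ) * (Y x + Y (x.1, -x.2))) (contDiff_const.mul (hY.add hYs))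
    (by intro z v; simp [add_comm])
  obtain ⟨M, hM, hM'⟩ := had2 (f := fun x => (1 / 2 : ℝ) * (Y x - Y (x.1, -x.2))) (contDiff_const.mul (hY.sub hYs))
  have hMs : Sm fun x : ℝ × ℝ => M (x.1, -x.2) := hM.comp sw
  obtain ⟨b, hb, hb'⟩ := whit (f := fun x => (1 / 2 : ℝ) * (M x + M (x.1, -x.2))) (contDiff_const.mul (hM.add hMs))
    (by intro z v; simp [add_comm])
  refine ⟨b, hb, ?_⟩
  have ha3 : Sm fun y : R3 => a (y 0, y 1) := ha.comp ((contDiff_apply ℝ ℝ _).prodMk (contDiff_apply ℝ ℝ _))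
  refine aeq_of (ψ := fun x => x) (Φ := fun y => ![y 0, y 1, y 2 - a (y 0, y 1)]) (ld_id 0) ?_ ?_ rfl
  · refine ld_of_inv (g := fun y => ![y 0, y 1, y 2 + a (y 0, y 1)]) ?_ ?_ ?_ ?_ _
    · exact cd_vec (contDiff_apply ℝ ℝ _) (contDiff_apply ℝ ℝ _) ((contDiff_apply ℝ ℝ _).sub ha3)
    · exact cd_vec (contDiff_apply ℝ ℝ _) (contDiff_apply ℝ ℝ _) ((contDiff_apply ℝ ℝ _).add ha3)
    · intro x; funext j; fin_cases j <;> simp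
    · intro x; funext j; fin_cases j <;> simp
  · filter_upwards [ha', hM', hb', tw.eventually hM'] with x h1 h2 h3 h4
    unfold NFY Yb
    simp only [neg_zero, sub_self, mul_zero, zero_add, neg_neg, Prod.mk.eta] at h1 h2 h3 h4
    funext j; fin_cases j
    · rfl
    · rfl
    · show Y x - a (x.1, x.2 ^ 2) = x.2 * b (x.1, x.2 ^ 2)
      rw [← h3, ← h1]
      linear_combination (1 / 2 : ℝ) * h2 - (1 / 2 : ℝ) * h4

def bexp (β0 : ℝ) (β B : ℝ × ℝ → ℝ) (x : ℝ × ℝ) : ℝ := β0 * x.1 + β (x.1, 0) * x.1 ^ 2 + x.2 * B x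

lemma sm_bexp (β0 : ℝ) {β B : ℝ × ℝ → ℝ} (hβ : Sm β) (hB : Sm B) : Sm (bexp β0 β B) :=
  ((contDiff_const.mul contDiff_fst).add ((smz hβ).mul (contDiff_fst.pow 2))).add (smv hB)

lemma b_exp {b : ℝ × ℝ → ℝ} (hb : Sm b) (h0 : b 0 = 0) : ∃ β0 β B, Sm β ∧ Sm B ∧ b =ᶠ[𝓝 0] bexp β0 β B := by
  obtain ⟨B, hB, hB'⟩ := had2 hb
  obtain ⟨M, hM, hM'⟩ := had1 (smz hb)
  obtain ⟨β, hβ, hβ'⟩ := had1 (smz hM)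
  refine ⟨M 0, β, B, hβ, hB, ?_⟩
  have tz : Tendsto (fun x : ℝ × ℝ => (x.1, (0 : ℝ))) (𝓝 0) (𝓝 0) := tend0 (by fun_prop) rfl
  filter_upwards [hB', tz.eventually hM', tz.eventually hβ'] with x h1 h2 h3
  have e : ((0 : ℝ), (0 : ℝ)) = 0 := rfl
  simp only [e, h0, zero_add] at h1 h2 h3
  rw [h1, h2, h3]; unfold bexp; ring

/-- Reduction to the pre-normal form. -/
lemma prenormal {F : ℝ × ℝ → R3} (hF : Sm F) (hg : Good F) (hfl : ¬ Flat F) :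
    ∃ β0 β B, Sm β ∧ Sm B ∧ AEquivAt F 0 (NFY (Yb (bexp β0 β B))) 0 := by
  obtain ⟨X, Y, hX, hY, h1, h2, e1⟩ := step1' hF hg hfl
  obtain ⟨Y', hY', e2⟩ := step2 hX hY h1 h2
  obtain ⟨b, hb, e3⟩ := step3 hY'
  have e := aeq_trans e1 (aeq_trans e2 e3)
  have hk := ker_tr (smd hF) e (good_ker hg)
  have hv : NFY (Yb b) = VV3 (fun x => x.2 ^ 2) (Yb b) := rfl
  have b0 : b 0 = 0 := by
    rw [hv] at hk
    have := (vv_ker (contDiff_snd.pow 2) (sm_Yb hb) hk).2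
    unfold Yb at this
    rw [pw_vmul (M := fun x => b (x.1, x.2 ^ 2)) (hb.comp sm_q)] at this
    simp at this
    exact this
  obtain ⟨β0, β, B, hβ, hB, eb⟩ := b_exp hb b0
  refine ⟨β0, β, B, hβ, hB, aeq_trans e (aeq_ev ?_)⟩
  filter_upwards [tq.eventually eb] with x hx
  unfold NFY Yb
  rw [hx]

lemma pre_pw (β0 : ℝ) {β B : ℝ × ℝ → ℝ} (hβ : Sm β) (hB : Sm B) :
    pw (fun x : ℝ × ℝ => bexp β0 β B (x.1, x.2 ^ 2)) = fun x => 2 * x.2 * B (x.1, x.2 ^ 2) + x.2 ^ 2 * pw (fun x => B (x.1, x.2 ^ 2)) x := by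
  have hW : Sm (fun x : ℝ × ℝ => B (x.1, x.2 ^ 2)) := hB.comp sm_q
  have e : (fun x : ℝ × ℝ => bexp β0 β B (x.1, x.2 ^ 2)) = fun x => bexp β0 β (fun _ => 0) (x.1, 0) + x.2 * (x.2 * B (x.1, x.2 ^ 2)) := by
    funext x; unfold bexp; simp only; ring
  rw [e, pw_dec (sm_bexp β0 hβ contDiff_const) (smv hW), pw_vmul hW]
  funext x; ring

lemma pre_good (β0 : ℝ) {β B : ℝ × ℝ → ℝ} (hβ : Sm β) (hB : Sm B) : Good (NFY (Yb (bexp β0 β B))) := by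
  refine nfy_good (sm4 (sm_Yb (sm_bexp β0 hβ hB))) ?_
  have hh : Sm (fun x : ℝ × ℝ => bexp β0 β B (x.1, x.2 ^ 2)) := (sm_bexp β0 hβ hB).comp sm_q
  unfold Yb
  rw [pw_vmul hh]; simp [bexp]

lemma pu_bexp (β0 : ℝ) {β B : ℝ × ℝ → ℝ} (hβ : Sm β) (hB : Sm B) : pu (bexp β0 β B) 0 = β0 := by
  have d1 := smd (smz hβ)
  have d2 := smd (smv hB)
  have e : bexp β0 β B = fun x : ℝ × ℝ => (β0 * x.1 + β (x.1, 0) * (x.1 * x.1)) + x.2 * B x := by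
    funext x; unfold bexp; ring
  have d3 : Differentiable ℝ fun x : ℝ × ℝ => β (x.1, 0) * (x.1 * x.1) := d1.mul (by fun_prop)
  have d4 : Differentiable ℝ fun x : ℝ × ℝ => β0 * x.1 + β (x.1, 0) * (x.1 * x.1) := Differentiable.add (by fun_prop) d3
  rw [e, pu_add d4 d2, pu_add (by fun_prop) d3, pu_mul (by fun_prop) (by fun_prop), pu_mul (by fun_prop) (smd hB),
    pu_mul d1 (by fun_prop), pu_mul (by fun_prop) (by fun_prop), pu_fst, pu_snd, pu_const]
  simp

lemma pu_bexpq (β0 : ℝ) {β B : ℝ × ℝ → ℝ} (hβ : Sm β) (hB : Sm B) : pu (fun x : ℝ × ℝ => bexp β0 β B (x.1, x.2 ^ 2)) 0 = β0 := by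
  rw [pu_comp (smd (sm_bexp β0 hβ hB)) (smd sm_q)]
  have : pu (fun x : ℝ × ℝ => ((x.1, x.2 ^ 2) : ℝ × ℝ)) 0 = (1, 0) := by
    have e : fderiv ℝ (fun y : ℝ × ℝ => ((y.1, y.2 ^ 2) : ℝ × ℝ)) 0 = _ := (hfd_pair (a := fun x : ℝ × ℝ => x.1) (b := fun x => x.2 ^ 2) (by fun_prop) (by fun_prop) _).fderiv
    unfold pu; rw [e]
    exact Prod.ext (congrFun pu_fst _) (congrFun pu_sq _)
  rw [this]
  have e0 : (((0 : ℝ × ℝ).1, (0 : ℝ × ℝ).2 ^ 2) : ℝ × ℝ) = 0 := by simp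
  rw [e0, pu_bexp β0 hβ hB]; simp

lemma pre_crit (β0 : ℝ) {β B : ℝ × ℝ → ℝ} (hβ : Sm β) (hB : Sm B) : Crit (NFY (Yb (bexp β0 β B))) ↔ β0 = 0 := by
  have hh : Sm (fun x : ℝ × ℝ => bexp β0 β B (x.1, x.2 ^ 2)) := (sm_bexp β0 hβ hB).comp sm_q
  rw [nfy_crit (sm4 (sm_Yb (sm_bexp β0 hβ hB)))]
  have : pu (Yb (bexp β0 β B)) = fun x => x.2 * pu (fun x : ℝ × ℝ => bexp β0 β B (x.1, x.2 ^ 2)) x := by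
    unfold Yb
    rw [pu_mul (by fun_prop) (smd hh), pu_snd]; simp
  rw [this, pw_vmul (sm_pu hh)]
  simp only [pu_bexpq β0 hβ hB]; simp

lemma pre_quad {β B : ℝ × ℝ → ℝ} (hβ : Sm β) (hB : Sm B) : Quad (NFY (Yb (bexp 0 β B))) (-2 * β 0) 0 (6 * B 0) := by
  have hh : Sm (fun x : ℝ × ℝ => bexp 0 β B (x.1, x.2 ^ 2)) := (sm_bexp 0 hβ hB).comp sm_q
  have hW : Sm (fun x : ℝ × ℝ => B (x.1, x.2 ^ 2)) := hB.comp sm_q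
  have e1 : pw (Yb (bexp 0 β B)) = fun x => bexp 0 β B (x.1, x.2 ^ 2) + x.2 * (2 * x.2 * B (x.1, x.2 ^ 2) + x.2 ^ 2 * pw (fun x => B (x.1, x.2 ^ 2)) x) := by
    unfold Yb; rw [pw_vmul hh, pre_pw 0 hβ hB]
  have W0 : B ((0 : ℝ × ℝ).1, (0 : ℝ × ℝ).2 ^ 2) = B 0 := by congr 1; simp
  generalize hWd : (fun x : ℝ × ℝ => B (x.1, x.2 ^ 2)) = W at *
  have hWx : ∀ x : ℝ × ℝ, B (x.1, x.2 ^ 2) = W x := fun x => congrFun hWd x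
  have W00 : W 0 = B 0 := by rw [← hWx, W0]
  have e2 : pw (Yb (bexp 0 β B)) = fun x => (β (x.1, 0) * x.1 ^ 2) + x.2 * (x.2 * (3 * W x + x.2 * pw W x)) := by
    rw [e1]; funext x; unfold bexp; simp only [hWx]; ring
  have hz : Sm fun x : ℝ × ℝ => 3 * W x + x.2 * pw W x := (contDiff_const.mul hW).add (smv (sm_pw hW))
  have e3 : pw (pw (Yb (bexp 0 β B))) = fun x => 6 * W x * x.2 + x.2 * (x.2 * (6 * pw W x + x.2 * pw (pw W) x)) := by
    rw [e2]
    rw [pw_dec (X := fun x => β (x.1, 0) * x.1 ^ 2) ((smz hβ).mul (contDiff_fst.pow 2)) (smv hz), pw_vmul hz]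
    funext x
    have c3 : Differentiable ℝ fun x => 3 * W x := (smd hW).const_mul 3
    simp only
    rw [pw_add c3 (smd (smv (sm_pw hW))), pw_vmul (sm_pw hW), pw_mul (by fun_prop) (smd hW), pw_const]
    simp only
    ring
  unfold Quad
  have E : (fun x : ℝ × ℝ => lam (NFY (Yb (bexp 0 β B))) x - (-2 * β 0 * x.1 ^ 2 + 0 * (x.1 * x.2) + 6 * B 0 * x.2 ^ 2)) =
      fun x => ((-2 : ℝ) * (x.1 * x.1)) * (β (x.1, 0) - β 0) + (6 * (x.2 * x.2)) * (W x - B 0)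
        + ((x.2 * x.2) * x.2) * (10 * pw W x + 2 * x.2 * pw (pw W) x) := by
    funext x
    rw [nfy_lam (sm4 (sm_Yb (sm_bexp 0 hβ hB))), e3, e2]
    simp only
    ring
  rw [E]
  have sm1 : ∀ {f : ℝ × ℝ → ℝ}, Sm f → ContDiff ℝ 1 f := fun h => (sm4 h).of_le (by norm_num)
  have q1 : OO 1 fun x : ℝ × ℝ => β (x.1, 0) - β 0 := OO.one (sm1 ((smz hβ).sub contDiff_const)) (by
    show β 0 - β 0 = 0; ring)
  have q2 : OO 1 fun x : ℝ × ℝ => W x - B 0 := OO.one (sm1 (hW.sub contDiff_const)) (by rw [W00]; ring)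
  have q3 : OO 0 fun x : ℝ × ℝ => 10 * pw W x + 2 * x.2 * pw (pw W) x := by
    apply OO.of_cont
    have := (sm_pw hW).continuous
    have := (sm_pw (sm_pw hW)).continuous
    fun_prop
  have z2 : OO 2 fun x : ℝ × ℝ => x.1 * x.1 := OO.fst.mul' OO.fst
  have v2 : OO 2 fun x : ℝ × ℝ => x.2 * x.2 := OO.snd.mul' OO.snd
  have r1 : OO 3 fun x : ℝ × ℝ => ((-2 : ℝ) * (x.1 * x.1)) * (β (x.1, 0) - β 0) := ((OO.const (-2 : ℝ)).mul' z2 (l := 2)).mul' q1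
  have r2 : OO 3 fun x : ℝ × ℝ => ((6 : ℝ) * (x.2 * x.2)) * (W x - B 0) := ((OO.const (6 : ℝ)).mul' v2 (l := 2)).mul' q2
  have r3 : OO 3 fun x : ℝ × ℝ => ((x.2 * x.2) * x.2) * (10 * pw W x + 2 * x.2 * pw (pw W) x) := (v2.mul' OO.snd (l := 3)).mul' q3
  exact (r1.add r2).add r3

lemma nfy0 (Y : ℝ × ℝ → ℝ) (h : Y 0 = 0) : NFY Y 0 = 0 := by
  unfold NFY; funext i; fin_cases i <;> simp [h]

lemma pre_cc {β0 : ℝ} {β B : ℝ × ℝ → ℝ} (hβ : Sm β) (hB : Sm B) (h : β0 ≠ 0) : AEquivAt (NFY (Yb (bexp β0 β B))) 0 CC 0 := by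
  have hh : Sm (fun x : ℝ × ℝ => bexp β0 β B (x.1, x.2 ^ 2)) := (sm_bexp β0 hβ hB).comp sm_q
  have hb := sm_bexp β0 hβ hB
  have hpu := pu_bexp β0 hβ hB
  have hb0 : bexp β0 β B 0 = 0 := by simp [bexp]
  obtain ⟨hl, -⟩ := inv2 (a := fun x : ℝ × ℝ => bexp β0 β B (x.1, x.2 ^ 2)) (b := fun x => x.2) hh contDiff_snd
    (by simp [bexp]) rfl (by rw [pu_bexpq β0 hβ hB, pw_snd, pu_snd]; simpa using h)
  refine aeq_of hl (Φ := fun y => ![bexp β0 β B (y 0, y 1), y 2, y 1]) ?_ ?_ (by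
    have : ((0 : ℝ × ℝ).1, (0 : ℝ × ℝ).2 ^ 2) = (0 : ℝ × ℝ) := by simp
    simp only [this, hb0]; rfl)
  · rw [nfy0 _ (by simp [Yb])]
    have s01 : Sm (fun y : R3 => ((y 0, y 1) : ℝ × ℝ)) := (contDiff_apply ℝ ℝ _).prodMk (contDiff_apply ℝ ℝ _)
    have hbs : Sm (fun y : R3 => bexp β0 β B (y 0, y 1)) := hb.comp s01
    let P : Fin 3 → R3 →L[ℝ] ℝ := fun i => ContinuousLinearMap.proj i
    let L0 : R3 →L[ℝ] ℝ := (fderiv ℝ (bexp β0 β B) 0).comp ((P 0).prod (P 1))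
    have f0 : HasFDerivAt (fun y : R3 => bexp β0 β B (y 0, y 1)) L0 0 := by
      have a : HasFDerivAt (fun y : R3 => ((y 0, y 1) : ℝ × ℝ)) ((P 0).prod (P 1)) 0 :=
        (hasFDerivAt_apply 0 0).prodMk (hasFDerivAt_apply 1 0)
      exact HasFDerivAt.comp (f := fun y : R3 => ((y 0, y 1) : ℝ × ℝ)) 0 (smd hb _).hasFDerivAt a
    refine ld_mk (cd_vec hbs (contDiff_apply ℝ ℝ _) (contDiff_apply ℝ ℝ _)) (f' := ContinuousLinearMap.pi ![L0, P 2, P 1]) ?_ ?_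
    · rw [hasFDerivAt_pi]
      intro i; fin_cases i
      · exact f0
      · exact hasFDerivAt_apply 2 0
      · exact hasFDerivAt_apply 1 0
    · intro v hv
      have a : fderiv ℝ (bexp β0 β B) 0 (v 0, v 1) = 0 := congrFun hv 0
      have b : v 2 = 0 := congrFun hv 1
      have c : v 1 = 0 := congrFun hv 2
      rw [fd_pair, c, hpu] at a
      simp [h] at a
      funext i; fin_cases i
      · exact a
      · exact c
      · exact b
  · refine Eventually.of_forall fun x => ?_
    unfold NFY Yb CC
    simp [mul_comm]

lemma pre_s {β B : ℝ × ℝ → ℝ} (hβ : Sm β) (hB : Sm B) (h1 : β 0 ≠ 0) (h2 : B 0 ≠ 0) :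
    ∃ e : ℝ, e * e = 1 ∧ AEquivAt (NFY (Yb (bexp 0 β B))) 0 (NFY (Y1 e)) 0 := by
  obtain ⟨r, s, hr, hs, r0, hrs⟩ := sm_sqrt hβ h1
  obtain ⟨q, t, hq, ht, q0, hqt⟩ := sm_sqrt hB h2
  refine ⟨s * t, by linear_combination t * t * hs + ht, ?_⟩
  have hqq : Sm fun x : ℝ × ℝ => q (x.1, x.2 ^ 2) := hq.comp sm_q
  have q00 : q ((0 : ℝ × ℝ).1, (0 : ℝ × ℝ).2 ^ 2) = q 0 := by congr 1; simp
  have r00 : r ((0 : ℝ × ℝ).1, 0) = r 0 := rfl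
  obtain ⟨hl, -⟩ := inv2 (a := fun x : ℝ × ℝ => x.1 * r (x.1, 0)) (b := fun x => x.2 * q (x.1, x.2 ^ 2)) (contDiff_fst.mul (smz hr))
    (contDiff_snd.mul hqq) (by simp) (by simp) (by
      rw [pu_mul (by fun_prop) (smd (smz hr)), pw_mul (by fun_prop) (smd (smz hr)), pu_mul (by fun_prop) (smd hqq), pw_mul (by fun_prop) (smd hqq),
        pu_fst, pw_fst, pu_snd, pw_snd]
      simp only [q00, r00]
      simp
      exact ⟨r0, q0⟩)
  have s0 : s ≠ 0 := by rintro rfl; simp at hs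
  have a01 : Sm fun y : R3 => q (y 0, y 1) := hq.comp ((contDiff_apply ℝ ℝ _).prodMk (contDiff_apply ℝ ℝ _))
  have a0 : Sm fun y : R3 => r (y 0, 0) := hr.comp ((contDiff_apply ℝ ℝ _).prodMk contDiff_const)
  have tz : Tendsto (fun x : ℝ × ℝ => (x.1, (0 : ℝ))) (𝓝 0) (𝓝 0) := tend0 (by fun_prop) rfl
  refine aeq_of hl (Φ := fun (y : R3) => (fun i => y i * (![fun y : R3 => r (y 0, 0), fun y => q (y 0, y 1) * q (y 0, y 1),
    fun y => s * q (y 0, y 1)] : Fin 3 → R3 → ℝ) i y : R3)) ?_ ?_ (by simp)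
  · rw [nfy0 _ (by simp [Yb])]
    apply ld3_diag
    · intro i; fin_cases i
      · exact a0
      · exact a01.mul a01
      · exact contDiff_const.mul a01
    · intro i; fin_cases i
      · exact r0
      · exact mul_ne_zero q0 q0
      · exact mul_ne_zero s0 q0
  · filter_upwards [tz.eventually hrs, tq.eventually hqt] with x h3 h4
    unfold NFY Yb Y1 bexp
    funext i; fin_cases i
    · rfl
    · simp; ring
    · show (x.2 * (0 * x.1 + β (x.1, 0) * x.1 ^ 2 + x.2 ^ 2 * B (x.1, x.2 ^ 2))) * (s * q (x.1, x.2 ^ 2))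
        = x.2 * q (x.1, x.2 ^ 2) * (x.1 * r (x.1, 0) * (x.1 * r (x.1, 0)) + s * t * (x.2 * q (x.1, x.2 ^ 2) * (x.2 * q (x.1, x.2 ^ 2))))
      rw [h3, h4]
      linear_combination x.2 * q (x.1, x.2 ^ 2) * x.1 ^ 2 * r (x.1, 0) ^ 2 * hs

theorem class_cc {F : ℝ × ℝ → R3} (hF : Sm F) (hg : Good F) (hfl : ¬ Flat F) (hc : ¬ Crit F) : AEquivAt F 0 CC 0 := by
  obtain ⟨β0, β, B, hβ, hB, h⟩ := prenormal hF hg hfl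
  refine aeq_trans h (pre_cc hβ hB ?_)
  intro h0
  exact hc ((inv_main (pre_good β0 hβ hB) hg (aeq_symm hF.continuous.continuousAt h)).crit ((pre_crit β0 hβ hB).2 h0))

theorem class_s {F : ℝ × ℝ → R3} (hF : Sm F) (hg : Good F) (hfl : ¬ Flat F) (hc : Crit F) {A B C : ℝ} (hq : Quad F A B C)
    (hd : B ^ 2 - 4 * A * C ≠ 0) : ∃ e : ℝ, e * e = 1 ∧ AEquivAt F 0 (NFY (Y1 e)) 0 := by
  obtain ⟨β0, β, B', hβ, hB, h⟩ := prenormal hF hg hfl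
  have hi := inv_main hg (pre_good β0 hβ hB) h
  have h0 : β0 = 0 := (pre_crit β0 hβ hB).1 (hi.crit hc)
  subst h0
  obtain ⟨A1, B1, C1, ρ, hρ, hq1, e1⟩ := hi.quad hc _ _ _ hq
  obtain ⟨ea, eb, ec⟩ := quad_unique hq1 (pre_quad hβ hB)
  have hne : β 0 * B' 0 ≠ 0 := by
    intro hz
    have : ρ * (B ^ 2 - 4 * A * C) = 0 := by
      rw [← e1, ea, eb, ec]; linear_combination 48 * hz
    exact mul_ne_zero hρ.ne' hd this
  obtain ⟨e, he, h'⟩ := pre_s hβ hB (left_ne_zero_of_mul hne) (right_ne_zero_of_mul hne)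
  exact ⟨e, he, aeq_trans h h'⟩

end G3

section H
open Topology Function

lemma s_nec {F : ℝ × ℝ → R3} (hF : Sm F) (hg : Good F) {A B C e : ℝ} (h : AEquivAt F 0 (NFY (Y1 e)) 0)
    (hq : Quad F A B C) : Crit F ∧ ¬ Flat F ∧ ∃ ρ : ℝ, 0 < ρ ∧ 48 * e = ρ * (B ^ 2 - 4 * A * C) := by
  have hi := inv_main hg (S_good e) h
  have hc := (inv_main (S_good e) hg (aeq_symm hF.continuous.continuousAt h)).crit (S_crit e)
  refine ⟨hc, fun hf => nfy_flat (Y1_cd e) (hi.flat hf), ?_⟩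
  obtain ⟨A1, B1, C1, ρ, hρ, hq1, e1⟩ := hi.quad hc _ _ _ hq
  obtain ⟨ea, eb, ec⟩ := quad_unique hq1 (S_quad e)
  refine ⟨ρ, hρ, ?_⟩
  rw [← e1, ea, eb, ec]; ring

lemma s_crit {F : ℝ × ℝ → R3} (hF : Sm F) (hg : Good F) {e : ℝ} (h : AEquivAt F 0 (NFY (Y1 e)) 0) : Crit F :=
  (inv_main (S_good e) hg (aeq_symm hF.continuous.continuousAt h)).crit (S_crit e)

lemma ee {e : ℝ} (h : e * e = 1) : e = 1 ∨ e = -1 := mul_self_eq_one_iff.1 h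

end H

/-- characterization of the singularities of a noncylindrical
nondevelopable normal ruled surface NR at a singular point q = (u₀,w₀). -/
theorem stmt_8 (γ h ν : ℝ → R3) (κs κν κt : ℝ → ℝ) (H : FrenetSetup γ h ν κs κν κt)
    (hnoncyl : ∀ u : ℝ, ¬ (κν u = 0 ∧ κt u = 0)) (hnondev : ¬ ∀ u : ℝ, κt u = 0)
    (u₀ w₀ : ℝ) (hsing₁ : κt u₀ = 0) (hsing₂ : w₀ * κν u₀ = 1) :
    (AEquivAt (NR γ ν) (u₀, w₀) (fun x : ℝ × ℝ => ![x.1, x.1 * x.2, x.2 ^ 2]) 0 ↔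
        deriv κt u₀ ≠ 0) ∧
    (AEquivAt (NR γ ν) (u₀, w₀)
        (fun x : ℝ × ℝ => ![x.1, x.2 ^ 2, x.2 * (x.1 ^ 2 - x.2 ^ 2)]) 0 ↔
        (deriv κt u₀ = 0 ∧
          deriv (deriv κt) u₀ * (2 * κs u₀ * deriv κν u₀ + deriv (deriv κt) u₀) < 0)) ∧
    (AEquivAt (NR γ ν) (u₀, w₀)
        (fun x : ℝ × ℝ => ![x.1, x.2 ^ 2, x.2 * (x.1 ^ 2 + x.2 ^ 2)]) 0 ↔
        (deriv κt u₀ = 0 ∧ deriv κν u₀ ≠ 0 ∧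
          deriv (deriv κt) u₀ * (2 * κs u₀ * deriv κν u₀ + deriv (deriv κt) u₀) > 0)) := by
  have e1 : (fun x : ℝ × ℝ => (![x.1, x.1 * x.2, x.2 ^ 2] : R3)) = CC := rfl
  have e2 : (fun x : ℝ × ℝ => (![x.1, x.2 ^ 2, x.2 * (x.1 ^ 2 - x.2 ^ 2)] : R3)) = NFY (Y1 (-1)) := by
    funext x
    have : x.2 * (x.1 ^ 2 - x.2 ^ 2) = Y1 (-1) x := by unfold Y1; ring
    unfold NFY; rw [this]
  have e3 : (fun x : ℝ × ℝ => (![x.1, x.2 ^ 2, x.2 * (x.1 ^ 2 + x.2 ^ 2)] : R3)) = NFY (Y1 1) := by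
    funext x
    have : x.2 * (x.1 ^ 2 + x.2 ^ 2) = Y1 1 x := by unfold Y1; ring
    unfold NFY; rw [this]
  rw [e1, e2, e3, NN_aeq H, NN_aeq H, NN_aeq H]
  have hg := NN_good H hsing₁ hsing₂
  have hc := NN_crit H hsing₁ hsing₂
  have hf := NN_flat H hsing₁ hsing₂
  have hs := NN_cd H u₀ w₀
  have hq := NN_quad H hsing₁ hsing₂
  generalize NN γ ν u₀ w₀ = F at *
  have hD0 : deriv (deriv κt) u₀ * (2 * κs u₀ * deriv κν u₀ + deriv (deriv κt) u₀) < 0 → deriv κν u₀ ≠ 0 := by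
    intro h1 h2
    rw [h2] at h1
    nlinarith [mul_self_nonneg (deriv (deriv κt) u₀)]
  generalize deriv (deriv κt) u₀ * (2 * κs u₀ * deriv κν u₀ + deriv (deriv κt) u₀) = D at *
  refine ⟨⟨fun h1 h2 => CC_crit ((inv_main hg CC_good h1).crit (hc.2 h2)), fun h1 => class_cc hs hg (fun h2 => h1 (hf.1 h2).2) (fun h2 => h1 (hc.1 h2))⟩, ⟨fun h1 => ?_, ?_⟩, ⟨fun h1 => ?_, ?_⟩⟩
  · have hk := hc.1 (s_crit hs hg h1)
    obtain ⟨A, B, C, q, eq⟩ := hq hk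
    obtain ⟨-, -, ρ, hρ, e⟩ := s_nec hs hg h1 q
    rw [eq] at e
    refine ⟨hk, ?_⟩
    by_contra hn
    push Not at hn
    nlinarith [mul_nonneg hρ.le hn]
  · rintro ⟨h1, h2⟩
    obtain ⟨A, B, C, q, eq⟩ := hq h1
    have hnf : ¬ Flat F := fun h => hD0 h2 (hf.1 h).1
    obtain ⟨e, he, ha⟩ := class_s hs hg hnf (hc.2 h1) q (by rw [eq]; exact h2.ne)
    obtain ⟨-, -, ρ, hρ, e'⟩ := s_nec hs hg ha q
    rw [eq] at e'
    rcases ee he with rfl | rfl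
    · nlinarith [mul_neg_of_pos_of_neg hρ h2]
    · exact ha
  · have hk := hc.1 (s_crit hs hg h1)
    obtain ⟨A, B, C, q, eq⟩ := hq hk
    obtain ⟨-, hnf, ρ, hρ, e⟩ := s_nec hs hg h1 q
    rw [eq] at e
    refine ⟨hk, fun h0 => hnf (hf.2 ⟨h0, hk⟩), ?_⟩
    by_contra hn
    push Not at hn
    nlinarith [mul_nonpos_of_nonneg_of_nonpos hρ.le hn]
  · rintro ⟨h1, h3, h2⟩
    obtain ⟨A, B, C, q, eq⟩ := hq h1
    have hnf : ¬ Flat F := fun h => h3 (hf.1 h).1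
    obtain ⟨e, he, ha⟩ := class_s hs hg hnf (hc.2 h1) q (by rw [eq]; exact h2.ne')
    obtain ⟨-, -, ρ, hρ, e'⟩ := s_nec hs hg ha q
    rw [eq] at e'
    rcases ee he with rfl | rfl
    · exact ha
    · nlinarith [mul_pos hρ h2]
end
end

section
/- Under the adapted pure-frontal setup with focal data, for j = 1,2 the vector field x_j is normal to the focal surface C_j at every point: ⟨(C_j)_u, x_j⟩ = 0 and ⟨(C_j)_v, x_j⟩ = 0 everywhere. -/
open Filter

noncomputable section

/-- The Euclidean norm on ℝ³. -/
def norm3 (a : R3) : ℝ := Real.sqrt (dot3 a a)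

/-- Partial derivative in the `v`-direction. -/
def pv {E : Type*} [NormedAddCommGroup E] [NormedSpace ℝ E] (F : ℝ × ℝ → E) (p : ℝ × ℝ) : E :=
  fderiv ℝ F p (0, 1)

/-- The adapted pure-frontal setup: `f` is a frontal with unit normal `ν`,
`f_v = v·h`, `ν_v = v·ν₁`, the frame `{f_u, h, ν}` is linearly independent everywhere
and orthonormal along the `u`-axis. -/
structure AdaptedPureFrontal (f ν h ν₁ : ℝ × ℝ → R3) : Prop where
  smooth_f : ContDiff ℝ (⊤ : ℕ∞) f
  smooth_ν : ContDiff ℝ (⊤ : ℕ∞) ν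
  smooth_h : ContDiff ℝ (⊤ : ℕ∞) h
  smooth_ν₁ : ContDiff ℝ (⊤ : ℕ∞) ν₁
  unit_ν : ∀ p, dot3 (ν p) (ν p) = 1
  orth_fu_ν : ∀ p, dot3 (pu f p) (ν p) = 0
  orth_fv_ν : ∀ p, dot3 (pv f p) (ν p) = 0
  fv_eq : ∀ p : ℝ × ℝ, pv f p = p.2 • h p
  νv_eq : ∀ p : ℝ × ℝ, pv ν p = p.2 • ν₁ p
  indep : ∀ p, LinearIndependent ℝ ![pu f p, h p, ν p]
  adapted_fu : ∀ u : ℝ, dot3 (pu f (u, 0)) (pu f (u, 0)) = 1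
  adapted_h : ∀ u : ℝ, dot3 (h (u, 0)) (h (u, 0)) = 1
  adapted_fu_h : ∀ u : ℝ, dot3 (pu f (u, 0)) (h (u, 0)) = 0
  adapted_h_ν : ∀ u : ℝ, dot3 (h (u, 0)) (ν (u, 0)) = 0

/-- Ẽ = ⟨f_u, f_u⟩. -/
def Et (f : ℝ × ℝ → R3) (p : ℝ × ℝ) : ℝ := dot3 (pu f p) (pu f p)

/-- F̃ = ⟨f_u, h⟩. -/
def Ft (f h : ℝ × ℝ → R3) (p : ℝ × ℝ) : ℝ := dot3 (pu f p) (h p)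

/-- G̃ = ⟨h, h⟩. -/
def Gt (h : ℝ × ℝ → R3) (p : ℝ × ℝ) : ℝ := dot3 (h p) (h p)

/-- L̃ = −⟨f_u, ν_u⟩. -/
def Lt (f ν : ℝ × ℝ → R3) (p : ℝ × ℝ) : ℝ := -dot3 (pu f p) (pu ν p)

/-- M̃ = −⟨h, ν_u⟩. -/
def Mt (h ν : ℝ × ℝ → R3) (p : ℝ × ℝ) : ℝ := -dot3 (h p) (pu ν p)

/-- Ñ₁ = −⟨h, ν₁⟩. -/
def Nt1 (h ν₁ : ℝ × ℝ → R3) (p : ℝ × ℝ) : ℝ := -dot3 (h p) (ν₁ p)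

/-- The Gaussian curvature K = (L̃Ñ₁ − M̃²)/(ẼG̃ − F̃²). -/
def Kg (f ν h ν₁ : ℝ × ℝ → R3) (p : ℝ × ℝ) : ℝ :=
  (Lt f ν p * Nt1 h ν₁ p - Mt h ν p ^ 2) / (Et f p * Gt h p - Ft f h p ^ 2)

/-- The mean curvature H = (ẼÑ₁ − 2F̃M̃ + G̃L̃)/(2(ẼG̃ − F̃²)). -/
def Hm (f ν h ν₁ : ℝ × ℝ → R3) (p : ℝ × ℝ) : ℝ :=
  (Et f p * Nt1 h ν₁ p - 2 * Ft f h p * Mt h ν p + Gt h p * Lt f ν p) /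
    (2 * (Et f p * Gt h p - Ft f h p ^ 2))

/-- The principal curvature κ = H + ε√(H² − K); `ε = 1` gives κ₁ and `ε = -1` gives κ₂. -/
def kap (f ν h ν₁ : ℝ × ℝ → R3) (ε : ℝ) (p : ℝ × ℝ) : ℝ :=
  Hm f ν h ν₁ p + ε * Real.sqrt (Hm f ν h ν₁ p ^ 2 - Kg f ν h ν₁ p)

/-- First component of the principal vector field V = −v(M̃ − κF̃)∂_u + (L̃ − κẼ)∂_v. -/
def V1c (f ν h ν₁ : ℝ × ℝ → R3) (ε : ℝ) (p : ℝ × ℝ) : ℝ :=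
  -(p.2 * (Mt h ν p - kap f ν h ν₁ ε p * Ft f h p))

/-- Second component of the principal vector field V = −v(M̃ − κF̃)∂_u + (L̃ − κẼ)∂_v. -/
def V2c (f ν h ν₁ : ℝ × ℝ → R3) (ε : ℝ) (p : ℝ × ℝ) : ℝ :=
  Lt f ν p - kap f ν h ν₁ ε p * Et f p

/-- Directional derivative of `g` along the principal vector field V. -/
def VD (f ν h ν₁ : ℝ × ℝ → R3) (ε : ℝ) {E : Type*} [NormedAddCommGroup E] [NormedSpace ℝ E]
    (g : ℝ × ℝ → E) (p : ℝ × ℝ) : E :=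
  V1c f ν h ν₁ ε p • pu g p + V2c f ν h ν₁ ε p • pv g p

/-- The radius of principal curvature ρ = 1/κ. -/
def rho (f ν h ν₁ : ℝ × ℝ → R3) (ε : ℝ) (p : ℝ × ℝ) : ℝ := (kap f ν h ν₁ ε p)⁻¹

/-- The focal surface C = f + ρ·ν. -/
def Cf (f ν h ν₁ : ℝ × ℝ → R3) (ε : ℝ) (p : ℝ × ℝ) : R3 :=
  f p + rho f ν h ν₁ ε p • ν p

/-- The normal direction x = −(M̃ − κF̃)·f_u + (L̃ − κẼ)·h of the focal surface. -/
def xj (f ν h ν₁ : ℝ × ℝ → R3) (ε : ℝ) (p : ℝ × ℝ) : R3 :=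
  (-(Mt h ν p - kap f ν h ν₁ ε p * Ft f h p)) • pu f p +
    (Lt f ν p - kap f ν h ν₁ ε p * Et f p) • h p

/-- The unit normal e = x/‖x‖ of the focal surface. -/
def ej (f ν h ν₁ : ℝ × ℝ → R3) (ε : ℝ) (p : ℝ × ℝ) : R3 :=
  (norm3 (xj f ν h ν₁ ε p))⁻¹ • xj f ν h ν₁ ε p

/-- The limiting normal curvature κ_ν(u) = L̃(u,0). -/
def kν (f ν : ℝ × ℝ → R3) (u : ℝ) : ℝ := Lt f ν (u, 0)

/-- The cuspidal torsion κ_t(u) = M̃(u,0). -/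
def kt (h ν : ℝ × ℝ → R3) (u : ℝ) : ℝ := Mt h ν (u, 0)

/-- The bias r_b(u) = 3Ñ₁(u,0). -/
def rb (h ν₁ : ℝ × ℝ → R3) (u : ℝ) : ℝ := 3 * Nt1 h ν₁ (u, 0)

/-- The secondary cuspidal curvature r_c(u) = 24((Ñ₁)_v − 2F̃_vM̃ − G̃_vÑ₁)(u,0). -/
def rc (f ν h ν₁ : ℝ × ℝ → R3) (u : ℝ) : ℝ :=
  24 * (pv (Nt1 h ν₁) (u, 0) - 2 * pv (Ft f h) (u, 0) * Mt h ν (u, 0) -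
    pv (Gt h) (u, 0) * Nt1 h ν₁ (u, 0))

/-- The singular curvature κ_s(u) = ⟨f_uu, h⟩(u,0). -/
def ks (f h : ℝ × ℝ → R3) (u : ℝ) : ℝ := dot3 (pu (pu f) (u, 0)) (h (u, 0))

/-- The rank of the differential of `F` at `p`. -/
def rankAt (F : ℝ × ℝ → R3) (p : ℝ × ℝ) : ℕ :=
  Module.finrank ℝ (LinearMap.range (fderiv ℝ F p).toLinearMap)

theorem dot3_deriv_zero (A B : ℝ × ℝ → R3) (p d : ℝ × ℝ) (hA : DifferentiableAt ℝ A p)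
    (hB : DifferentiableAt ℝ B p) (h0 : ∀ q, dot3 (A q) (B q) = 0) :
    dot3 (fderiv ℝ A p d) (B p) + dot3 (A p) (fderiv ℝ B p d) = 0 := by
  have a := fun i => hasFDerivAt_pi'.1 hA.hasFDerivAt i
  have b := fun i => hasFDerivAt_pi'.1 hB.hasFDerivAt i
  have hs := (((a 0).mul (b 0)).add ((a 1).mul (b 1))).add ((a 2).mul (b 2))
  have hz : HasFDerivAt (fun q => dot3 (A q) (B q)) (0 : ℝ × ℝ →L[ℝ] ℝ) p := by
    simp only [h0]
    exact hasFDerivAt_const _ _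
  have e := congrArg (fun L : ℝ × ℝ →L[ℝ] ℝ => L d) (hs.unique hz)
  simp at e
  simp only [dot3]
  linarith

theorem dot3_diff {A B : ℝ × ℝ → R3} (hA : Differentiable ℝ A) (hB : Differentiable ℝ B) :
    Differentiable ℝ (fun q => dot3 (A q) (B q)) := by
  have a := fun i => differentiable_pi.1 hA i
  have b := fun i => differentiable_pi.1 hB i
  exact (((a 0).mul (b 0)).add ((a 1).mul (b 1))).add ((a 2).mul (b 2))

theorem gram_ne {a b c : R3} (hi : LinearIndependent ℝ ![a, b, c]) :
    dot3 a a * dot3 b b - dot3 a b ^ 2 ≠ 0 := by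
  intro h0
  have e : (a 0 * b 1 - a 1 * b 0) ^ 2 + (a 0 * b 2 - a 2 * b 0) ^ 2
      + (a 1 * b 2 - a 2 * b 1) ^ 2 = 0 := by
    rw [← h0]; simp only [dot3]; ring
  have e1 : a 0 * b 1 - a 1 * b 0 = 0 := by
    apply pow_eq_zero_iff (two_ne_zero) |>.1; nlinarith [sq_nonneg (a 0 * b 1 - a 1 * b 0), sq_nonneg (a 0 * b 2 - a 2 * b 0), sq_nonneg (a 1 * b 2 - a 2 * b 1)]
  have e2 : a 0 * b 2 - a 2 * b 0 = 0 := by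
    apply pow_eq_zero_iff (two_ne_zero) |>.1; nlinarith [sq_nonneg (a 0 * b 1 - a 1 * b 0), sq_nonneg (a 0 * b 2 - a 2 * b 0), sq_nonneg (a 1 * b 2 - a 2 * b 1)]
  have e3 : a 1 * b 2 - a 2 * b 1 = 0 := by
    apply pow_eq_zero_iff (two_ne_zero) |>.1; nlinarith [sq_nonneg (a 0 * b 1 - a 1 * b 0), sq_nonneg (a 0 * b 2 - a 2 * b 0), sq_nonneg (a 1 * b 2 - a 2 * b 1)]
  have ha : a ≠ 0 := hi.ne_zero 0
  have key : ∀ i, a i = 0 := by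
    intro i
    have l := Fintype.linearIndependent_iff.1 hi ![b i, - a i, 0] (by
      simp only [Fin.sum_univ_three]
      ext j
      fin_cases i <;> fin_cases j <;> simp <;> linarith) 1
    simpa using l
  exact ha (funext key)

/-- the vector field x_j is normal to the focal surface C_j at every
point (j = 1,2, encoded by ε = ±1). -/
theorem stmt_9 (f ν h ν₁ : ℝ × ℝ → R3) (H : AdaptedPureFrontal f ν h ν₁)
    (ε : ℝ) (hε : ε = 1 ∨ ε = -1)
    (hHK : ∀ p : ℝ × ℝ, Hm f ν h ν₁ p ^ 2 - Kg f ν h ν₁ p > 0)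
    (hκ : ∀ p : ℝ × ℝ, kap f ν h ν₁ ε p ≠ 0) :
    ∀ p : ℝ × ℝ,
      dot3 (pu (Cf f ν h ν₁ ε) p) (xj f ν h ν₁ ε p) = 0 ∧
      dot3 (pv (Cf f ν h ν₁ ε) p) (xj f ν h ν₁ ε p) = 0 := by
  have hfd : Differentiable ℝ f := H.smooth_f.differentiable (by simp)
  have hνd : Differentiable ℝ ν := H.smooth_ν.differentiable (by simp)
  have hhd : Differentiable ℝ h := H.smooth_h.differentiable (by simp)
  have hν₁d : Differentiable ℝ ν₁ := H.smooth_ν₁.differentiable (by simp)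
  have hff : Differentiable ℝ (fderiv ℝ f) :=
    (H.smooth_f.fderiv_right (m := 1) (by norm_cast)).differentiable (by simp)
  have hfν : Differentiable ℝ (fderiv ℝ ν) :=
    (H.smooth_ν.fderiv_right (m := 1) (by norm_cast)).differentiable (by simp)
  have hpuf : Differentiable ℝ (pu f) := fun q => (hff q).clm_apply (differentiableAt_const _)
  have hpvf : Differentiable ℝ (pv f) := fun q => (hff q).clm_apply (differentiableAt_const _)
  have hpuν : Differentiable ℝ (pu ν) := fun q => (hfν q).clm_apply (differentiableAt_const _)
  have hE : Differentiable ℝ (Et f) := dot3_diff hpuf hpuf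
  have hF : Differentiable ℝ (Ft f h) := dot3_diff hpuf hhd
  have hG : Differentiable ℝ (Gt h) := dot3_diff hhd hhd
  have hL : Differentiable ℝ (Lt f ν) := (dot3_diff hpuf hpuν).neg
  have hM : Differentiable ℝ (Mt h ν) := (dot3_diff hhd hpuν).neg
  have hN : Differentiable ℝ (Nt1 h ν₁) := (dot3_diff hhd hν₁d).neg
  have hD : ∀ q, Et f q * Gt h q - Ft f h q ^ 2 ≠ 0 := fun q => gram_ne (H.indep q)
  have hK : Differentiable ℝ (Kg f ν h ν₁) :=
    ((hL.mul hN).sub (hM.pow 2)).mul (((hE.mul hG).sub (hF.pow 2)).inv hD)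
  have hH : Differentiable ℝ (Hm f ν h ν₁) :=
    (((hE.mul hN).sub ((hF.const_mul 2).mul hM)).add (hG.mul hL)).mul
      ((((hE.mul hG).sub (hF.pow 2)).const_mul 2).inv
        (fun q => mul_ne_zero two_ne_zero (hD q)))
  have hk : Differentiable ℝ (kap f ν h ν₁ ε) :=
    hH.add ((((hH.pow 2).sub hK).sqrt (fun q => (hHK q).ne')).const_mul ε)
  have hρ : Differentiable ℝ (rho f ν h ν₁ ε) := hk.inv hκ
  intro p
  have hC : ∀ d, fderiv ℝ (Cf f ν h ν₁ ε) p d = fderiv ℝ f p d +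
      (rho f ν h ν₁ ε p • fderiv ℝ ν p d + (fderiv ℝ (rho f ν h ν₁ ε) p d) • ν p) := by
    intro d
    have := ((hfd p).hasFDerivAt.add ((hρ p).hasFDerivAt.smul (hνd p).hasFDerivAt)).fderiv
    have e : Cf f ν h ν₁ ε = f + (rho f ν h ν₁ ε) • ν := rfl
    rw [e, this]
    simp
  have hsym : fderiv ℝ (pu f) p (0, 1) = fderiv ℝ (pv f) p (1, 0) := by
    have s : IsSymmSndFDerivAt ℝ f p :=
      H.smooth_f.contDiffAt.isSymmSndFDerivAt (by simp; norm_cast)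
    have e1 : fderiv ℝ (pu f) p (0, 1) = fderiv ℝ (fderiv ℝ f) p (0, 1) (1, 0) := by
      have := ((hff p).hasFDerivAt.clm_apply (hasFDerivAt_const ((1 : ℝ), (0 : ℝ)) p)).fderiv
      unfold pu
      rw [this]; simp
    have e2 : fderiv ℝ (pv f) p (1, 0) = fderiv ℝ (fderiv ℝ f) p (1, 0) (0, 1) := by
      have := ((hff p).hasFDerivAt.clm_apply (hasFDerivAt_const ((0 : ℝ), (1 : ℝ)) p)).fderiv
      unfold pv
      rw [this]; simp
    rw [e1, e2]
    exact s.eq _ _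
  have d1 := dot3_deriv_zero (pu f) ν p (0, 1) (hpuf p) (hνd p) H.orth_fu_ν
  have d2 := dot3_deriv_zero (pv f) ν p (1, 0) (hpvf p) (hνd p) H.orth_fv_ν
  rw [hsym] at d1
  have d3 : dot3 (pu f p) (pv ν p) = dot3 (pv f p) (pu ν p) := by
    unfold pu pv at *
    linarith
  rw [H.νv_eq, H.fv_eq] at d3
  have hν : dot3 (h p) (ν p) = 0 := by
    by_cases hv : p.2 = 0
    · have := H.adapted_h_ν p.1
      have e : p = (p.1, 0) := Prod.ext rfl hv
      rw [e]
      exact this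
    · have := H.orth_fv_ν p
      rw [H.fv_eq] at this
      have e : dot3 (p.2 • h p) (ν p) = p.2 * dot3 (h p) (ν p) := by
        simp [dot3]; ring
      rw [e] at this
      exact (mul_eq_zero.1 this).resolve_left hv
  have hfν0 := H.orth_fu_ν p
  have hCu : pu (Cf f ν h ν₁ ε) p = _ := hC (1, 0)
  have hCv : pv (Cf f ν h ν₁ ε) p = _ := hC (0, 1)
  have hr : rho f ν h ν₁ ε p * kap f ν h ν₁ ε p = 1 := inv_mul_cancel₀ (hκ p)
  have hquad : kap f ν h ν₁ ε p ^ 2 * (Et f p * Gt h p - Ft f h p ^ 2) - kap f ν h ν₁ ε p *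
      (Et f p * Nt1 h ν₁ p - 2 * Ft f h p * Mt h ν p + Gt h p * Lt f ν p)
      + (Lt f ν p * Nt1 h ν₁ p - Mt h ν p ^ 2) = 0 := by
    have hs := Real.sq_sqrt (hHK p).le
    have hε2 : ε ^ 2 = 1 := by rcases hε with h | h <;> simp [h]
    have q : kap f ν h ν₁ ε p ^ 2 - 2 * Hm f ν h ν₁ p * kap f ν h ν₁ ε p + Kg f ν h ν₁ p = 0 := by
      unfold kap
      linear_combination ε ^ 2 * hs + (Hm f ν h ν₁ p ^ 2 - Kg f ν h ν₁ p) * hε2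
    have n1 : Hm f ν h ν₁ p * (2 * (Et f p * Gt h p - Ft f h p ^ 2)) = _ :=
      div_mul_cancel₀ _ (mul_ne_zero two_ne_zero (hD p))
    have n2 : Kg f ν h ν₁ p * (Et f p * Gt h p - Ft f h p ^ 2) = _ := div_mul_cancel₀ _ (hD p)
    linear_combination (Et f p * Gt h p - Ft f h p ^ 2) * q + kap f ν h ν₁ ε p * n1 - n2
  have lin : ∀ (x y z w t : R3) (r s a b : ℝ), dot3 (x + (r • y + s • z)) (a • w + b • t) =
      a * dot3 w x + b * dot3 t x + r * (a * dot3 w y + b * dot3 t y) +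
      s * (a * dot3 w z + b * dot3 t z) := by
    intros; simp [dot3]; ring
  have comm : ∀ x y : R3, dot3 x y = dot3 y x := by intros; simp [dot3]; ring
  have smr : ∀ (c : ℝ) (x y : R3), dot3 x (c • y) = c * dot3 x y := by
    intros; simp [dot3]; ring
  have gE : dot3 (pu f p) (pu f p) = Et f p := rfl
  have gF : dot3 (pu f p) (h p) = Ft f h p := rfl
  have gF' : dot3 (h p) (pu f p) = Ft f h p := comm _ _
  have gG : dot3 (h p) (h p) = Gt h p := rfl
  have gL : dot3 (pu f p) (pu ν p) = - Lt f ν p := (neg_neg _).symm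
  have gM : dot3 (h p) (pu ν p) = - Mt h ν p := (neg_neg _).symm
  have gN : dot3 (h p) (ν₁ p) = - Nt1 h ν₁ p := (neg_neg _).symm
  rw [comm (p.2 • h p), smr, smr, comm (pu ν p), gM] at d3
  constructor
  · rw [hCu, xj]
    change dot3 (pu f p + (_ • pu ν p + _)) _ = 0
    rw [lin, gE, gF', gL, gM, hfν0, hν]
    generalize rho f ν h ν₁ ε p = r at *
    generalize kap f ν h ν₁ ε p = k at *
    linear_combination (-(Lt f ν p * Ft f h p) + Mt h ν p * Et f p) * hr
  · rw [hCv, xj]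
    change dot3 (pv f p + (_ • pv ν p + _)) _ = 0
    rw [H.fv_eq, H.νv_eq, lin, smr, smr, smr, smr, hfν0, hν, gF, gG, gN, d3]
    generalize rho f ν h ν₁ ε p = r at *
    generalize kap f ν h ν₁ ε p = k at *
    linear_combination (-(p.2 * r)) * hquad - p.2 * (-(Mt h ν p - k * Ft f h p) * Ft f h p + (Lt f ν p - k * Et f p) * Gt h p) * hr
end
end
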